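/- arXiv:math/0410105 — 2 statements merged into one kernel-verified Lean document; each statement's English description precedes it below -/
import Mathlib

section
/- CLT for c.i.d. sequences: suppose (X_n) is c.i.d., f and f² satisfy E|f(X_1)| < ∞ and E[f(X_1)²] < ∞, and there exists m ≥ 0 such that the sequence (f(X_{n+m}) − V_f)_{n≥1} is c.i.d. Then W_n = n^{-1/2}(f(X_1) + ... + f(X_n) − n V_f) converges stably with representing measure N(0, V_{f²} − (V_f)²). -/
open MeasureTheory ProbabilityTheory Filter

/-- Condition (5): `(X n)` (indexed from 1) is c.i.d., i.e.
`[X 1, …, X n, X (n+2)] ∼ [X 1, …, X n, X (n+1)]` for all `n ≥ 0`. -/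
def IsCIDnat {Ω E : Type*} {mΩ : MeasurableSpace Ω} [MeasurableSpace E]
    (μ : Measure Ω) (X : ℕ → Ω → E) : Prop :=
  ∀ n : ℕ,
    Measure.map (fun ω (i : Fin (n + 1)) =>
        if (i : ℕ) < n then X ((i : ℕ) + 1) ω else X (n + 2) ω) μ
      = Measure.map (fun ω (i : Fin (n + 1)) => X ((i : ℕ) + 1) ω) μ

/-- `(W n)` converges stably with representing measure `ω ↦ N(0, L ω)`. -/
def StableGaussLimit {Ω : Type*} {mΩ : MeasurableSpace Ω}
    (μ : Measure Ω) (W : ℕ → Ω → ℝ) (L : Ω → ℝ) : Prop :=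
  ∀ H : Set Ω, MeasurableSet H → μ H ≠ 0 →
    ∀ g : BoundedContinuousFunction ℝ ℝ,
      Tendsto (fun n => ∫ ω, g (W n ω) ∂μ[|H]) atTop
        (nhds (∫ ω, ∫ x, g x ∂(gaussianReal 0 (L ω).toNNReal) ∂μ[|H]))

/-- second order Taylor remainder of `exp (i x)` -/
noncomputable def rhoRem (x : ℝ) : ℂ :=
  Complex.exp (x * Complex.I) - 1 - x * Complex.I + (x : ℂ) ^ 2 / 2

/-- first order Taylor remainder of `exp (-y)` -/
noncomputable def expRem (y : ℝ) : ℝ := Real.exp (-y) - 1 + y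

lemma continuous_rhoRem : Continuous rhoRem := by
  unfold rhoRem; fun_prop

lemma continuous_expRem : Continuous expRem := by
  unfold expRem; fun_prop

lemma rhoRem_le_cube {x : ℝ} (hx : |x| ≤ 1) : ‖rhoRem x‖ ≤ |x| ^ 3 := by
  have h := Complex.exp_bound (x := x * Complex.I) (by simpa using hx) (n := 3) (by norm_num)
  have e : rhoRem x = Complex.exp (x * Complex.I) -
      ∑ m ∈ Finset.range 3, (x * Complex.I) ^ m / (m.factorial : ℂ) := by
    simp only [rhoRem, Finset.sum_range_succ, Finset.sum_range_zero, Nat.factorial, mul_pow,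
      Complex.I_sq]
    push_cast
    ring
  rw [e]
  refine h.trans ?_
  simp only [norm_mul, Complex.norm_I, mul_one, Complex.norm_real, Real.norm_eq_abs,
    Nat.factorial]
  have : 0 ≤ |x| ^ 3 := by positivity
  norm_num
  linarith

lemma rhoRem_le_sq (x : ℝ) : ‖rhoRem x‖ ≤ 4 * x ^ 2 := by
  rcases le_total |x| 1 with hx | hx
  · refine (rhoRem_le_cube hx).trans ?_
    have h0 := abs_nonneg x
    rw [← sq_abs x]
    nlinarith [mul_nonneg (sq_nonneg |x|) (sub_nonneg.2 hx), sq_nonneg |x|]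
  · unfold rhoRem
    have h1 : ‖Complex.exp (x * Complex.I)‖ = 1 := Complex.norm_exp_ofReal_mul_I x
    have h2 : ‖(x : ℂ) * Complex.I‖ = |x| := by simp
    have h3 : ‖(x : ℂ) ^ 2 / 2‖ = |x| ^ 2 / 2 := by simp
    calc _ ≤ ‖Complex.exp (x * Complex.I)‖ + ‖(1 : ℂ)‖ + ‖(x : ℂ) * Complex.I‖ +
          ‖(x : ℂ) ^ 2 / 2‖ := by
          refine (norm_add_le _ _).trans ?_
          gcongr
          refine (norm_sub_le _ _).trans ?_
          gcongr
          exact norm_sub_le _ _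
      _ ≤ _ := by
          rw [h1, h2, h3, norm_one, ← sq_abs x]
          nlinarith

lemma expRem_le_self {y : ℝ} (hy : 0 ≤ y) : |expRem y| ≤ y := by
  unfold expRem
  have h1 := Real.add_one_le_exp (-y)
  have h2 : Real.exp (-y) ≤ 1 := Real.exp_le_one_iff.2 (by linarith)
  rw [abs_le]; constructor <;> linarith

lemma expRem_le_sq {y : ℝ} (hy : |y| ≤ 1) : |expRem y| ≤ y ^ 2 := by
  have := Real.norm_exp_sub_one_sub_id_le (x := -y) (by simpa using hy)
  unfold expRem
  simpa using this

lemma exp_lip {a b : ℝ} (ha : 0 ≤ a) (hb : 0 ≤ b) :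
    |Real.exp (-a) - Real.exp (-b)| ≤ |a - b| := by
  wlog h : a ≤ b generalizing a b
  · rw [abs_sub_comm, abs_sub_comm a b]
    exact this hb ha (le_of_not_ge h)
  have h1 : Real.exp (-b) ≤ Real.exp (-a) := Real.exp_le_exp.2 (by linarith)
  rw [abs_of_nonneg (by linarith), abs_sub_comm, abs_of_nonneg (by linarith)]
  have h2 : Real.exp (-b) = Real.exp (-a) * Real.exp (-(b - a)) := by
    rw [← Real.exp_add]; congr 1; ring
  have h3 := Real.add_one_le_exp (-(b - a))
  have h4 : Real.exp (-a) ≤ 1 := Real.exp_le_one_iff.2 (by linarith)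
  have h5 : Real.exp (-(b - a)) ≤ 1 := Real.exp_le_one_iff.2 (by linarith)
  have h6 := Real.exp_pos (-a)
  rw [h2]
  nlinarith

lemma cexp_lip (a b : ℝ) :
    ‖Complex.exp (a * Complex.I) - Complex.exp (b * Complex.I)‖ ≤ |a - b| := by
  have e : Complex.exp (a * Complex.I) - Complex.exp (b * Complex.I)
      = Complex.exp (b * Complex.I) * (Complex.exp (Complex.I * ((a - b : ℝ) : ℂ)) - 1) := by
    rw [mul_sub, ← Complex.exp_add, mul_one]; congr 2; push_cast; ring
  rw [e, norm_mul, Complex.norm_exp_ofReal_mul_I, one_mul]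
  exact Real.norm_exp_I_mul_ofReal_sub_one_le

lemma tendsto_n_rho {Ω : Type*} {mΩ : MeasurableSpace Ω} {μ : Measure Ω}
    {Z : Ω → ℝ} (hZm : AEStronglyMeasurable Z μ) (hZ : Integrable (fun ω => Z ω ^ 2) μ) (t : ℝ) :
    Tendsto (fun n : ℕ => (n : ℝ) * ∫ ω, ‖rhoRem (t / Real.sqrt n * Z ω)‖ ∂μ) atTop (nhds 0) := by
  have key : Tendsto (fun n : ℕ => ∫ ω, (n : ℝ) * ‖rhoRem (t / Real.sqrt n * Z ω)‖ ∂μ) atTop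
      (nhds (∫ ω, (0 : ℝ) ∂μ)) := by
    refine tendsto_integral_of_dominated_convergence (fun ω => 4 * t ^ 2 * Z ω ^ 2) ?_
      (hZ.const_mul _) ?_ ?_
    · intro n
      exact ((continuous_rhoRem.comp_aestronglyMeasurable (hZm.const_mul _)).norm).const_mul _
    · intro n
      filter_upwards with ω
      rcases Nat.eq_zero_or_pos n with rfl | hn
      · simp; positivity
      have hn' : (0 : ℝ) < n := by exact_mod_cast hn
      rw [Real.norm_of_nonneg (by positivity)]
      calc (n : ℝ) * ‖rhoRem (t / Real.sqrt n * Z ω)‖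
          ≤ n * (4 * (t / Real.sqrt n * Z ω) ^ 2) := by gcongr; exact rhoRem_le_sq _
        _ = _ := by
          rw [mul_pow, div_pow, Real.sq_sqrt hn'.le]; field_simp
    · filter_upwards with ω
      have hlim : Tendsto (fun n : ℕ => |t * Z ω| / Real.sqrt n) atTop (nhds 0) :=
        tendsto_const_nhds.div_atTop (Real.tendsto_sqrt_atTop.comp tendsto_natCast_atTop_atTop)
      have hlim2 : Tendsto (fun n : ℕ => |t * Z ω| ^ 2 * (|t * Z ω| / Real.sqrt n)) atTop
          (nhds 0) := by simpa using hlim.const_mul (|t * Z ω| ^ 2)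
      refine squeeze_zero' (Eventually.of_forall fun n => by positivity) ?_ hlim2
      filter_upwards [hlim.eventually (ge_mem_nhds (show (0 : ℝ) < 1 by norm_num)),
        eventually_gt_atTop 0] with n h1 hn
      have hn' : (0 : ℝ) < n := by exact_mod_cast hn
      have e : |t / Real.sqrt n * Z ω| = |t * Z ω| / Real.sqrt n := by
        rw [div_mul_eq_mul_div, abs_div, abs_of_nonneg (Real.sqrt_nonneg _)]
      calc (n : ℝ) * ‖rhoRem (t / Real.sqrt n * Z ω)‖
          ≤ n * |t / Real.sqrt n * Z ω| ^ 3 := by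
            gcongr; exact rhoRem_le_cube (by rw [e]; exact h1)
        _ = _ := by
          rw [e, pow_succ, div_pow, Real.sq_sqrt hn'.le]; field_simp
  simpa [integral_const_mul] using key

lemma tendsto_n_expRem {Ω : Type*} {mΩ : MeasurableSpace Ω} {μ : Measure Ω}
    {Y : Ω → ℝ} (hY : Integrable Y μ) (h0 : ∀ᵐ ω ∂μ, 0 ≤ Y ω) (t : ℝ) :
    Tendsto (fun n : ℕ => (n : ℝ) * ∫ ω, |expRem ((t / Real.sqrt n) ^ 2 / 2 * Y ω)| ∂μ) atTop
      (nhds 0) := by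
  have key : Tendsto (fun n : ℕ => ∫ ω, (n : ℝ) * |expRem ((t / Real.sqrt n) ^ 2 / 2 * Y ω)| ∂μ)
      atTop (nhds (∫ ω, (0 : ℝ) ∂μ)) := by
    refine tendsto_integral_of_dominated_convergence (fun ω => t ^ 2 / 2 * Y ω) ?_
      (hY.const_mul _) ?_ ?_
    · intro n
      exact ((continuous_expRem.comp_aestronglyMeasurable
        (hY.aestronglyMeasurable.const_mul _)).norm).const_mul _
    · intro n
      filter_upwards [h0] with ω hω
      rcases Nat.eq_zero_or_pos n with rfl | hn
      · simp; positivity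
      have hn' : (0 : ℝ) < n := by exact_mod_cast hn
      rw [Real.norm_of_nonneg (by positivity)]
      calc (n : ℝ) * |expRem ((t / Real.sqrt n) ^ 2 / 2 * Y ω)|
          ≤ n * ((t / Real.sqrt n) ^ 2 / 2 * Y ω) := by
            gcongr; exact expRem_le_self (by positivity)
        _ = _ := by
          rw [div_pow, Real.sq_sqrt hn'.le]; field_simp
    · filter_upwards [h0] with ω hω
      set A := t ^ 2 / 2 * Y ω with hA
      have hA0 : 0 ≤ A := by positivity
      have hlim : Tendsto (fun n : ℕ => A / n) atTop (nhds 0) :=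
        tendsto_const_nhds.div_atTop tendsto_natCast_atTop_atTop
      have hlim2 : Tendsto (fun n : ℕ => A * (A / n)) atTop
          (nhds 0) := by simpa using hlim.const_mul A
      refine squeeze_zero' (Eventually.of_forall fun n => by positivity) ?_ hlim2
      filter_upwards [hlim.eventually (ge_mem_nhds (show (0 : ℝ) < 1 by norm_num)),
        eventually_gt_atTop 0] with n h1 hn
      have hn' : (0 : ℝ) < n := by exact_mod_cast hn
      have e : (t / Real.sqrt n) ^ 2 / 2 * Y ω = A / n := by
        rw [div_pow, Real.sq_sqrt hn'.le, hA]; field_simp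
      rw [e]
      calc (n : ℝ) * |expRem (A / n)|
          ≤ n * (A / n) ^ 2 := by
            gcongr; exact expRem_le_sq (by rw [abs_of_nonneg (by positivity)]; exact h1)
        _ = _ := by field_simp
  simpa [integral_const_mul] using key

lemma complex_of_real_test {Ω : Type*} {m mΩ : MeasurableSpace Ω} (hm : m ≤ mΩ) {μ : Measure Ω}
    {u v : Ω → ℝ} (hu : Integrable u μ) (hv : Integrable v μ)
    (h : ∀ G : Ω → ℝ, StronglyMeasurable[m] G → (∀ᵐ ω ∂μ, |G ω| ≤ 1) →
      ∫ ω, G ω * u ω ∂μ = ∫ ω, G ω * v ω ∂μ)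
    {G : Ω → ℂ} (hG : StronglyMeasurable[m] G) (hb : ∀ᵐ ω ∂μ, ‖G ω‖ ≤ 1) :
    ∫ ω, G ω * (u ω : ℂ) ∂μ = ∫ ω, G ω * (v ω : ℂ) ∂μ := by
  have hre := h (fun ω => (G ω).re) (Complex.continuous_re.comp_stronglyMeasurable hG)
    (by filter_upwards [hb] with ω hω using (Complex.abs_re_le_norm _).trans hω)
  have him := h (fun ω => (G ω).im) (Complex.continuous_im.comp_stronglyMeasurable hG)
    (by filter_upwards [hb] with ω hω using (Complex.abs_im_le_norm _).trans hω)
  have hI : ∀ w : Ω → ℝ, Integrable w μ → Integrable (fun ω => G ω * (w ω : ℂ)) μ := by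
    intro w hw
    exact hw.ofReal.bdd_mul (hG.mono hm).aestronglyMeasurable hb
  apply Complex.ext
  · have h1 := integral_re (𝕜 := ℂ) (hI u hu)
    have h2 := integral_re (𝕜 := ℂ) (hI v hv)
    simp only [RCLike.re_to_complex, Complex.re_mul_ofReal] at h1 h2
    rw [← h1, ← h2]; exact hre
  · have h1 := integral_im (𝕜 := ℂ) (hI u hu)
    have h2 := integral_im (𝕜 := ℂ) (hI v hv)
    simp only [RCLike.im_to_complex, Complex.im_mul_ofReal] at h1 h2
    rw [← h1, ← h2]; exact him

lemma norm_integral_mul_le {Ω : Type*} {mΩ : MeasurableSpace Ω} {μ : Measure Ω}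
    {G w : Ω → ℂ} (hb : ∀ᵐ ω ∂μ, ‖G ω‖ ≤ 1) (hw : Integrable w μ) :
    ‖∫ ω, G ω * w ω ∂μ‖ ≤ ∫ ω, ‖w ω‖ ∂μ := by
  refine norm_integral_le_of_norm_le hw.norm ?_
  filter_upwards [hb] with ω hω
  rw [norm_mul]
  exact mul_le_of_le_one_left (norm_nonneg _) hω

lemma lindeberg_step {Ω : Type*} {m mΩ : MeasurableSpace Ω} (hm : m ≤ mΩ) {μ : Measure Ω}
    [IsProbabilityMeasure μ] {Z L Y : Ω → ℝ} (hZm : Measurable Z) (hZ : Integrable Z μ)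
    (hZ2 : Integrable (fun ω => Z ω ^ 2) μ) (hL : Integrable L μ) (hY : Integrable Y μ)
    (hY0 : ∀ᵐ ω ∂μ, 0 ≤ Y ω)
    (h1 : ∀ G : Ω → ℝ, StronglyMeasurable[m] G → (∀ᵐ ω ∂μ, |G ω| ≤ 1) →
      ∫ ω, G ω * Z ω ∂μ = 0)
    (h2 : ∀ G : Ω → ℝ, StronglyMeasurable[m] G → (∀ᵐ ω ∂μ, |G ω| ≤ 1) →
      ∫ ω, G ω * Z ω ^ 2 ∂μ = ∫ ω, G ω * L ω ∂μ)
    {G : Ω → ℂ} (hG : StronglyMeasurable[m] G) (hb : ∀ᵐ ω ∂μ, ‖G ω‖ ≤ 1) (u : ℝ) :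
    ‖∫ ω, G ω * (Complex.exp ((u * Z ω : ℝ) * Complex.I)
        - (Real.exp (-(u ^ 2 / 2 * Y ω)) : ℂ)) ∂μ‖
      ≤ ∫ ω, ‖rhoRem (u * Z ω)‖ ∂μ + ∫ ω, |expRem (u ^ 2 / 2 * Y ω)| ∂μ
        + u ^ 2 / 2 * ∫ ω, |L ω - Y ω| ∂μ := by
  have hGa : AEStronglyMeasurable G μ := (hG.mono hm).aestronglyMeasurable
  have e1 : ∫ ω, G ω * (Z ω : ℂ) ∂μ = 0 := by
    have := complex_of_real_test (v := fun _ => 0) hm hZ (integrable_zero Ω ℝ μ)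
      (fun G hG hb => by simpa using h1 G hG hb) hG hb
    simpa using this
  have e2 := complex_of_real_test hm hZ2 hL h2 hG hb
  have i1 : Integrable (fun ω => rhoRem (u * Z ω)) μ := by
    refine Integrable.mono' (g := fun ω => 4 * u ^ 2 * Z ω ^ 2) (hZ2.const_mul _)
      (continuous_rhoRem.comp_aestronglyMeasurable (hZ.aestronglyMeasurable.const_mul _)) ?_
    filter_upwards with ω
    refine (rhoRem_le_sq _).trans (le_of_eq ?_); ring
  have i2 : Integrable (fun ω => expRem (u ^ 2 / 2 * Y ω)) μ := by
    refine Integrable.mono' (g := fun ω => u ^ 2 / 2 * Y ω) (hY.const_mul _)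
      (continuous_expRem.comp_aestronglyMeasurable (hY.aestronglyMeasurable.const_mul _)) ?_
    filter_upwards [hY0] with ω hω
    exact expRem_le_self (by positivity)
  have gI : ∀ w : Ω → ℂ, Integrable w μ → Integrable (fun ω => G ω * w ω) μ :=
    fun w hw => hw.bdd_mul hGa hb
  have gZ : Integrable (fun ω => G ω * (Z ω : ℂ)) μ := gI _ (hZ.ofReal (𝕜 := ℂ))
  have gZ2 : Integrable (fun ω => G ω * ((Z ω ^ 2 : ℝ) : ℂ)) μ := gI _ (hZ2.ofReal (𝕜 := ℂ))
  have gL : Integrable (fun ω => G ω * (L ω : ℂ)) μ := gI _ (hL.ofReal (𝕜 := ℂ))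
  have gY : Integrable (fun ω => G ω * (Y ω : ℂ)) μ := gI _ (hY.ofReal (𝕜 := ℂ))
  have g1 := gI _ i1
  have g2 : Integrable (fun ω => G ω * (expRem (u ^ 2 / 2 * Y ω) : ℂ)) μ :=
    gI _ (i2.ofReal (𝕜 := ℂ))
  have k1 : Integrable (fun ω => G ω * rhoRem (u * Z ω)
      - G ω * (expRem (u ^ 2 / 2 * Y ω) : ℂ)) μ := g1.sub g2
  have k2 : Integrable (fun ω => (u ^ 2 / 2 : ℂ) * (G ω * ((Z ω ^ 2 : ℝ) : ℂ))) μ :=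
    gZ2.const_mul _
  have k3 : Integrable (fun ω => (u ^ 2 / 2 : ℂ) * (G ω * (Y ω : ℂ))) μ := gY.const_mul _
  have k4 : Integrable (fun ω => u * Complex.I * (G ω * (Z ω : ℂ))) μ := gZ.const_mul _
  have k5 : Integrable (fun ω => (u ^ 2 / 2 : ℂ) * (G ω * ((Z ω ^ 2 : ℝ) : ℂ))
            - (u ^ 2 / 2 : ℂ) * (G ω * (Y ω : ℂ))) μ := k2.sub k3
  have k6 : Integrable (fun ω => (u ^ 2 / 2 : ℂ) * (G ω * ((Z ω ^ 2 : ℝ) : ℂ))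
            - (u ^ 2 / 2 : ℂ) * (G ω * (Y ω : ℂ)) - u * Complex.I * (G ω * (Z ω : ℂ))) μ :=
    k5.sub k4
  have split : ∫ ω, G ω * (Complex.exp ((u * Z ω : ℝ) * Complex.I)
        - (Real.exp (-(u ^ 2 / 2 * Y ω)) : ℂ)) ∂μ
      = ∫ ω, G ω * rhoRem (u * Z ω) ∂μ - ∫ ω, G ω * (expRem (u ^ 2 / 2 * Y ω) : ℂ) ∂μ
        - (u ^ 2 / 2 : ℂ) * ∫ ω, G ω * ((L ω - Y ω : ℝ) : ℂ) ∂μ := by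
    have e3 : ∫ ω, G ω * ((L ω - Y ω : ℝ) : ℂ) ∂μ
        = ∫ ω, G ω * ((Z ω ^ 2 : ℝ) : ℂ) ∂μ - ∫ ω, G ω * (Y ω : ℂ) ∂μ := by
      rw [e2, ← integral_sub gL gY]
      congr 1; ext ω; push_cast; ring
    have e4 : ∫ ω, G ω * (Complex.exp ((u * Z ω : ℝ) * Complex.I)
        - (Real.exp (-(u ^ 2 / 2 * Y ω)) : ℂ)) ∂μ =
        ∫ ω, ((G ω * rhoRem (u * Z ω) - G ω * (expRem (u ^ 2 / 2 * Y ω) : ℂ))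
          - ((u ^ 2 / 2 : ℂ) * (G ω * ((Z ω ^ 2 : ℝ) : ℂ))
            - (u ^ 2 / 2 : ℂ) * (G ω * (Y ω : ℂ)) - u * Complex.I * (G ω * (Z ω : ℂ)))) ∂μ := by
      congr 1; ext ω; simp only [rhoRem, expRem]; push_cast; ring
    rw [e4, integral_sub k1 k6, integral_sub g1 g2, integral_sub k5 k4, integral_sub k2 k3,
      integral_const_mul, integral_const_mul, integral_const_mul, e1, e3]
    ring
  rw [split]
  refine (norm_sub_le _ _).trans ?_
  refine add_le_add ((norm_sub_le _ _).trans (add_le_add (norm_integral_mul_le hb i1) ?_)) ?_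
  · refine (norm_integral_mul_le hb (i2.ofReal (𝕜 := ℂ))).trans (le_of_eq ?_)
    simp
  · rw [norm_mul]
    have : ‖(u ^ 2 / 2 : ℂ)‖ = u ^ 2 / 2 := by simp
    rw [this]
    gcongr
    refine (norm_integral_mul_le hb ((hL.sub hY).ofReal (𝕜 := ℂ))).trans (le_of_eq ?_)
    congr 1; ext ω; simp only [Pi.sub_apply, Complex.coe_algebraMap, Complex.norm_real, Real.norm_eq_abs]

/-- the data of the martingale difference sequence used in the CLT -/
structure MDS {Ω : Type*} {mΩ : MeasurableSpace Ω} (μ : Measure Ω) (ℱ : Filtration ℕ mΩ)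
    (Z : ℕ → Ω → ℝ) (L : Ω → ℝ) : Prop where
  meas : ∀ k, 1 ≤ k → Measurable[ℱ k] (Z k)
  ident : ∀ k, 1 ≤ k → Measure.map (Z k) μ = Measure.map (Z 1) μ
  int : ∀ k, 1 ≤ k → Integrable (Z k) μ
  int2 : ∀ k, 1 ≤ k → Integrable (fun ω => Z k ω ^ 2) μ
  intL : Integrable L μ
  posL : ∀ᵐ ω ∂μ, 0 ≤ L ω
  mean : ∀ k, ∀ G : Ω → ℝ, StronglyMeasurable[ℱ k] G → (∀ᵐ ω ∂μ, |G ω| ≤ 1) →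
      ∫ ω, G ω * Z (k + 1) ω ∂μ = 0
  var : ∀ k, ∀ G : Ω → ℝ, StronglyMeasurable[ℱ k] G → (∀ᵐ ω ∂μ, |G ω| ≤ 1) →
      ∫ ω, G ω * Z (k + 1) ω ^ 2 ∂μ = ∫ ω, G ω * L ω ∂μ

lemma MDS.lindeberg {Ω : Type*} {mΩ : MeasurableSpace Ω} {μ : Measure Ω} [IsProbabilityMeasure μ]
    {ℱ : Filtration ℕ mΩ} {Z : ℕ → Ω → ℝ} {L : Ω → ℝ} (M : MDS μ ℱ Z L)
    (p : ℕ) {Y h : Ω → ℝ} (hYm : StronglyMeasurable[ℱ p] Y) (hY : Integrable Y μ)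
    (hY0 : ∀ᵐ ω ∂μ, 0 ≤ Y ω) (hh : StronglyMeasurable[ℱ p] h) (hb : ∀ᵐ ω ∂μ, |h ω| ≤ 1) (u : ℝ)
    (N : ℕ) (j : ℕ) (hj : j ≤ N) :
    ‖∫ ω, (h ω : ℂ) * (Complex.exp ((u * ∑ k ∈ Finset.Ioc p (p + j), Z k ω : ℝ) * Complex.I)
        * (Real.exp (-(u ^ 2 / 2 * Y ω) * ((N : ℝ) - j)) : ℂ)) ∂μ
      - ∫ ω, (h ω : ℂ) * (Real.exp (-(u ^ 2 / 2 * Y ω) * N) : ℂ) ∂μ‖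
      ≤ j * (∫ ω, ‖rhoRem (u * Z 1 ω)‖ ∂μ + ∫ ω, |expRem (u ^ 2 / 2 * Y ω)| ∂μ
        + u ^ 2 / 2 * ∫ ω, |L ω - Y ω| ∂μ) := by
  induction j with
  | zero => simp
  | succ j ih =>
    specialize ih (by omega)
    have hjN : ((j : ℝ) + 1) ≤ N := by exact_mod_cast hj
    have hS : ∀ i, StronglyMeasurable[ℱ (p + i)] (fun ω => ∑ k ∈ Finset.Ioc p (p + i), Z k ω) := by
      intro i
      refine Finset.stronglyMeasurable_fun_sum _ fun k hk => ?_
      rw [Finset.mem_Ioc] at hk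
      exact ((M.meas k (by omega)).mono (ℱ.mono hk.2) le_rfl).stronglyMeasurable
    have hcE : Continuous (fun x : ℝ => Complex.exp ((u * x : ℝ) * Complex.I)) := by fun_prop
    have hcR : ∀ c : ℝ, Continuous (fun x : ℝ => ((Real.exp (-(u ^ 2 / 2 * x) * c) : ℝ) : ℂ)) := by
      intro c; fun_prop
    have hAm : ∀ i (c : ℝ), StronglyMeasurable[ℱ (p + i)] (fun ω =>
        (h ω : ℂ) * (Complex.exp ((u * ∑ k ∈ Finset.Ioc p (p + i), Z k ω : ℝ) * Complex.I)
        * (Real.exp (-(u ^ 2 / 2 * Y ω) * c) : ℂ))) := by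
      intro i c
      refine (Complex.continuous_ofReal.comp_stronglyMeasurable
        (hh.mono (ℱ.mono (by omega)))).mul ?_
      refine (hcE.comp_stronglyMeasurable (hS i)).mul ?_
      exact (hcR c).comp_stronglyMeasurable (hYm.mono (ℱ.mono (by omega)))
    have hAb : ∀ i (c : ℝ), 0 ≤ c → ∀ᵐ ω ∂μ,
        ‖(h ω : ℂ) * (Complex.exp ((u * ∑ k ∈ Finset.Ioc p (p + i), Z k ω : ℝ) * Complex.I)
        * (Real.exp (-(u ^ 2 / 2 * Y ω) * c) : ℂ))‖ ≤ 1 := by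
      intro i c hc
      filter_upwards [hb, hY0] with ω h1 h2
      rw [norm_mul, norm_mul, Complex.norm_exp_ofReal_mul_I, one_mul, Complex.norm_real,
        Complex.norm_real, Real.norm_eq_abs, Real.norm_eq_abs, abs_of_pos (Real.exp_pos _)]
      refine mul_le_one₀ h1 (Real.exp_pos _).le (Real.exp_le_one_iff.2 ?_)
      have : 0 ≤ u ^ 2 / 2 * Y ω * c := by positivity
      linarith
    have hAi : ∀ i (c : ℝ), 0 ≤ c → Integrable (fun ω =>
        (h ω : ℂ) * (Complex.exp ((u * ∑ k ∈ Finset.Ioc p (p + i), Z k ω : ℝ) * Complex.I)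
        * (Real.exp (-(u ^ 2 / 2 * Y ω) * c) : ℂ))) μ := by
      intro i c hc
      exact (integrable_const (1 : ℝ)).mono' ((hAm i c).mono (ℱ.le _)).aestronglyMeasurable
        (hAb i c hc)
    have hZm : Measurable (Z (p + j + 1)) := (M.meas _ (by omega)).mono (ℱ.le _) le_rfl
    have step := lindeberg_step (ℱ.le (p + j)) hZm (M.int _ (by omega)) (M.int2 _ (by omega))
      M.intL hY hY0 (M.mean _) (M.var _) (hAm j ((N : ℝ) - (j + 1)))
      (hAb j ((N : ℝ) - (j + 1)) (by linarith)) u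
    have hid : ∫ ω, ‖rhoRem (u * Z (p + j + 1) ω)‖ ∂μ = ∫ ω, ‖rhoRem (u * Z 1 ω)‖ ∂μ := by
      have hZ1 : Measurable (Z 1) := (M.meas 1 le_rfl).mono (ℱ.le _) le_rfl
      have hc : Continuous (fun x => ‖rhoRem (u * x)‖) :=
        (continuous_rhoRem.comp (continuous_const.mul continuous_id)).norm
      rw [← integral_map (φ := Z (p + j + 1)) (f := fun x => ‖rhoRem (u * x)‖)
        hZm.aemeasurable hc.aestronglyMeasurable, M.ident _ (by omega),
        integral_map hZ1.aemeasurable hc.aestronglyMeasurable]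
    rw [hid] at step
    have e : ∫ ω, (h ω : ℂ) * (Complex.exp
          ((u * ∑ k ∈ Finset.Ioc p (p + j), Z k ω : ℝ) * Complex.I)
          * (Real.exp (-(u ^ 2 / 2 * Y ω) * ((N : ℝ) - (j + 1))) : ℂ))
          * (Complex.exp ((u * Z (p + j + 1) ω : ℝ) * Complex.I)
        - (Real.exp (-(u ^ 2 / 2 * Y ω)) : ℂ)) ∂μ
        = ∫ ω, (h ω : ℂ) * (Complex.exp
          ((u * ∑ k ∈ Finset.Ioc p (p + (j + 1)), Z k ω : ℝ) * Complex.I)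
          * (Real.exp (-(u ^ 2 / 2 * Y ω) * ((N : ℝ) - (j + 1))) : ℂ)) ∂μ
        - ∫ ω, (h ω : ℂ) * (Complex.exp
          ((u * ∑ k ∈ Finset.Ioc p (p + j), Z k ω : ℝ) * Complex.I)
          * (Real.exp (-(u ^ 2 / 2 * Y ω) * ((N : ℝ) - j)) : ℂ)) ∂μ := by
      rw [← integral_sub (hAi (j + 1) _ (by linarith)) (hAi j _ (by linarith))]
      congr 1; ext ω
      have s1 : ∑ k ∈ Finset.Ioc p (p + (j + 1)), Z k ω
          = ∑ k ∈ Finset.Ioc p (p + j), Z k ω + Z (p + j + 1) ω := by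
        rw [← add_assoc, Finset.sum_Ioc_succ_top (by omega)]
      have s2 : Complex.exp ((u * ∑ k ∈ Finset.Ioc p (p + (j + 1)), Z k ω : ℝ) * Complex.I)
          = Complex.exp ((u * ∑ k ∈ Finset.Ioc p (p + j), Z k ω : ℝ) * Complex.I)
            * Complex.exp ((u * Z (p + j + 1) ω : ℝ) * Complex.I) := by
        rw [s1, ← Complex.exp_add]; congr 1; push_cast; ring
      have s3 : (Real.exp (-(u ^ 2 / 2 * Y ω) * ((N : ℝ) - j)) : ℂ)
          = (Real.exp (-(u ^ 2 / 2 * Y ω) * ((N : ℝ) - (j + 1))) : ℂ)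
            * (Real.exp (-(u ^ 2 / 2 * Y ω)) : ℂ) := by
        rw [← Complex.ofReal_mul, ← Real.exp_add]; congr 2; ring
      rw [s2, s3]; ring
    rw [e] at step
    have := norm_add_le_of_le step ih
    rw [sub_add_sub_cancel] at this
    push_cast at this ⊢
    refine this.trans (le_of_eq ?_)
    ring

lemma integral_mul_condExp_test {Ω : Type*} {m mΩ : MeasurableSpace Ω} (hm : m ≤ mΩ)
    {μ : Measure Ω} [IsProbabilityMeasure μ] {u : Ω → ℝ} (hu : Integrable u μ)
    {G : Ω → ℝ} {c : ℝ} (hG : StronglyMeasurable[m] G) (hb : ∀ᵐ ω ∂μ, |G ω| ≤ c) :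
    ∫ ω, G ω * u ω ∂μ = ∫ ω, G ω * (μ[u | m]) ω ∂μ := by
  have hGu : Integrable (G * u) μ := hu.bdd_mul (hG.mono hm).aestronglyMeasurable hb
  have h := condExp_mul_of_stronglyMeasurable_left hG hGu hu
  rw [← integral_condExp hm (f := fun ω => G ω * u ω)]
  exact integral_congr_ae h

lemma diff_bound {Ω : Type*} {mΩ : MeasurableSpace Ω} {μ : Measure Ω}
    {G w1 w2 : Ω → ℂ} (hG : AEStronglyMeasurable G μ) (hb : ∀ᵐ ω ∂μ, ‖G ω‖ ≤ 1)
    (h1 : Integrable w1 μ) (h2 : Integrable w2 μ) :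
    ‖∫ ω, G ω * w1 ω ∂μ - ∫ ω, G ω * w2 ω ∂μ‖ ≤ ∫ ω, ‖w1 ω - w2 ω‖ ∂μ := by
  rw [← integral_sub (h1.bdd_mul hG hb) (h2.bdd_mul hG hb)]
  simp_rw [← mul_sub]
  exact norm_integral_mul_le hb (h1.sub h2)

lemma diff_bound' {Ω : Type*} {mΩ : MeasurableSpace Ω} {μ : Measure Ω}
    {G w1 w2 : Ω → ℂ} (hG : AEStronglyMeasurable G μ) (hb : ∀ᵐ ω ∂μ, ‖G ω‖ ≤ 1)
    (h1 : Integrable w1 μ) (h2 : Integrable w2 μ) :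
    ‖∫ ω, w1 ω * G ω ∂μ - ∫ ω, w2 ω * G ω ∂μ‖ ≤ ∫ ω, ‖w1 ω - w2 ω‖ ∂μ := by
  simp_rw [mul_comm _ (G _)]
  exact diff_bound hG hb h1 h2

lemma tendsto_integral_abs_of_eLpNorm {Ω : Type*} {mΩ : MeasurableSpace Ω} {μ : Measure Ω}
    {F : ℕ → Ω → ℝ} {g : Ω → ℝ} (hF : ∀ n, Integrable (F n) μ) (hg : Integrable g μ)
    (h : Tendsto (fun n => eLpNorm (F n - g) 1 μ) atTop (nhds 0)) :
    Tendsto (fun n => ∫ ω, |F n ω - g ω| ∂μ) atTop (nhds 0) := by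
  have e : ∀ n, ∫ ω, |F n ω - g ω| ∂μ = (eLpNorm (F n - g) 1 μ).toReal := by
    intro n
    rw [eLpNorm_one_eq_lintegral_enorm, ← ofReal_integral_norm_eq_lintegral_enorm ((hF n).sub hg),
      ENNReal.toReal_ofReal (by positivity)]
    rfl
  simp_rw [e]
  have := (ENNReal.tendsto_toReal (a := 0) (by simp)).comp h
  rw [ENNReal.toReal_zero] at this
  exact this

lemma MDS.bound {Ω : Type*} {mΩ : MeasurableSpace Ω} {μ : Measure Ω} [IsProbabilityMeasure μ]
    {ℱ : Filtration ℕ mΩ} {Z : ℕ → Ω → ℝ} {L : Ω → ℝ} (M : MDS μ ℱ Z L)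
    (hLinf : L =ᵐ[μ] μ[L | ⨆ n, ℱ n])
    {h : Ω → ℝ} (hi : Integrable h μ) (hb : ∀ᵐ ω ∂μ, |h ω| ≤ 1) (t : ℝ)
    (p n : ℕ) (hpn : p ≤ n) (hn : 0 < n) :
    ‖∫ ω, (h ω : ℂ) * Complex.exp ((t / Real.sqrt n * ∑ k ∈ Finset.Ioc 0 n, Z k ω : ℝ)
        * Complex.I) ∂μ - ∫ ω, (h ω : ℂ) * (Real.exp (-(t ^ 2 / 2 * L ω)) : ℂ) ∂μ‖
      ≤ 2 * ∫ ω, |(μ[h | ℱ p]) ω - (μ[h | ⨆ n, ℱ n]) ω| ∂μ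
        + |t| / Real.sqrt n * ∫ ω, |∑ k ∈ Finset.Ioc 0 p, Z k ω| ∂μ
        + (n * ∫ ω, ‖rhoRem (t / Real.sqrt n * Z 1 ω)‖ ∂μ
          + n * ∫ ω, |expRem ((t / Real.sqrt n) ^ 2 / 2 * (μ[L | ℱ p]) ω)| ∂μ)
        + t ^ 2 / 2 * (p / n * ∫ ω, |(μ[L | ℱ p]) ω| ∂μ)
        + t ^ 2 * ∫ ω, |(μ[L | ℱ p]) ω - (μ[L | ⨆ n, ℱ n]) ω| ∂μ := by
  have hn' : (0 : ℝ) < n := by exact_mod_cast hn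
  have hinf : (⨆ n, ℱ n) ≤ mΩ := iSup_le fun n => ℱ.le n
  set hp := μ[h | ℱ p] with hhp
  set h0 := μ[h | ⨆ n, ℱ n] with hh0
  set Lp := μ[L | ℱ p] with hLp
  set L0 := μ[L | ⨆ n, ℱ n] with hL0
  set u := t / Real.sqrt n with hu
  have hu2 : u ^ 2 / 2 * n = t ^ 2 / 2 := by
    rw [hu, div_pow, Real.sq_sqrt hn'.le]; field_simp
  have ihp : Integrable hp μ := integrable_condExp
  have ih0 : Integrable h0 μ := integrable_condExp
  have iLp : Integrable Lp μ := integrable_condExp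
  have iL0 : Integrable L0 μ := integrable_condExp
  have bhp : ∀ᵐ ω ∂μ, |hp ω| ≤ 1 := by
    exact ae_bdd_abs_condExp_of_ae_bdd_abs (R := 1) (m := ℱ p) hb
  have pLp : ∀ᵐ ω ∂μ, 0 ≤ Lp ω := condExp_nonneg M.posL
  have pL0 : ∀ᵐ ω ∂μ, 0 ≤ L0 ω := condExp_nonneg M.posL
  have hZm : ∀ k, 1 ≤ k → Measurable (Z k) := fun k hk => (M.meas k hk).mono (ℱ.le _) le_rfl
  have hS0 : StronglyMeasurable[⨆ n, ℱ n] (fun ω => ∑ k ∈ Finset.Ioc 0 n, Z k ω) := by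
    refine Finset.stronglyMeasurable_fun_sum _ fun k hk => ?_
    rw [Finset.mem_Ioc] at hk
    exact ((M.meas k (by omega)).mono (le_iSup (fun n => (ℱ n : MeasurableSpace Ω)) k)
      le_rfl).stronglyMeasurable
  have hSpn : StronglyMeasurable (fun ω => ∑ k ∈ Finset.Ioc p n, Z k ω) := by
    refine Finset.stronglyMeasurable_fun_sum _ fun k hk => ?_
    rw [Finset.mem_Ioc] at hk
    exact (hZm k (by omega)).stronglyMeasurable
  have hcE : Continuous (fun x : ℝ => Complex.exp ((u * x : ℝ) * Complex.I)) := by fun_prop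
  have hcR : ∀ c : ℝ, Continuous (fun x : ℝ => ((Real.exp (-(c * x)) : ℝ) : ℂ)) := by
    intro c; fun_prop
  have bE : ∀ x : ℝ, ‖Complex.exp ((x : ℝ) * Complex.I)‖ ≤ 1 :=
    fun x => (Complex.norm_exp_ofReal_mul_I x).le
  have bR : ∀ x : ℝ, 0 ≤ x → ‖((Real.exp (-x) : ℝ) : ℂ)‖ ≤ 1 := by
    intro x hx
    rw [Complex.norm_real, Real.norm_of_nonneg (Real.exp_pos _).le]
    exact Real.exp_le_one_iff.2 (by linarith)
  set A : Ω → ℂ := fun ω => Complex.exp ((u * ∑ k ∈ Finset.Ioc 0 n, Z k ω : ℝ) * Complex.I)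
    with hA
  set B : Ω → ℂ := fun ω => Complex.exp ((u * ∑ k ∈ Finset.Ioc p n, Z k ω : ℝ) * Complex.I)
    with hB
  set C : Ω → ℂ := fun ω => ((Real.exp (-(u ^ 2 / 2 * (n - p) * Lp ω)) : ℝ) : ℂ) with hC
  set D : Ω → ℂ := fun ω => ((Real.exp (-(t ^ 2 / 2 * L0 ω)) : ℝ) : ℂ) with hD
  have mA : StronglyMeasurable[⨆ n, ℱ n] A := hcE.comp_stronglyMeasurable hS0
  have mD : StronglyMeasurable[⨆ n, ℱ n] D :=
    (hcR _).comp_stronglyMeasurable stronglyMeasurable_condExp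
  have mB : StronglyMeasurable B := hcE.comp_stronglyMeasurable hSpn
  have mC : AEStronglyMeasurable C μ :=
    (hcR _).comp_aestronglyMeasurable iLp.aestronglyMeasurable
  have bA : ∀ᵐ ω ∂μ, ‖A ω‖ ≤ 1 := Eventually.of_forall fun ω => bE _
  have bB : ∀ᵐ ω ∂μ, ‖B ω‖ ≤ 1 := Eventually.of_forall fun ω => bE _
  have hnp : (0 : ℝ) ≤ (n : ℝ) - p := by
    have : (p : ℝ) ≤ n := by exact_mod_cast hpn
    linarith
  have bC : ∀ᵐ ω ∂μ, ‖C ω‖ ≤ 1 := by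
    filter_upwards [pLp] with ω hω
    exact bR _ (by positivity)
  have bD : ∀ᵐ ω ∂μ, ‖D ω‖ ≤ 1 := by
    filter_upwards [pL0] with ω hω
    exact bR _ (by positivity)
  have iA : Integrable A μ :=
    (integrable_const (1 : ℝ)).mono' (mA.mono hinf).aestronglyMeasurable bA
  have iB : Integrable B μ := (integrable_const (1 : ℝ)).mono' mB.aestronglyMeasurable bB
  have iC : Integrable C μ := (integrable_const (1 : ℝ)).mono' mC bC
  have iD : Integrable D μ :=
    (integrable_const (1 : ℝ)).mono' (mD.mono hinf).aestronglyMeasurable bD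
  have chp : Integrable (fun ω => (hp ω : ℂ)) μ := ihp.ofReal (𝕜 := ℂ)
  have ch0 : Integrable (fun ω => (h0 ω : ℂ)) μ := ih0.ofReal (𝕜 := ℂ)
  have bchp : ∀ᵐ ω ∂μ, ‖(hp ω : ℂ)‖ ≤ 1 := by simpa using bhp
  have test : ∀ Φ : Ω → ℂ, StronglyMeasurable[⨆ n, ℱ n] Φ → (∀ᵐ ω ∂μ, ‖Φ ω‖ ≤ 1) →
      ∫ ω, (h ω : ℂ) * Φ ω ∂μ = ∫ ω, (h0 ω : ℂ) * Φ ω ∂μ := by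
    intro Φ h1 h2
    simp_rw [mul_comm _ (Φ _)]
    exact complex_of_real_test hinf hi ih0
      (fun G hG hb => integral_mul_condExp_test hinf hi hG hb) h1 h2
  have hLD : ∫ ω, (h ω : ℂ) * (Real.exp (-(t ^ 2 / 2 * L ω)) : ℂ) ∂μ
      = ∫ ω, (h ω : ℂ) * D ω ∂μ := by
    refine integral_congr_ae ?_
    filter_upwards [hLinf] with ω hω
    simp only [hD, hω]
  rw [hLD, test A mA bA, test D mD bD]
  have δ : ∫ ω, ‖(h0 ω : ℂ) - (hp ω : ℂ)‖ ∂μ = ∫ ω, |hp ω - h0 ω| ∂μ := by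
    congr 1; ext ω
    rw [← Complex.ofReal_sub, Complex.norm_real, Real.norm_eq_abs, abs_sub_comm]
  have δ' : ∫ ω, ‖(hp ω : ℂ) - (h0 ω : ℂ)‖ ∂μ = ∫ ω, |hp ω - h0 ω| ∂μ := by
    congr 1; ext ω
    rw [← Complex.ofReal_sub, Complex.norm_real, Real.norm_eq_abs]
  have t1 := diff_bound' (mA.mono hinf).aestronglyMeasurable bA ch0 chp
  rw [δ] at t1
  have t5 := diff_bound' (mD.mono hinf).aestronglyMeasurable bD chp ch0
  rw [δ'] at t5
  have iSp : Integrable (fun ω => ∑ k ∈ Finset.Ioc 0 p, Z k ω) μ := by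
    refine integrable_finsetSum _ fun k hk => M.int k ?_
    rw [Finset.mem_Ioc] at hk; omega
  have t2 : ‖∫ ω, (hp ω : ℂ) * A ω ∂μ - ∫ ω, (hp ω : ℂ) * B ω ∂μ‖
      ≤ |t| / Real.sqrt n * ∫ ω, |∑ k ∈ Finset.Ioc 0 p, Z k ω| ∂μ := by
    refine (diff_bound chp.aestronglyMeasurable bchp iA iB).trans ?_
    rw [← integral_const_mul]
    refine integral_mono (iA.sub iB).norm (iSp.abs.const_mul _) fun ω => ?_
    refine (cexp_lip _ _).trans (le_of_eq ?_)
    rw [← mul_sub, abs_mul, hu, abs_div, abs_of_nonneg (Real.sqrt_nonneg _)]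
    congr 2
    rw [← Finset.sum_Ioc_consecutive (fun k => Z k ω) (Nat.zero_le p) hpn]
    ring
  have t3 : ‖∫ ω, (hp ω : ℂ) * B ω ∂μ - ∫ ω, (hp ω : ℂ) * C ω ∂μ‖
      ≤ n * ∫ ω, ‖rhoRem (u * Z 1 ω)‖ ∂μ + n * ∫ ω, |expRem (u ^ 2 / 2 * Lp ω)| ∂μ
        + t ^ 2 / 2 * ∫ ω, |Lp ω - L0 ω| ∂μ := by
    have := M.lindeberg p (Y := Lp) (h := hp) stronglyMeasurable_condExp iLp pLp
      stronglyMeasurable_condExp bhp u (n - p) (n - p) le_rfl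
    have e0 : p + (n - p) = n := by omega
    have e1 : ((n - p : ℕ) : ℝ) = (n : ℝ) - p := by push_cast [hpn]; ring
    rw [e0, e1] at this
    simp only [sub_self, mul_zero, Real.exp_zero, Complex.ofReal_one, mul_one] at this
    have e2 : ∀ ω, -(u ^ 2 / 2 * Lp ω) * ((n : ℝ) - p) = -(u ^ 2 / 2 * (n - p) * Lp ω) := by
      intro ω; ring
    simp_rw [e2] at this
    refine this.trans ?_
    have e3 : ∫ ω, |L ω - Lp ω| ∂μ = ∫ ω, |Lp ω - L0 ω| ∂μ := by
      refine integral_congr_ae ?_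
      filter_upwards [hLinf] with ω hω
      rw [hω, abs_sub_comm]
    rw [e3, ← hu2]
    calc _ ≤ (n : ℝ) * (∫ ω, ‖rhoRem (u * Z 1 ω)‖ ∂μ + ∫ ω, |expRem (u ^ 2 / 2 * Lp ω)| ∂μ
        + u ^ 2 / 2 * ∫ ω, |Lp ω - L0 ω| ∂μ) := by
          gcongr
          have : (0 : ℝ) ≤ p := by positivity
          linarith
      _ = _ := by ring
  have t4 : ‖∫ ω, (hp ω : ℂ) * C ω ∂μ - ∫ ω, (hp ω : ℂ) * D ω ∂μ‖
      ≤ t ^ 2 / 2 * (p / n * ∫ ω, |Lp ω| ∂μ) + t ^ 2 / 2 * ∫ ω, |Lp ω - L0 ω| ∂μ := by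
    refine (diff_bound chp.aestronglyMeasurable bchp iC iD).trans ?_
    have ia : Integrable (fun ω => |Lp ω - L0 ω|) μ := (iLp.sub iL0).abs
    rw [← mul_add, ← integral_const_mul, ← integral_add (iLp.abs.const_mul _) ia,
      ← integral_const_mul]
    refine integral_mono_ae (iC.sub iD).norm
      (((iLp.abs.const_mul _).add ia).const_mul _) ?_
    filter_upwards [pLp, pL0] with ω h1 h2
    have e : ‖C ω - D ω‖ ≤ |u ^ 2 / 2 * (n - p) * Lp ω - t ^ 2 / 2 * L0 ω| := by
      simp only [hC, hD]
      rw [← Complex.ofReal_sub, Complex.norm_real]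
      exact exp_lip (by positivity) (by positivity)
    refine e.trans ?_
    have e' : u ^ 2 / 2 * (n - p) * Lp ω - t ^ 2 / 2 * L0 ω
        = t ^ 2 / 2 * ((Lp ω - L0 ω) - p / n * Lp ω) := by
      have : u ^ 2 / 2 = t ^ 2 / 2 / n := by rw [← hu2]; field_simp
      rw [this]; field_simp; ring
    rw [e', abs_mul, abs_of_nonneg (by positivity : (0 : ℝ) ≤ t ^ 2 / 2)]
    gcongr
    refine (abs_sub _ _).trans (le_of_eq ?_)
    rw [abs_mul, abs_of_nonneg (by positivity : (0 : ℝ) ≤ (p : ℝ) / n), add_comm]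
  have := norm_add_le_of_le (norm_add_le_of_le (norm_add_le_of_le (norm_add_le_of_le t1 t2) t3) t4) t5
  simp only [sub_add_sub_cancel] at this
  refine this.trans (le_of_eq ?_)
  ring

lemma MDS.clt {Ω : Type*} {mΩ : MeasurableSpace Ω} {μ : Measure Ω} [IsProbabilityMeasure μ]
    {ℱ : Filtration ℕ mΩ} {Z : ℕ → Ω → ℝ} {L : Ω → ℝ} (M : MDS μ ℱ Z L)
    (hLinf : L =ᵐ[μ] μ[L | ⨆ n, ℱ n])
    {h : Ω → ℝ} (hi : Integrable h μ) (hb : ∀ᵐ ω ∂μ, |h ω| ≤ 1) (t : ℝ) :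
    Tendsto (fun n : ℕ => ∫ ω, (h ω : ℂ) * Complex.exp
        ((t / Real.sqrt n * ∑ k ∈ Finset.Ioc 0 n, Z k ω : ℝ) * Complex.I) ∂μ) atTop
      (nhds (∫ ω, (h ω : ℂ) * (Real.exp (-(t ^ 2 / 2 * L ω)) : ℂ) ∂μ)) := by
  rw [Metric.tendsto_nhds]
  intro ε hε
  have hδ : Tendsto (fun p => 2 * ∫ ω, |(μ[h | ℱ p]) ω - (μ[h | ⨆ n, ℱ n]) ω| ∂μ
      + t ^ 2 * ∫ ω, |(μ[L | ℱ p]) ω - (μ[L | ⨆ n, ℱ n]) ω| ∂μ) atTop (nhds (2 * 0 + t ^ 2 * 0)) :=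
    ((tendsto_integral_abs_of_eLpNorm (fun _ => integrable_condExp) integrable_condExp
      (tendsto_eLpNorm_condExp h)).const_mul _).add
    ((tendsto_integral_abs_of_eLpNorm (fun _ => integrable_condExp) integrable_condExp
      (tendsto_eLpNorm_condExp L)).const_mul _)
  obtain ⟨p, hp⟩ := (hδ.eventually (gt_mem_nhds (show 2 * 0 + t ^ 2 * 0 < ε by simpa))).exists
  have pLp : ∀ᵐ ω ∂μ, 0 ≤ (μ[L | ℱ p]) ω := condExp_nonneg M.posL
  have hsq : Tendsto (fun n : ℕ => |t| / Real.sqrt n) atTop (nhds 0) :=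
    tendsto_const_nhds.div_atTop (Real.tendsto_sqrt_atTop.comp tendsto_natCast_atTop_atTop)
  have hpn : Tendsto (fun n : ℕ => (p : ℝ) / n) atTop (nhds 0) :=
    tendsto_const_nhds.div_atTop tendsto_natCast_atTop_atTop
  have hlim := (((((tendsto_const_nhds (x := 2 * ∫ ω, |(μ[h | ℱ p]) ω -
      (μ[h | ⨆ n, ℱ n]) ω| ∂μ) (f := atTop)).add
    (hsq.mul_const (∫ ω, |∑ k ∈ Finset.Ioc 0 p, Z k ω| ∂μ))).add
    ((tendsto_n_rho (M.int 1 le_rfl).aestronglyMeasurable (M.int2 1 le_rfl) t).add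
      (tendsto_n_expRem integrable_condExp pLp t))).add
    ((hpn.mul_const (∫ ω, |(μ[L | ℱ p]) ω| ∂μ)).const_mul (t ^ 2 / 2))).add
    (tendsto_const_nhds (x := t ^ 2 * ∫ ω, |(μ[L | ℱ p]) ω - (μ[L | ⨆ n, ℱ n]) ω| ∂μ)))
  simp only [zero_mul, mul_zero, add_zero] at hlim
  filter_upwards [hlim.eventually (gt_mem_nhds hp), eventually_ge_atTop p,
    eventually_gt_atTop 0] with n h1 h2 h3
  rw [dist_eq_norm]
  exact (M.bound hLinf hi hb t p n h2 h3).trans_lt h1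

/-- the tuple of the first `n` variables (indexed from 1) -/
def tupleMap {Ω E : Type*} (Y : ℕ → Ω → E) (n : ℕ) : Ω → (Fin n → E) :=
  fun ω i => Y ((i : ℕ) + 1) ω

lemma measurable_tupleMap {Ω E : Type*} {mΩ : MeasurableSpace Ω} [MeasurableSpace E]
    {Y : ℕ → Ω → E} (hY : ∀ n, Measurable (Y n)) (n : ℕ) : Measurable (tupleMap Y n) :=
  measurable_pi_lambda _ fun _ => hY _

lemma comap_tupleMap {Ω E : Type*} [MeasurableSpace E]
    (Y : ℕ → Ω → E) (n : ℕ) :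
    (⨆ i ∈ Set.Icc 1 n, MeasurableSpace.comap (Y i) inferInstance)
      = MeasurableSpace.comap (tupleMap Y n) inferInstance := by
  apply le_antisymm
  · refine iSup₂_le fun i hi => ?_
    rw [← measurable_iff_comap_le]
    have h1 : Measurable[MeasurableSpace.comap (tupleMap Y n) inferInstance] (tupleMap Y n) :=
      comap_measurable _
    have h2 := (measurable_pi_apply (⟨i - 1, by have := hi.1; have := hi.2; omega⟩ : Fin n)).comp h1
    convert h2 using 1
    ext ω
    have : i - 1 + 1 = i := by have := hi.1; omega
    simp [tupleMap, this]
  · rw [← measurable_iff_comap_le]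
    refine @measurable_pi_lambda _ _ _ (_) _ _ fun i => ?_
    rw [measurable_iff_comap_le]
    refine le_iSup₂_of_le ((i : ℕ) + 1) ⟨by omega, by have := i.2; omega⟩ le_rfl

lemma cid_map_succ {Ω E : Type*} {mΩ : MeasurableSpace Ω} [MeasurableSpace E]
    {μ : Measure Ω} {Y : ℕ → Ω → E} (hY : ∀ n, Measurable (Y n)) (hc : IsCIDnat μ Y) (n : ℕ) :
    Measure.map (fun ω => (tupleMap Y n ω, Y (n + 2) ω)) μ
      = Measure.map (fun ω => (tupleMap Y n ω, Y (n + 1) ω)) μ := by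
  have h := hc n
  have hφ : Measurable (fun z : Fin (n + 1) → E => ((fun i : Fin n => z i.castSucc), z (Fin.last n))) :=
    (measurable_pi_lambda _ fun i => measurable_pi_apply _).prodMk (measurable_pi_apply _)
  have h' := congrArg (Measure.map (fun z : Fin (n + 1) → E =>
    ((fun i : Fin n => z i.castSucc), z (Fin.last n)))) h
  rw [Measure.map_map hφ, Measure.map_map hφ] at h'
  · convert h' using 2
    · ext ω
      · simp [tupleMap]
      · simp
    · rfl
  · exact measurable_pi_lambda _ fun i => hY _
  · refine measurable_pi_lambda _ fun i => ?_
    by_cases hi : (i : ℕ) < n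
    · simp only [hi, if_true]; exact hY _
    · simp only [hi, if_false]; exact hY _

lemma cid_map {Ω E : Type*} {mΩ : MeasurableSpace Ω} [MeasurableSpace E]
    {μ : Measure Ω} {Y : ℕ → Ω → E} (hY : ∀ n, Measurable (Y n)) (hc : IsCIDnat μ Y) (n j : ℕ)
    (hj : n + 1 ≤ j) :
    Measure.map (fun ω => (tupleMap Y n ω, Y j ω)) μ
      = Measure.map (fun ω => (tupleMap Y n ω, Y (n + 1) ω)) μ := by
  induction j, hj using Nat.le_induction with
  | base => rfl
  | succ j hj ih =>
    rw [← ih]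
    obtain ⟨k, rfl⟩ : ∃ k, j = k + 1 := ⟨j - 1, by omega⟩
    have h := cid_map_succ hY hc k
    have hφ : Measurable (fun z : (Fin k → E) × E =>
        ((fun i : Fin n => z.1 ⟨i, by have := i.2; omega⟩), z.2)) :=
      (measurable_pi_lambda _ fun i => (measurable_pi_apply _).comp measurable_fst).prodMk
        measurable_snd
    have h' := congrArg (Measure.map (fun z : (Fin k → E) × E =>
        ((fun i : Fin n => z.1 ⟨i, by have := i.2; omega⟩), z.2))) h
    rw [Measure.map_map hφ ((measurable_tupleMap hY k).prodMk (hY _)),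
      Measure.map_map hφ ((measurable_tupleMap hY k).prodMk (hY _))] at h'
    exact h'

lemma cid_test {Ω E : Type*} {mΩ : MeasurableSpace Ω} [MeasurableSpace E]
    {μ : Measure Ω} {Y : ℕ → Ω → E} (hY : ∀ n, Measurable (Y n)) (hc : IsCIDnat μ Y) (n j : ℕ)
    (hj : n + 1 ≤ j) {m : MeasurableSpace Ω}
    (hm : m = ⨆ i ∈ Set.Icc 1 n, MeasurableSpace.comap (Y i) inferInstance)
    {G : Ω → ℝ} (hG : StronglyMeasurable[m] G) {ψ : E → ℝ} (hψ : Measurable ψ) :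
    ∫ ω, G ω * ψ (Y j ω) ∂μ = ∫ ω, G ω * ψ (Y (n + 1) ω) ∂μ := by
  rw [comap_tupleMap] at hm
  subst hm
  obtain ⟨φ, hφ, rfl⟩ := hG.measurable.exists_eq_measurable_comp
  have hF : Measurable (fun z : (Fin n → E) × E => φ z.1 * ψ z.2) :=
    (hφ.comp measurable_fst).mul (hψ.comp measurable_snd)
  have key : ∀ i, ∫ ω, (φ ∘ tupleMap Y n) ω * ψ (Y i ω) ∂μ
      = ∫ z, φ z.1 * ψ z.2 ∂(Measure.map (fun ω => (tupleMap Y n ω, Y i ω)) μ) := by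
    intro i
    rw [integral_map ((measurable_tupleMap hY n).prodMk (hY i)).aemeasurable
      hF.aestronglyMeasurable]
    rfl
  rw [key, key, cid_map hY hc n j hj]

lemma cid_ident {Ω E : Type*} {mΩ : MeasurableSpace Ω} [MeasurableSpace E]
    {μ : Measure Ω} {Y : ℕ → Ω → E} (hY : ∀ n, Measurable (Y n)) (hc : IsCIDnat μ Y) (j : ℕ)
    (hj : 1 ≤ j) : Measure.map (Y j) μ = Measure.map (Y 1) μ := by
  have h := congrArg (Measure.map Prod.snd) (cid_map hY hc 0 j (by omega))
  rw [Measure.map_map measurable_snd ((measurable_tupleMap hY 0).prodMk (hY _)),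
    Measure.map_map measurable_snd ((measurable_tupleMap hY 0).prodMk (hY _))] at h
  exact h

lemma cid_identDistrib {Ω E : Type*} {mΩ : MeasurableSpace Ω} [MeasurableSpace E]
    {μ : Measure Ω} {Y : ℕ → Ω → E} (hY : ∀ n, Measurable (Y n)) (hc : IsCIDnat μ Y) (j : ℕ)
    (hj : 1 ≤ j) {g : E → ℝ} (hg : Measurable g) :
    IdentDistrib (fun ω => g (Y j ω)) (fun ω => g (Y 1 ω)) μ μ :=
  IdentDistrib.comp (u := g) ⟨(hY j).aemeasurable, (hY 1).aemeasurable, cid_ident hY hc j hj⟩ hg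

/-- truncation at level `C` -/
def clip (C : ℝ) (x : ℝ) : ℝ := max (-C) (min C x)

lemma continuous_clip (C : ℝ) : Continuous (clip C) := by unfold clip; fun_prop

lemma abs_clip_le {C : ℝ} (hC : 0 ≤ C) (x : ℝ) : |clip C x| ≤ C := by
  unfold clip
  rw [abs_le]
  exact ⟨le_max_left _ _, max_le (by linarith) (min_le_left _ _)⟩

lemma clip_eq {C x : ℝ} (h : |x| ≤ C) : clip C x = x := by
  rw [abs_le] at h
  unfold clip
  rw [min_eq_right h.2, max_eq_right h.1]

lemma abs_sub_clip_le {C : ℝ} (hC : 0 ≤ C) (x : ℝ) : |x - clip C x| ≤ |x| := by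
  unfold clip
  rcases le_total x C with h1 | h1
  · rw [min_eq_right h1]
    rcases le_total (-C) x with h2 | h2
    · rw [max_eq_right h2]; simp
    · rw [max_eq_left h2, abs_of_nonpos (by linarith), abs_of_nonpos (by linarith)]; linarith
  · rw [min_eq_left h1, max_eq_right (by linarith), abs_of_nonneg (by linarith),
      abs_of_nonneg (by linarith)]; linarith

lemma tendsto_sub_clip (x : ℝ) : Tendsto (fun C : ℕ => x - clip C x) atTop (nhds 0) := by
  refine tendsto_const_nhds.congr' ?_
  filter_upwards [eventually_ge_atTop ⌈|x|⌉₊] with C hC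
  rw [clip_eq ((Nat.le_ceil _).trans (by exact_mod_cast hC)), sub_self]

lemma tendsto_tail {Ω : Type*} {mΩ : MeasurableSpace Ω} {μ : Measure Ω} {u : Ω → ℝ}
    (hu : Integrable u μ) :
    Tendsto (fun C : ℕ => ∫ ω, |u ω - clip C (u ω)| ∂μ) atTop (nhds 0) := by
  have := tendsto_integral_of_dominated_convergence (μ := μ)
    (F := fun C : ℕ => fun ω => |u ω - clip C (u ω)|) (f := fun _ => 0) (fun ω => |u ω|)
    (fun C => (hu.aestronglyMeasurable.sub
      ((continuous_clip C).comp_aestronglyMeasurable hu.aestronglyMeasurable)).norm) hu.abs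
    (fun C => Eventually.of_forall fun ω => by
      simpa using abs_sub_clip_le (Nat.cast_nonneg C) (u ω))
    (Eventually.of_forall fun ω => by simpa using (tendsto_sub_clip (u ω)).abs)
  simpa using this

lemma tendsto_tail_sq {Ω : Type*} {mΩ : MeasurableSpace Ω} {μ : Measure Ω} {u : Ω → ℝ}
    (hm : AEStronglyMeasurable u μ) (hu : Integrable (fun ω => u ω ^ 2) μ) :
    Tendsto (fun C : ℕ => ∫ ω, (u ω - clip C (u ω)) ^ 2 ∂μ) atTop (nhds 0) := by
  have := tendsto_integral_of_dominated_convergence (μ := μ)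
    (F := fun C : ℕ => fun ω => (u ω - clip C (u ω)) ^ 2) (f := fun _ => 0) (fun ω => u ω ^ 2)
    (fun C => (hm.sub
      ((continuous_clip C).comp_aestronglyMeasurable hm)).pow 2) hu
    (fun C => Eventually.of_forall fun ω => by
      rw [Real.norm_of_nonneg (sq_nonneg _)]
      exact sq_le_sq.2 (abs_sub_clip_le (Nat.cast_nonneg C) (u ω)))
    (Eventually.of_forall fun ω => by simpa using (tendsto_sub_clip (u ω)).pow 2)
  simpa using this

lemma integrable_sub_clip {Ω : Type*} {mΩ : MeasurableSpace Ω} {μ : Measure Ω} {u : Ω → ℝ}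
    (hu : Integrable u μ) {C : ℝ} (hC : 0 ≤ C) : Integrable (fun ω => u ω - clip C (u ω)) μ := by
  refine hu.abs.mono' (hu.aestronglyMeasurable.sub
    ((continuous_clip C).comp_aestronglyMeasurable hu.aestronglyMeasurable)) ?_
  exact Eventually.of_forall fun ω => abs_sub_clip_le hC _

/-- a bounded multiplier that is small in `L¹` has a small integral against `u` -/
lemma clip_small_mul {Ω : Type*} {mΩ : MeasurableSpace Ω} {μ : Measure Ω} {u K : Ω → ℝ}
    (hu : Integrable u μ) (hK : Integrable K μ) {b : ℝ} (hKb : ∀ᵐ ω ∂μ, |K ω| ≤ b) {C : ℝ}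
    (hC : 0 ≤ C) :
    ∫ ω, |K ω| * |u ω| ∂μ ≤ C * ∫ ω, |K ω| ∂μ + b * ∫ ω, |u ω - clip C (u ω)| ∂μ := by
  have i1 := integrable_sub_clip hu hC
  rw [← integral_const_mul, ← integral_const_mul, ← integral_add (hK.abs.const_mul _)
    (i1.abs.const_mul _)]
  refine integral_mono_ae ?_ ((hK.abs.const_mul _).add (i1.abs.const_mul _)) ?_
  · exact hu.abs.bdd_mul hK.abs.aestronglyMeasurable (c := b) (by simpa using hKb)
  · filter_upwards [hKb] with ω h
    have h1 := abs_clip_le hC (u ω)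
    have h2 : |u ω| ≤ |clip C (u ω)| + |u ω - clip C (u ω)| := by
      have := abs_add_le (clip C (u ω)) (u ω - clip C (u ω))
      simpa using this
    have h3 := abs_nonneg (K ω)
    have h4 := abs_nonneg (u ω - clip C (u ω))
    nlinarith [mul_le_mul_of_nonneg_right h h4, mul_le_mul_of_nonneg_left h1 h3,
      mul_le_mul_of_nonneg_left h2 h3]

/-- bundled data: a c.i.d. sequence, an integrable function of it, and the limit of predictions -/
structure PredLim {Ω E : Type*} {mΩ : MeasurableSpace Ω} [MeasurableSpace E]
    (μ : Measure Ω) (X : ℕ → Ω → E) (𝒢 : Filtration ℕ mΩ) (g : E → ℝ) (V : Ω → ℝ) : Prop where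
  meas : ∀ n, Measurable (X n)
  cid : IsCIDnat μ X
  filt : ∀ n, 𝒢 n = ⨆ i ∈ Set.Icc 1 n, MeasurableSpace.comap (X i) inferInstance
  hg : Measurable g
  int : Integrable (fun ω => g (X 1 ω)) μ
  lim : ∀ᵐ ω ∂μ, Tendsto (fun n => (μ[(fun ω' => g (X (n + 1) ω')) | 𝒢 n]) ω)
      atTop (nhds (V ω))

section PredSec
set_option linter.unusedSectionVars false
variable {Ω E : Type*} {mΩ : MeasurableSpace Ω} [MeasurableSpace E]
    {μ : Measure Ω} [IsProbabilityMeasure μ] {X : ℕ → Ω → E} {𝒢 : Filtration ℕ mΩ} {g : E → ℝ}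
    {V : Ω → ℝ}

lemma PredLim.int' (P : PredLim μ X 𝒢 g V) (j : ℕ) (hj : 1 ≤ j) :
    Integrable (fun ω => g (X j ω)) μ :=
  (cid_identDistrib P.meas P.cid j hj P.hg).integrable_iff.2 P.int

lemma PredLim.aesm_sup (P : PredLim μ X 𝒢 g V) : AEStronglyMeasurable[⨆ n, 𝒢 n] V μ := by
  have hm : ∀ n, StronglyMeasurable[⨆ n, 𝒢 n] (μ[(fun ω' => g (X (n + 1) ω')) | 𝒢 n]) :=
    fun n => stronglyMeasurable_condExp.mono (le_iSup 𝒢.seq n)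
  refine ⟨fun ω => limsup (fun n => (μ[(fun ω' => g (X (n + 1) ω')) | 𝒢 n]) ω) atTop, ?_, ?_⟩
  · exact (Measurable.limsup fun n => (hm n).measurable).stronglyMeasurable
  · filter_upwards [P.lim] with ω h using h.limsup_eq.symm

lemma PredLim.aesm (P : PredLim μ X 𝒢 g V) : AEStronglyMeasurable V μ :=
  P.aesm_sup.mono (iSup_le fun n => 𝒢.le n)

lemma PredLim.integrable (P : PredLim μ X 𝒢 g V) : Integrable V μ := by
  rw [← memLp_one_iff_integrable]
  refine ⟨P.aesm, ?_⟩
  have h := Lp.eLpNorm_le_of_ae_tendsto (p := 1) (C := eLpNorm (fun ω => g (X 1 ω)) 1 μ)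
    (μ := μ) (u := atTop) (f := fun n => μ[(fun ω' => g (X (n + 1) ω')) | 𝒢 n]) (g := V)
    (Eventually.of_forall fun n => ?_)
    (fun n => stronglyMeasurable_condExp.mono (𝒢.le n) |>.aestronglyMeasurable) P.lim
  · exact h.trans_lt (memLp_one_iff_integrable.2 P.int).2
  · refine (eLpNorm_condExp_le_eLpNorm _ le_rfl).trans ?_
    exact ((cid_identDistrib P.meas P.cid (n + 1) (by omega) P.hg).eLpNorm_eq 1).le

lemma PredLim.unif (P : PredLim μ X 𝒢 g V) :
    UnifIntegrable (fun n => μ[(fun ω' => g (X (n + 1) ω')) | 𝒢 n]) 1 μ := by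
  intro ε hε
  have ht := tendsto_tail P.int
  obtain ⟨C, hC⟩ := (ht.eventually (gt_mem_nhds (half_pos hε))).exists
  refine ⟨ε / (2 * (C + 1)), by positivity, fun n s hs hμ => ?_⟩
  have hcm : Measurable (clip C) := (continuous_clip _).measurable
  have iA : Integrable (fun ω => clip C (g (X (n + 1) ω))) μ :=
    Integrable.of_bound (hcm.comp (P.hg.comp (P.meas _))).aestronglyMeasurable C
      (Eventually.of_forall fun ω => abs_clip_le (Nat.cast_nonneg C) _)
  have iB := integrable_sub_clip (P.int' (n + 1) (by omega)) (Nat.cast_nonneg C)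
  have hsum : μ[(fun ω' => g (X (n + 1) ω')) | 𝒢 n] =ᵐ[μ]
      μ[(fun ω => clip C (g (X (n + 1) ω))) | 𝒢 n]
      + μ[(fun ω => g (X (n + 1) ω) - clip C (g (X (n + 1) ω))) | 𝒢 n] := by
    refine EventuallyEq.trans ?_ (condExp_add iA iB _)
    refine condExp_congr_ae (Eventually.of_forall fun ω => ?_)
    simp
  rw [eLpNorm_indicator_eq_eLpNorm_restrict hs]
  rw [eLpNorm_congr_ae (ae_restrict_of_ae hsum)]
  refine (eLpNorm_add_le (stronglyMeasurable_condExp.mono (𝒢.le n)).aestronglyMeasurable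
    (stronglyMeasurable_condExp.mono (𝒢.le n)).aestronglyMeasurable le_rfl).trans ?_
  have hε2 : ENNReal.ofReal ε = ENNReal.ofReal (ε / 2) + ENNReal.ofReal (ε / 2) := by
    rw [← ENNReal.ofReal_add (by positivity) (by positivity), add_halves]
  rw [hε2]
  refine add_le_add ?_ ?_
  · have hb : ∀ᵐ ω ∂(μ.restrict s), ‖(μ[(fun ω => clip C (g (X (n + 1) ω))) | 𝒢 n]) ω‖ ≤ C := by
      refine ae_restrict_of_ae ?_
      exact ae_bdd_abs_condExp_of_ae_bdd_abs (R := (C : ℝ))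
        (f := fun ω => clip C (g (X (n + 1) ω)))
        (Eventually.of_forall fun ω => abs_clip_le (Nat.cast_nonneg C) _)
    refine (eLpNorm_le_of_ae_bound hb).trans ?_
    simp only [Measure.restrict_apply_univ, ENNReal.toReal_one, inv_one, ENNReal.rpow_one]
    refine (mul_le_mul_left hμ _).trans ?_
    rw [← ENNReal.ofReal_mul (by positivity)]
    refine ENNReal.ofReal_le_ofReal ?_
    rw [div_mul_eq_mul_div, div_le_div_iff₀ (by positivity) (by positivity)]
    nlinarith
  · refine (eLpNorm_mono_measure _ Measure.restrict_le_self).trans ?_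
    refine (eLpNorm_condExp_le_eLpNorm _ le_rfl).trans ?_
    have hid := (cid_identDistrib P.meas P.cid (n + 1) (by omega)
      (g := fun x => g x - clip C (g x)) (P.hg.sub (hcm.comp P.hg))).eLpNorm_eq (p := 1)
    rw [hid, eLpNorm_one_eq_lintegral_enorm, ← ofReal_integral_norm_eq_lintegral_enorm
      (integrable_sub_clip P.int (Nat.cast_nonneg C))]
    exact ENNReal.ofReal_le_ofReal hC.le

lemma PredLim.tendsto_L1 (P : PredLim μ X 𝒢 g V) :
    Tendsto (fun n => ∫ ω, |(μ[(fun ω' => g (X (n + 1) ω')) | 𝒢 n]) ω - V ω| ∂μ) atTop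
      (nhds 0) := by
  refine tendsto_integral_abs_of_eLpNorm (fun n => integrable_condExp) P.integrable ?_
  exact tendsto_Lp_finite_of_tendsto_ae le_rfl (by simp)
    (fun n => (stronglyMeasurable_condExp.mono (𝒢.le n)).aestronglyMeasurable)
    (memLp_one_iff_integrable.2 P.integrable) P.unif P.lim

/-- exact identity for past-measurable test functions -/
lemma PredLim.test (P : PredLim μ X 𝒢 g V) (p j : ℕ) (hj : p + 1 ≤ j) {G : Ω → ℝ}
    (hG : StronglyMeasurable[𝒢 p] G) {c : ℝ} (hb : ∀ᵐ ω ∂μ, |G ω| ≤ c) :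
    ∫ ω, G ω * g (X j ω) ∂μ = ∫ ω, G ω * V ω ∂μ := by
  have hGm : AEStronglyMeasurable G μ := (hG.mono (𝒢.le p)).aestronglyMeasurable
  have h1 : ∀ n, p ≤ n → ∫ ω, G ω * (μ[(fun ω' => g (X (n + 1) ω')) | 𝒢 n]) ω ∂μ
      = ∫ ω, G ω * g (X j ω) ∂μ := by
    intro n hn
    rw [cid_test P.meas P.cid p j hj (P.filt p) hG P.hg,
      ← cid_test P.meas P.cid p (n + 1) (by omega) (P.filt p) hG P.hg,
      integral_mul_condExp_test (𝒢.le n) (P.int' (n + 1) (by omega)) (hG.mono (𝒢.mono hn)) hb]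
  have h2 : Tendsto (fun n => ∫ ω, G ω * (μ[(fun ω' => g (X (n + 1) ω')) | 𝒢 n]) ω ∂μ) atTop
      (nhds (∫ ω, G ω * V ω ∂μ)) := by
    rw [tendsto_iff_dist_tendsto_zero]
    refine squeeze_zero (fun _ => dist_nonneg) (fun n => ?_)
      (by simpa using P.tendsto_L1.const_mul c)
    have i1 : Integrable (fun ω => G ω * (μ[(fun ω' => g (X (n + 1) ω')) | 𝒢 n]) ω) μ :=
      integrable_condExp.bdd_mul hGm hb
    have i2 : Integrable (fun ω => G ω * V ω) μ := P.integrable.bdd_mul hGm hb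
    rw [Real.dist_eq, ← integral_sub i1 i2, ← integral_const_mul]
    refine (abs_integral_le_integral_abs).trans (integral_mono_ae (i1.sub i2).abs
      ((integrable_condExp.sub P.integrable).abs.const_mul c) ?_)
    filter_upwards [hb] with ω h
    simp only [← mul_sub, abs_mul]
    exact mul_le_mul_of_nonneg_right h (abs_nonneg _)
  refine tendsto_nhds_unique (tendsto_const_nhds.congr' ?_) h2
  filter_upwards [eventually_ge_atTop p] with n hn using (h1 n hn).symm
end PredSec

lemma integral_mul_pull {Ω : Type*} {m mΩ : MeasurableSpace Ω} (hm : m ≤ mΩ)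
    {μ : Measure Ω} [IsProbabilityMeasure μ] {H u : Ω → ℝ} (hH : Integrable H μ)
    {c : ℝ} (hb : ∀ᵐ ω ∂μ, |H ω| ≤ c) (hu : Integrable u μ) (hum : AEStronglyMeasurable[m] u μ) :
    ∫ ω, H ω * u ω ∂μ = ∫ ω, (μ[H | m]) ω * u ω ∂μ := by
  have hHu : Integrable (H * u) μ := hu.bdd_mul hH.aestronglyMeasurable hb
  have h := condExp_mul_of_aestronglyMeasurable_right hum hHu hH
  rw [← integral_condExp hm (f := fun ω => H ω * u ω)]
  exact integral_congr_ae h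

section PredSec
set_option linter.unusedSectionVars false
variable {Ω E : Type*} {mΩ : MeasurableSpace Ω} [MeasurableSpace E]
    {μ : Measure Ω} [IsProbabilityMeasure μ] {X : ℕ → Ω → E} {𝒢 : Filtration ℕ mΩ} {g : E → ℝ}
    {V : Ω → ℝ}

lemma PredLim.tail_eq (P : PredLim μ X 𝒢 g V) (j : ℕ) (hj : 1 ≤ j) (C : ℝ) :
    ∫ ω, |g (X j ω) - clip C (g (X j ω))| ∂μ = ∫ ω, |g (X 1 ω) - clip C (g (X 1 ω))| ∂μ :=
  (cid_identDistrib P.meas P.cid j hj (g := fun x => |g x - clip C (g x)|)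
    (P.hg.sub ((continuous_clip C).measurable.comp P.hg)).norm).integral_eq

lemma PredLim.aesm_X (P : PredLim μ X 𝒢 g V) (j : ℕ) (hj : 1 ≤ j) :
    StronglyMeasurable[⨆ n, 𝒢 n] (fun ω => g (X j ω)) := by
  have h1 : MeasurableSpace.comap (X j) inferInstance ≤ ⨆ n, 𝒢 n := by
    refine le_trans ?_ (le_iSup 𝒢.seq j)
    change _ ≤ 𝒢 j
    rw [P.filt j]
    exact le_iSup₂_of_le j ⟨hj, le_rfl⟩ le_rfl
  have h2 : Measurable[⨆ n, 𝒢 n] (X j) := measurable_iff_comap_le.2 h1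
  exact (P.hg.comp h2).stronglyMeasurable

lemma PredLim.err (P : PredLim μ X 𝒢 g V) {H : Ω → ℝ} (hH : AEStronglyMeasurable H μ)
    {c : ℝ} (hb : ∀ᵐ ω ∂μ, |H ω| ≤ c) (p j C : ℕ) (hj : p + 1 ≤ j) :
    |∫ ω, H ω * g (X j ω) ∂μ - ∫ ω, H ω * V ω ∂μ| ≤
      2 * C * ∫ ω, |(μ[H | 𝒢 p]) ω - (μ[H | ⨆ n, 𝒢 n]) ω| ∂μ
      + 2 * c * (∫ ω, |g (X 1 ω) - clip C (g (X 1 ω))| ∂μ + ∫ ω, |V ω - clip C (V ω)| ∂μ) := by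
  have hinf : (⨆ n, 𝒢 n) ≤ mΩ := iSup_le fun n => 𝒢.le n
  have hHi : Integrable H μ := Integrable.of_bound hH c hb
  have hj1 : 1 ≤ j := by omega
  rw [integral_mul_pull hinf hHi hb (P.int' j hj1) (P.aesm_X j hj1).aestronglyMeasurable,
    integral_mul_pull hinf hHi hb P.integrable P.aesm_sup]
  have hb0 : ∀ᵐ ω ∂μ, |(μ[H | ⨆ n, 𝒢 n]) ω| ≤ c := ae_bdd_abs_condExp_of_ae_bdd_abs hb
  have hbp : ∀ᵐ ω ∂μ, |(μ[H | 𝒢 p]) ω| ≤ c := ae_bdd_abs_condExp_of_ae_bdd_abs hb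
  have ht := P.test p j hj (G := μ[H | 𝒢 p]) stronglyMeasurable_condExp hbp
  set H0 := μ[H | ⨆ n, 𝒢 n] with hH0
  set Hp := μ[H | 𝒢 p] with hHp
  have i0 : Integrable H0 μ := integrable_condExp
  have ip : Integrable Hp μ := integrable_condExp
  have iK : Integrable (fun ω => Hp ω - H0 ω) μ := ip.sub i0
  have hK : ∀ᵐ ω ∂μ, |Hp ω - H0 ω| ≤ 2 * c := by
    filter_upwards [hb0, hbp] with ω h1 h2
    have := abs_sub (Hp ω) (H0 ω)
    linarith
  have key : ∀ u : Ω → ℝ, Integrable u μ →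
      |∫ ω, Hp ω * u ω ∂μ - ∫ ω, H0 ω * u ω ∂μ| ≤
        C * ∫ ω, |Hp ω - H0 ω| ∂μ + 2 * c * ∫ ω, |u ω - clip C (u ω)| ∂μ := by
    intro u hu
    have j1 : Integrable (fun ω => Hp ω * u ω) μ := hu.bdd_mul ip.aestronglyMeasurable hbp
    have j2 : Integrable (fun ω => H0 ω * u ω) μ := hu.bdd_mul i0.aestronglyMeasurable hb0
    rw [← integral_sub j1 j2]
    refine (abs_integral_le_integral_abs).trans ?_
    refine le_trans (le_of_eq ?_) (clip_small_mul hu iK hK (Nat.cast_nonneg C))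
    refine integral_congr_ae (Eventually.of_forall fun ω => ?_)
    simp only [← sub_mul, abs_mul]
  have k1 := key _ (P.int' j hj1)
  have k2 := key _ P.integrable
  rw [P.tail_eq j hj1] at k1
  rw [ht] at k1
  rw [abs_le] at k1 k2 ⊢
  constructor <;> linarith [k1.1, k1.2, k2.1, k2.2]

lemma PredLim.weak_bdd (P : PredLim μ X 𝒢 g V) {H : Ω → ℝ} (hH : AEStronglyMeasurable H μ)
    {c : ℝ} (hb : ∀ᵐ ω ∂μ, |H ω| ≤ c) :
    Tendsto (fun j => ∫ ω, H ω * g (X j ω) ∂μ) atTop (nhds (∫ ω, H ω * V ω ∂μ)) := by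
  have hHi : Integrable H μ := Integrable.of_bound hH c hb
  have hp : Tendsto (fun p => ∫ ω, |(μ[H | 𝒢 p]) ω - (μ[H | ⨆ n, 𝒢 n]) ω| ∂μ) atTop (nhds 0) :=
    tendsto_integral_abs_of_eLpNorm (fun n => integrable_condExp) integrable_condExp
      (tendsto_eLpNorm_condExp (ℱ := 𝒢) H)
  have hC : Tendsto (fun C : ℕ => 2 * c * (∫ ω, |g (X 1 ω) - clip C (g (X 1 ω))| ∂μ
      + ∫ ω, |V ω - clip C (V ω)| ∂μ)) atTop (nhds 0) := by
    simpa using ((tendsto_tail P.int).add (tendsto_tail P.integrable)).const_mul (2 * c)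
  rw [Metric.tendsto_atTop]
  intro ε hε
  obtain ⟨C, hC⟩ := (hC.eventually (gt_mem_nhds (half_pos hε))).exists
  have hp' : Tendsto (fun p => 2 * C * ∫ ω, |(μ[H | 𝒢 p]) ω - (μ[H | ⨆ n, 𝒢 n]) ω| ∂μ) atTop
    (nhds 0) := by simpa using hp.const_mul (2 * (C : ℝ))
  obtain ⟨p, hp⟩ := (hp'.eventually (gt_mem_nhds (half_pos hε))).exists
  refine ⟨p + 1, fun j hj => ?_⟩
  have := P.err hH hb p j C hj
  rw [Real.dist_eq]
  linarith

lemma integrable_mul_of_sq {u v : Ω → ℝ} (hu : AEStronglyMeasurable u μ)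
    (hv : AEStronglyMeasurable v μ) (hu2 : Integrable (fun ω => u ω ^ 2) μ)
    (hv2 : Integrable (fun ω => v ω ^ 2) μ) : Integrable (fun ω => u ω * v ω) μ := by
  refine (hu2.add hv2).mono' (hu.mul hv) (Eventually.of_forall fun ω => ?_)
  rw [Real.norm_eq_abs, abs_le]
  simp only [Pi.add_apply]
  constructor <;> nlinarith [sq_nonneg (u ω + v ω), sq_nonneg (u ω - v ω)]

lemma abs_integral_mul_le_sq {u v : Ω → ℝ} (hu : AEStronglyMeasurable u μ)
    (hv : AEStronglyMeasurable v μ) (hu2 : Integrable (fun ω => u ω ^ 2) μ)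
    (hv2 : Integrable (fun ω => v ω ^ 2) μ) {η : ℝ} (hη : 0 < η) :
    |∫ ω, u ω * v ω ∂μ| ≤ η⁻¹ * ∫ ω, u ω ^ 2 ∂μ + η * ∫ ω, v ω ^ 2 ∂μ := by
  rw [← integral_const_mul, ← integral_const_mul, ← integral_add (hu2.const_mul _)
    (hv2.const_mul _)]
  refine (abs_integral_le_integral_abs).trans
    (integral_mono (integrable_mul_of_sq hu hv hu2 hv2).abs
      ((hu2.const_mul _).add (hv2.const_mul _)) fun ω => ?_)
  simp only
  have e : η⁻¹ * u ω ^ 2 + η * v ω ^ 2 = η⁻¹ * (u ω ^ 2 + (η * v ω) ^ 2) := by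
    field_simp
  have e2 : u ω * v ω = η⁻¹ * (u ω * (η * v ω)) := by field_simp
  rw [e, e2, abs_mul, abs_of_pos (inv_pos.2 hη)]
  refine mul_le_mul_of_nonneg_left ?_ (inv_pos.2 hη).le
  rw [abs_le]
  constructor <;> nlinarith [sq_nonneg (u ω + η * v ω), sq_nonneg (u ω - η * v ω)]

lemma PredLim.weak_L2 (P : PredLim μ X 𝒢 g V) (hg2 : Integrable (fun ω => g (X 1 ω) ^ 2) μ)
    (hV2 : Integrable (fun ω => V ω ^ 2) μ) {K : Ω → ℝ} (hK : AEStronglyMeasurable K μ)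
    (hK2 : Integrable (fun ω => K ω ^ 2) μ) :
    Tendsto (fun j => ∫ ω, K ω * g (X j ω) ∂μ) atTop (nhds (∫ ω, K ω * V ω ∂μ)) := by
  rw [Metric.tendsto_atTop]
  intro ε hε
  set A := ∫ ω, g (X 1 ω) ^ 2 ∂μ + ∫ ω, V ω ^ 2 ∂μ with hA
  have hA0 : 0 ≤ A := add_nonneg (integral_nonneg fun _ => sq_nonneg _)
    (integral_nonneg fun _ => sq_nonneg _)
  set η := ε / (2 * (A + 1)) with hη
  have hη0 : 0 < η := by positivity
  have hηA : η * A ≤ ε / 2 := by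
    rw [hη, div_mul_eq_mul_div, div_le_div_iff₀ (by positivity) (by positivity)]
    nlinarith
  have hr : Tendsto (fun C : ℕ => 2 * η⁻¹ * ∫ ω, (K ω - clip C (K ω)) ^ 2 ∂μ) atTop (nhds 0) := by
    simpa using (tendsto_tail_sq hK hK2).const_mul (2 * η⁻¹)
  obtain ⟨C, hC⟩ := (hr.eventually (gt_mem_nhds (show 0 < ε / 4 by positivity))).exists
  have hcm : AEStronglyMeasurable (fun ω => clip C (K ω)) μ :=
    (continuous_clip C).comp_aestronglyMeasurable hK
  have hcb : ∀ᵐ ω ∂μ, |clip C (K ω)| ≤ C :=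
    Eventually.of_forall fun ω => abs_clip_le (Nat.cast_nonneg C) _
  obtain ⟨N, hN⟩ := Metric.tendsto_atTop.1 (P.weak_bdd hcm hcb) (ε / 4) (by positivity)
  have hD2 : Integrable (fun ω => (K ω - clip C (K ω)) ^ 2) μ := by
    refine hK2.mono' ((hK.sub hcm).pow 2) (Eventually.of_forall fun ω => ?_)
    rw [Real.norm_of_nonneg (sq_nonneg _)]
    exact sq_le_sq.2 (abs_sub_clip_le (Nat.cast_nonneg C) (K ω))
  have split : ∀ u : Ω → ℝ, Integrable u μ → Integrable (fun ω => u ω ^ 2) μ →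
      |∫ ω, K ω * u ω ∂μ - ∫ ω, clip C (K ω) * u ω ∂μ| ≤
        η⁻¹ * ∫ ω, (K ω - clip C (K ω)) ^ 2 ∂μ + η * ∫ ω, u ω ^ 2 ∂μ := by
    intro u hu hu2
    have j1 := integrable_mul_of_sq hK hu.aestronglyMeasurable hK2 hu2
    have j2 : Integrable (fun ω => clip C (K ω) * u ω) μ := hu.bdd_mul hcm hcb
    rw [← integral_sub j1 j2]
    simp_rw [← sub_mul]
    exact abs_integral_mul_le_sq (hK.sub hcm) hu.aestronglyMeasurable hD2 hu2 hη0
  refine ⟨N + 1, fun j hj => ?_⟩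
  have hid := cid_identDistrib P.meas P.cid j (by omega) (g := fun x => g x ^ 2) (P.hg.pow_const 2)
  have s1 := split _ (P.int' j (by omega)) (hid.integrable_iff.2 hg2)
  rw [hid.integral_eq] at s1
  have s2 := split _ P.integrable hV2
  have s3 := hN j (by omega)
  rw [Real.dist_eq] at s3 ⊢
  rw [abs_lt] at s3 ⊢
  rw [abs_le] at s1 s2
  have : η * A = η * ∫ ω, g (X 1 ω) ^ 2 ∂μ + η * ∫ ω, V ω ^ 2 ∂μ := by rw [hA]; ring
  constructor <;> linarith [s1.1, s1.2, s2.1, s2.2, s3.1, s3.2]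

lemma PredLim.sq_le {V2 : Ω → ℝ} (P : PredLim μ X 𝒢 g V)
    (P2 : PredLim μ X 𝒢 (fun x => g x ^ 2) V2) : ∀ᵐ ω ∂μ, V ω ^ 2 ≤ V2 ω := by
  have h : ∀ᵐ ω ∂μ, ∀ n, (μ[(fun ω' => g (X (n + 1) ω')) | 𝒢 n]) ω ^ 2
      ≤ (μ[(fun ω' => g (X (n + 1) ω') ^ 2) | 𝒢 n]) ω := by
    rw [ae_all_iff]
    intro n
    have hm : MemLp (fun ω' => g (X (n + 1) ω')) 2 μ :=
      (memLp_two_iff_integrable_sq (P.int' (n + 1) (by omega)).aestronglyMeasurable).2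
        (P2.int' (n + 1) (by omega))
    have h1 := condVar_ae_eq_condExp_sq_sub_sq_condExp (𝒢.le n) hm
    have h2 : 0 ≤ᵐ[μ] Var[(fun ω' => g (X (n + 1) ω')); μ | 𝒢 n] :=
      condExp_nonneg (Eventually.of_forall fun ω => sq_nonneg _)
    filter_upwards [h1, h2] with ω h1 h2
    rw [h1] at h2
    simp only [Pi.zero_apply, Pi.sub_apply, Pi.pow_apply, sub_nonneg] at h2
    exact h2
  filter_upwards [h, P.lim, P2.lim] with ω h h1 h2
  exact le_of_tendsto_of_tendsto' (h1.pow 2) h2 h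

end PredSec

lemma PredLim.congr {Ω E : Type*} {mΩ : MeasurableSpace Ω} [MeasurableSpace E]
    {μ : Measure Ω} {X : ℕ → Ω → E} {𝒢 : Filtration ℕ mΩ} {g : E → ℝ}
    {V V' : Ω → ℝ} (P : PredLim μ X 𝒢 g V) (h : V =ᵐ[μ] V') : PredLim μ X 𝒢 g V' where
  meas := P.meas
  cid := P.cid
  filt := P.filt
  hg := P.hg
  int := P.int
  lim := by
    filter_upwards [P.lim, h] with ω h1 h2
    rwa [← h2]

section PredSec
set_option linter.unusedSectionVars false
variable {Ω E : Type*} {mΩ : MeasurableSpace Ω} [MeasurableSpace E]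
    {μ : Measure Ω} [IsProbabilityMeasure μ] {X : ℕ → Ω → E} {𝒢 : Filtration ℕ mΩ} {g : E → ℝ}
    {V V2 : Ω → ℝ}

lemma PredLim.int_Vsq (P : PredLim μ X 𝒢 g V) (P2 : PredLim μ X 𝒢 (fun x => g x ^ 2) V2) :
    Integrable (fun ω => V ω ^ 2) μ := by
  refine P2.integrable.mono' (P.aesm.pow 2) ?_
  filter_upwards [P.sq_le P2] with ω h
  rwa [Real.norm_of_nonneg (sq_nonneg _)]

lemma PredLim.int_Zsq (P : PredLim μ X 𝒢 g V) (P2 : PredLim μ X 𝒢 (fun x => g x ^ 2) V2)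
    (j : ℕ) (hj : 1 ≤ j) : Integrable (fun ω => (g (X j ω) - V ω) ^ 2) μ := by
  have a := P2.int' j hj
  have b := P.int_Vsq P2
  have c := integrable_mul_of_sq (P.int' j hj).aestronglyMeasurable P.aesm a b
  refine ((a.sub (c.const_mul 2)).add b).congr (Eventually.of_forall fun ω => ?_)
  simp only [Pi.add_apply, Pi.sub_apply]
  ring

lemma PredLim.lim_mean (P : PredLim μ X 𝒢 g V) {H : Ω → ℝ} (hH : AEStronglyMeasurable H μ)
    {c : ℝ} (hb : ∀ᵐ ω ∂μ, |H ω| ≤ c) :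
    Tendsto (fun j => ∫ ω, H ω * (g (X j ω) - V ω) ∂μ) atTop (nhds 0) := by
  have h := (P.weak_bdd hH hb).sub_const (∫ ω, H ω * V ω ∂μ)
  rw [sub_self] at h
  refine h.congr' ?_
  filter_upwards [eventually_ge_atTop 1] with j hj
  have i1 : Integrable (fun ω => H ω * g (X j ω)) μ := (P.int' j hj).bdd_mul hH hb
  have i2 : Integrable (fun ω => H ω * V ω) μ := P.integrable.bdd_mul hH hb
  rw [← integral_sub i1 i2]
  simp_rw [mul_sub]

lemma PredLim.lim_sq (P : PredLim μ X 𝒢 g V) (P2 : PredLim μ X 𝒢 (fun x => g x ^ 2) V2)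
    {H : Ω → ℝ} (hH : AEStronglyMeasurable H μ)
    {c : ℝ} (hb : ∀ᵐ ω ∂μ, |H ω| ≤ c) :
    Tendsto (fun j => ∫ ω, H ω * (g (X j ω) - V ω) ^ 2 ∂μ) atTop
      (nhds (∫ ω, H ω * (V2 ω - V ω ^ 2) ∂μ)) := by
  have b := P.int_Vsq P2
  have hK : AEStronglyMeasurable (fun ω => H ω * V ω) μ := hH.mul P.aesm
  have hK2 : Integrable (fun ω => (H ω * V ω) ^ 2) μ := by
    simp_rw [mul_pow]
    refine b.bdd_mul (hH.pow 2) (c := c ^ 2) ?_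
    filter_upwards [hb] with ω h
    rw [norm_pow]
    exact pow_le_pow_left₀ (norm_nonneg _) h 2
  have h1 := P2.weak_bdd hH hb
  have h2 := P.weak_L2 P2.int b hK hK2
  have i3 : Integrable (fun ω => H ω * V ω ^ 2) μ := b.bdd_mul hH hb
  have h := (h1.sub (h2.const_mul 2)).add_const (∫ ω, H ω * V ω ^ 2 ∂μ)
  have e1 : ∫ ω, H ω * V2 ω ∂μ - 2 * ∫ ω, H ω * V ω * V ω ∂μ + ∫ ω, H ω * V ω ^ 2 ∂μ
      = ∫ ω, H ω * (V2 ω - V ω ^ 2) ∂μ := by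
    have i1 : Integrable (fun ω => H ω * V2 ω) μ := P2.integrable.bdd_mul hH hb
    have e : ∫ ω, H ω * V ω * V ω ∂μ = ∫ ω, H ω * V ω ^ 2 ∂μ := by
      congr 1; ext ω; ring
    have e' : ∫ ω, H ω * (V2 ω - V ω ^ 2) ∂μ = ∫ ω, H ω * V2 ω ∂μ - ∫ ω, H ω * V ω ^ 2 ∂μ := by
      rw [← integral_sub i1 i3]; simp_rw [mul_sub]
    rw [e, e']; ring
  rw [e1] at h
  refine h.congr' ?_
  filter_upwards [eventually_ge_atTop 1] with j hj
  have i1 : Integrable (fun ω => H ω * g (X j ω) ^ 2) μ := (P2.int' j hj).bdd_mul hH hb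
  have i2 : Integrable (fun ω => H ω * V ω * g (X j ω)) μ :=
    integrable_mul_of_sq hK (P.int' j hj).aestronglyMeasurable hK2 (P2.int' j hj)
  have i12 : Integrable (fun ω => H ω * g (X j ω) ^ 2 - 2 * (H ω * V ω * g (X j ω))) μ :=
    i1.sub (i2.const_mul 2)
  rw [← integral_const_mul, ← integral_sub i1 (i2.const_mul 2), ← integral_add i12 i3]
  congr 1; ext ω; ring

/-- natural filtration of a sequence indexed from 1 -/
def natFilt (Z : ℕ → Ω → ℝ) (hZ : ∀ n, Measurable (Z n)) : Filtration ℕ mΩ where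
  seq n := ⨆ i ∈ Set.Icc 1 n, MeasurableSpace.comap (Z i) inferInstance
  mono' _ _ hnk := iSup₂_le fun i hi => le_iSup₂_of_le i ⟨hi.1, hi.2.trans hnk⟩ le_rfl
  le' _ := iSup₂_le fun i _ => measurable_iff_comap_le.1 (hZ i)

lemma PredLim.mds (P : PredLim μ X 𝒢 g V) (P2 : PredLim μ X 𝒢 (fun x => g x ^ 2) V2)
    (m : ℕ) {Z : ℕ → Ω → ℝ} (hZ : ∀ n, Measurable (Z n))
    (hZe : Z = fun n ω => g (X (n + m) ω) - V ω) (hc : IsCIDnat μ Z) :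
    MDS μ (natFilt Z hZ) Z (fun ω => V2 ω - V ω ^ 2) := by
  have int1 : ∀ k, 1 ≤ k → Integrable (Z k) μ := by
    intro k hk; subst hZe
    exact (P.int' (k + m) (by omega)).sub P.integrable
  have int2 : ∀ k, 1 ≤ k → Integrable (fun ω => Z k ω ^ 2) μ := by
    intro k hk; subst hZe
    exact P.int_Zsq P2 (k + m) (by omega)
  refine ⟨?_, ?_, ?_, ?_, ?_, ?_, ?_, ?_⟩
  · intro k hk
    refine measurable_iff_comap_le.2 ?_
    exact le_iSup₂_of_le k ⟨hk, le_rfl⟩ le_rfl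
  · exact fun k hk => cid_ident hZ hc k hk
  · exact int1
  · exact int2
  · exact P2.integrable.sub (P.int_Vsq P2)
  · filter_upwards [P.sq_le P2] with ω h
    linarith
  · intro k G hG hb
    have hGm : AEStronglyMeasurable G μ := (hG.mono ((natFilt Z hZ).le k)).aestronglyMeasurable
    have h := (P.lim_mean hGm hb).comp (tendsto_add_atTop_nat m)
    refine tendsto_nhds_unique (tendsto_const_nhds.congr' ?_) h
    filter_upwards [eventually_ge_atTop (k + 1)] with j hj
    have := cid_test hZ hc k j hj (m := natFilt Z hZ k) rfl hG (ψ := fun x => x) measurable_id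
    rw [← this]
    subst hZe
    rfl
  · intro k G hG hb
    have hGm : AEStronglyMeasurable G μ := (hG.mono ((natFilt Z hZ).le k)).aestronglyMeasurable
    have h := (P.lim_sq P2 hGm hb).comp (tendsto_add_atTop_nat m)
    refine tendsto_nhds_unique (tendsto_const_nhds.congr' ?_) h
    filter_upwards [eventually_ge_atTop (k + 1)] with j hj
    have := cid_test hZ hc k j hj (m := natFilt Z hZ k) rfl hG (ψ := fun x => x ^ 2)
      (measurable_id.pow_const 2)
    rw [← this]
    subst hZe
    rfl

lemma PredLim.linf (P : PredLim μ X 𝒢 g V) (P2 : PredLim μ X 𝒢 (fun x => g x ^ 2) V2)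
    (m : ℕ) {Z : ℕ → Ω → ℝ} (hZ : ∀ n, Measurable (Z n))
    (hZe : Z = fun n ω => g (X (n + m) ω) - V ω) :
    (fun ω => V2 ω - V ω ^ 2) =ᵐ[μ] μ[(fun ω => V2 ω - V ω ^ 2) | ⨆ n, natFilt Z hZ n] := by
  have hinf : (⨆ n, natFilt Z hZ n) ≤ mΩ := iSup_le fun n => (natFilt Z hZ).le n
  set L : Ω → ℝ := fun ω => V2 ω - V ω ^ 2 with hL
  have iL : Integrable L μ := P2.integrable.sub (P.int_Vsq P2)
  set L0 := μ[L | ⨆ n, natFilt Z hZ n] with hL0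
  have iL0 : Integrable L0 μ := integrable_condExp
  have sL0 : StronglyMeasurable[⨆ n, natFilt Z hZ n] L0 := stronglyMeasurable_condExp
  have iD : Integrable (fun ω => L ω - L0 ω) μ := iL.sub iL0
  obtain ⟨D', hD', hDD⟩ := iD.aestronglyMeasurable
  set H : Ω → ℝ := fun ω => SignType.sign (D' ω) with hH
  have hHm : Measurable H := by
    have : Measurable (fun x : ℝ => ((SignType.sign x : SignType) : ℝ)) := by
      have e : (fun x : ℝ => ((SignType.sign x : SignType) : ℝ))
          = fun x => if 0 < x then 1 else if x < 0 then -1 else 0 := by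
        ext x
        rw [sign_apply]
        split_ifs <;> simp
      rw [e]
      exact Measurable.ite measurableSet_Ioi measurable_const
        (Measurable.ite measurableSet_Iio measurable_const measurable_const)
    exact this.comp hD'.measurable
  have hHb : ∀ ω, |H ω| ≤ 1 := by
    intro ω
    simp only [hH]
    rcases lt_trichotomy (D' ω) 0 with h | h | h <;> simp [h]
  have hHb' : ∀ᵐ ω ∂μ, |H ω| ≤ 1 := Eventually.of_forall hHb
  have iH : Integrable H μ := Integrable.of_bound hHm.aestronglyMeasurable 1 hHb'
  set H0 := μ[H | ⨆ n, natFilt Z hZ n] with hH0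
  have iH0 : Integrable H0 μ := integrable_condExp
  have hH0b : ∀ᵐ ω ∂μ, |H0 ω| ≤ 1 := ae_bdd_abs_condExp_of_ae_bdd_abs hHb'
  have sH0 : StronglyMeasurable[⨆ n, natFilt Z hZ n] H0 := stronglyMeasurable_condExp
  -- integral of H * L equals that of H0 * L
  have hKm : AEStronglyMeasurable (fun ω => H ω - H0 ω) μ := (iH.sub iH0).aestronglyMeasurable
  have hKb : ∀ᵐ ω ∂μ, |H ω - H0 ω| ≤ 2 := by
    filter_upwards [hHb', hH0b] with ω h1 h2
    have := abs_sub (H ω) (H0 ω)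
    linarith
  have hlim := (P.lim_sq P2 hKm hKb).comp (tendsto_add_atTop_nat m)
  have hz : ∫ ω, (H ω - H0 ω) * L ω ∂μ = 0 := by
    refine tendsto_nhds_unique hlim (tendsto_const_nhds.congr' ?_)
    filter_upwards [eventually_ge_atTop 1] with j hj
    have hZj : Measurable[⨆ n, natFilt Z hZ n] (Z j) := by
      refine measurable_iff_comap_le.2 (le_trans ?_ (le_iSup (natFilt Z hZ).seq j))
      exact le_iSup₂_of_le j ⟨hj, le_rfl⟩ le_rfl
    have iZ : Integrable (fun ω => Z j ω ^ 2) μ := by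
      subst hZe
      exact P.int_Zsq P2 (j + m) (by omega)
    have hp := integral_mul_pull hinf iH hHb' iZ
      (hZj.pow_const 2).stronglyMeasurable.aestronglyMeasurable
    have j1 : Integrable (fun ω => H ω * Z j ω ^ 2) μ := iZ.bdd_mul iH.aestronglyMeasurable hHb'
    have j2 : Integrable (fun ω => H0 ω * Z j ω ^ 2) μ := iZ.bdd_mul iH0.aestronglyMeasurable hH0b
    have : ∫ ω, (H ω - H0 ω) * Z j ω ^ 2 ∂μ = 0 := by
      simp_rw [sub_mul]
      rw [integral_sub j1 j2, hp, sub_self]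
    rw [← this]
    subst hZe
    rfl
  have k1 : Integrable (fun ω => H ω * L ω) μ := iL.bdd_mul iH.aestronglyMeasurable hHb'
  have k2 : Integrable (fun ω => H0 ω * L ω) μ := iL.bdd_mul iH0.aestronglyMeasurable hH0b
  have k3 : Integrable (fun ω => H ω * L0 ω) μ := iL0.bdd_mul iH.aestronglyMeasurable hHb'
  have q1 : ∫ ω, H ω * L ω ∂μ = ∫ ω, H0 ω * L ω ∂μ := by
    simp_rw [sub_mul] at hz
    rw [integral_sub k1 k2] at hz
    linarith
  have q2 : ∫ ω, H0 ω * L ω ∂μ = ∫ ω, H0 ω * L0 ω ∂μ :=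
    integral_mul_condExp_test hinf iL sH0 hH0b
  have q3 : ∫ ω, H ω * L0 ω ∂μ = ∫ ω, H0 ω * L0 ω ∂μ :=
    integral_mul_pull hinf iH hHb' iL0 sL0.aestronglyMeasurable
  have q4 : ∫ ω, |L ω - L0 ω| ∂μ = 0 := by
    have : ∫ ω, |L ω - L0 ω| ∂μ = ∫ ω, (H ω * L ω - H ω * L0 ω) ∂μ := by
      refine integral_congr_ae ?_
      filter_upwards [hDD] with ω h
      simp only [hH]
      rw [← mul_sub, ← h, sign_mul_self]
    rw [this, integral_sub k1 k3, q1, q2, q3, sub_self]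
  have q5 := (integral_eq_zero_iff_of_nonneg (fun ω => abs_nonneg _) iD.abs).1 q4
  filter_upwards [q5] with ω h
  have : L ω - L0 ω = 0 := by simpa using h
  linarith

end PredSec

lemma StableGaussLimit.congr {Ω : Type*} {mΩ : MeasurableSpace Ω} {μ : Measure Ω}
    {W W' : ℕ → Ω → ℝ} {L L' : Ω → ℝ} (h : StableGaussLimit μ W L)
    (hW : ∀ n, W n =ᵐ[μ] W' n) (hL : L =ᵐ[μ] L') : StableGaussLimit μ W' L' := by
  intro H hH h0 g
  have hac : μ[|H] ≪ μ := cond_absolutelyContinuous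
  have h1 := h H hH h0 g
  have e1 : ∀ n, ∫ ω, g (W n ω) ∂μ[|H] = ∫ ω, g (W' n ω) ∂μ[|H] := by
    intro n
    refine integral_congr_ae ?_
    filter_upwards [hac.ae_le (hW n)] with ω h
    rw [h]
  have e2 : ∫ ω, ∫ x, g x ∂(gaussianReal 0 (L ω).toNNReal) ∂μ[|H]
      = ∫ ω, ∫ x, g x ∂(gaussianReal 0 (L' ω).toNNReal) ∂μ[|H] := by
    refine integral_congr_ae ?_
    filter_upwards [hac.ae_le hL] with ω h
    rw [h]
  simp_rw [e1] at h1
  rwa [e2] at h1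

lemma integral_cond_eq {Ω : Type*} {mΩ : MeasurableSpace Ω} {μ : Measure Ω}
    {H : Set Ω} (hH : MeasurableSet H) (F : Ω → ℂ) :
    ∫ ω, F ω ∂μ[|H] = ((μ H)⁻¹.toReal : ℂ)
      * ∫ ω, ((H.indicator (fun _ => (1 : ℝ)) ω : ℝ) : ℂ) * F ω ∂μ := by
  rw [ProbabilityTheory.cond, integral_smul_measure, ← integral_indicator hH]
  rw [Complex.real_smul]
  congr 2
  ext ω
  by_cases h : ω ∈ H <;> simp [h]

lemma stable_of_charFun {Ω : Type*} {mΩ : MeasurableSpace Ω} {μ : Measure Ω}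
    [IsProbabilityMeasure μ] {W : ℕ → Ω → ℝ} {L : Ω → ℝ} (hW : ∀ n, Measurable (W n))
    (hL : Measurable L) (hL0 : ∀ᵐ ω ∂μ, 0 ≤ L ω)
    (hc : ∀ H : Set Ω, MeasurableSet H → ∀ t : ℝ, Tendsto (fun n : ℕ =>
      ∫ ω, ((H.indicator (fun _ => (1 : ℝ)) ω : ℝ) : ℂ)
        * Complex.exp ((t * W n ω : ℝ) * Complex.I) ∂μ) atTop
      (nhds (∫ ω, ((H.indicator (fun _ => (1 : ℝ)) ω : ℝ) : ℂ)
        * (Real.exp (-(t ^ 2 / 2 * L ω)) : ℂ) ∂μ))) :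
    StableGaussLimit μ W L := by
  intro H hH h0 g
  have : IsProbabilityMeasure μ[|H] := cond_isProbabilityMeasure h0
  have hac : μ[|H] ≪ μ := cond_absolutelyContinuous
  set ν := μ[|H] with hν
  have hΦ : Measurable (fun z : Ω × ℝ => Real.sqrt (L z.1) * z.2) :=
    (hL.comp measurable_fst).sqrt.mul measurable_snd
  set ρ : Measure ℝ := (ν.prod (gaussianReal 0 1)).map (fun z => Real.sqrt (L z.1) * z.2) with hρ
  have : IsProbabilityMeasure ρ := Measure.isProbabilityMeasure_map hΦ.aemeasurable
  have : ∀ n, IsProbabilityMeasure (ν.map (W n)) := fun n =>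
    Measure.isProbabilityMeasure_map (hW n).aemeasurable
  let πn : ℕ → ProbabilityMeasure ℝ := fun n => ⟨ν.map (W n), inferInstance⟩
  let π0 : ProbabilityMeasure ℝ := ⟨ρ, inferInstance⟩
  have hconv : Tendsto πn atTop (nhds π0) := by
    refine ProbabilityMeasure.tendsto_iff_tendsto_charFun.2 fun t => ?_
    have e1 : ∀ n, charFun (πn n : Measure ℝ) t
        = ∫ ω, Complex.exp ((t * W n ω : ℝ) * Complex.I) ∂ν := by
      intro n
      change charFun (ν.map (W n)) t = _
      rw [charFun_apply_real, integral_map (hW n).aemeasurable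
        (by fun_prop)]
      simp
    have e2 : charFun (π0 : Measure ℝ) t = ∫ ω, (Real.exp (-(t ^ 2 / 2 * L ω)) : ℂ) ∂ν := by
      change charFun ρ t = _
      rw [charFun_apply_real, hρ, integral_map hΦ.aemeasurable (by fun_prop)]
      rw [integral_prod]
      · refine integral_congr_ae ?_
        filter_upwards [hac.ae_le hL0] with ω hω
        have := charFun_gaussianReal (μ := 0) (v := 1) (t * Real.sqrt (L ω))
        rw [charFun_apply_real] at this
        have e3 : ∀ x : ℝ, (t : ℂ) * ((Real.sqrt (L ω) * x : ℝ) : ℂ) * Complex.I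
            = ((t * Real.sqrt (L ω) : ℝ) : ℂ) * (x : ℂ) * Complex.I := by
          intro x; push_cast; ring
        simp_rw [e3]
        rw [this]
        have e4 : ((Real.sqrt (L ω) : ℝ) : ℂ) ^ 2 = (L ω : ℂ) := by
          rw [← Complex.ofReal_pow, Real.sq_sqrt hω]
        push_cast
        rw [mul_pow, e4]
        congr 1
        simp
        ring
      · refine Integrable.of_bound (C := 1) ?_ (Eventually.of_forall fun z => ?_)
        · refine Measurable.aestronglyMeasurable ?_
          have := hΦ
          fun_prop
        · have e3 : (t : ℂ) * ((Real.sqrt (L z.1) * z.2 : ℝ) : ℂ) * Complex.I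
            = ((t * (Real.sqrt (L z.1) * z.2) : ℝ) : ℂ) * Complex.I := by
            push_cast; ring
          rw [e3, Complex.norm_exp_ofReal_mul_I]
    simp_rw [e1]
    rw [e2]
    simp_rw [hν, integral_cond_eq hH]
    exact (hc H hH t).const_mul _
  have hfin := (ProbabilityMeasure.tendsto_iff_forall_integral_tendsto.1 hconv) g
  have e1 : ∀ n, ∫ x, g x ∂(πn n : Measure ℝ) = ∫ ω, g (W n ω) ∂ν := by
    intro n
    change ∫ x, g x ∂(ν.map (W n)) = _
    rw [integral_map (hW n).aemeasurable g.continuous.aestronglyMeasurable]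
  have e2 : ∫ x, g x ∂(π0 : Measure ℝ)
      = ∫ ω, ∫ x, g x ∂(gaussianReal 0 (L ω).toNNReal) ∂ν := by
    change ∫ x, g x ∂ρ = _
    rw [hρ, integral_map hΦ.aemeasurable g.continuous.aestronglyMeasurable, integral_prod]
    · refine integral_congr_ae ?_
      filter_upwards [hac.ae_le hL0] with ω hω
      have e3 : gaussianReal 0 (L ω).toNNReal
          = (gaussianReal 0 1).map (Real.sqrt (L ω) * ·) := by
        rw [gaussianReal_map_const_mul]
        congr 1
        · simp
        · ext
          simp [Real.sq_sqrt hω, hω]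
      rw [e3, integral_map (by fun_prop) g.continuous.aestronglyMeasurable]
    · refine Integrable.of_bound (C := ‖g‖) ?_ (Eventually.of_forall fun z => g.norm_coe_le_norm _)
      exact (g.continuous.measurable.comp hΦ).aestronglyMeasurable
  simp_rw [e1] at hfin
  rwa [e2] at hfin

lemma shift_sum (a : ℕ → ℝ) (n m : ℕ) :
    ∑ k ∈ Finset.Icc 1 n, a k - ∑ k ∈ Finset.Icc 1 n, a (k + m)
      = ∑ i ∈ Finset.range m, a (i + 1) - ∑ i ∈ Finset.range m, a (n + i + 1) := by
  have h : ∀ b : ℕ → ℝ, ∑ k ∈ Finset.Icc 1 n, b k = ∑ i ∈ Finset.range n, b (i + 1) := by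
    intro b
    rw [Finset.range_eq_Ico, Finset.sum_Ico_add' b 0 n 1]
    rfl
  rw [h, h]
  have h1 := Finset.sum_range_add (fun i => a (i + 1)) n m
  have h2 := Finset.sum_range_add (fun i => a (i + 1)) m n
  rw [add_comm m n] at h2
  have h3 : ∑ i ∈ Finset.range n, a (i + 1 + m) = ∑ i ∈ Finset.range n, a (m + i + 1) := by
    refine Finset.sum_congr rfl fun i _ => ?_
    congr 1; omega
  rw [h3]
  linarith

section PredSec
set_option linter.unusedSectionVars false
variable {Ω E : Type*} {mΩ : MeasurableSpace Ω} [MeasurableSpace E]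
    {μ : Measure Ω} [IsProbabilityMeasure μ] {X : ℕ → Ω → E} {𝒢 : Filtration ℕ mΩ} {g : E → ℝ}
    {V V2 : Ω → ℝ}

lemma PredLim.slutsky (P : PredLim μ X 𝒢 g V) (hV : Measurable V) (m : ℕ)
    {h : Ω → ℝ} (hi : Integrable h μ) (hb : ∀ᵐ ω ∂μ, |h ω| ≤ 1) (t : ℝ) (n : ℕ) :
    ‖∫ ω, (h ω : ℂ) * Complex.exp ((t * (((∑ k ∈ Finset.Icc 1 n, g (X k ω)) - n * V ω)
        / Real.sqrt n) : ℝ) * Complex.I) ∂μ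
      - ∫ ω, (h ω : ℂ) * Complex.exp ((t / Real.sqrt n * ∑ k ∈ Finset.Ioc 0 n,
        (g (X (k + m) ω) - V ω) : ℝ) * Complex.I) ∂μ‖
      ≤ |t| / Real.sqrt n * (2 * m * ∫ ω, |g (X 1 ω)| ∂μ) := by
  have hgX : ∀ k, Measurable fun ω => g (X k ω) := fun k => P.hg.comp (P.meas k)
  have m1 : Measurable (fun ω => t * (((∑ k ∈ Finset.Icc 1 n, g (X k ω)) - n * V ω)
      / Real.sqrt n)) :=
    (((Finset.measurable_fun_sum _ fun k _ => hgX k).sub (hV.const_mul _)).div_const _).const_mul _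
  have m2 : Measurable (fun ω => t / Real.sqrt n * ∑ k ∈ Finset.Ioc 0 n,
      (g (X (k + m) ω) - V ω)) :=
    (Finset.measurable_fun_sum _ fun k _ => (hgX _).sub hV).const_mul _
  have b1 : Integrable (fun ω => Complex.exp ((t * (((∑ k ∈ Finset.Icc 1 n, g (X k ω)) - n * V ω)
        / Real.sqrt n) : ℝ) * Complex.I)) μ :=
    Integrable.of_bound (C := 1) (Complex.measurable_exp.comp
      ((Complex.measurable_ofReal.comp m1).mul_const _)).aestronglyMeasurable
      (Eventually.of_forall fun ω => by
      rw [Complex.norm_exp_ofReal_mul_I])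
  have b2 : Integrable (fun ω => Complex.exp ((t / Real.sqrt n * ∑ k ∈ Finset.Ioc 0 n,
        (g (X (k + m) ω) - V ω) : ℝ) * Complex.I)) μ :=
    Integrable.of_bound (C := 1) (Complex.measurable_exp.comp
      ((Complex.measurable_ofReal.comp m2).mul_const _)).aestronglyMeasurable
      (Eventually.of_forall fun ω => by
      rw [Complex.norm_exp_ofReal_mul_I])
  have hhm : AEStronglyMeasurable (fun ω => (h ω : ℂ)) μ :=
    Complex.continuous_ofReal.comp_aestronglyMeasurable hi.aestronglyMeasurable
  have hhb : ∀ᵐ ω ∂μ, ‖(h ω : ℂ)‖ ≤ 1 := by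
    filter_upwards [hb] with ω h
    rwa [Complex.norm_real]
  refine (diff_bound hhm hhb b1 b2).trans ?_
  have iX : ∀ k, 1 ≤ k → Integrable (fun ω => |g (X k ω)|) μ := fun k hk => (P.int' k hk).abs
  have iS : Integrable (fun ω => ∑ i ∈ Finset.range m, |g (X (i + 1) ω)|
      + ∑ i ∈ Finset.range m, |g (X (n + i + 1) ω)|) μ :=
    (integrable_finsetSum _ fun i _ => iX _ (by omega)).add
      (integrable_finsetSum _ fun i _ => iX _ (by omega))
  have hid : ∀ k, 1 ≤ k → ∫ ω, |g (X k ω)| ∂μ = ∫ ω, |g (X 1 ω)| ∂μ := fun k hk =>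
    (cid_identDistrib P.meas P.cid k hk (g := fun x => |g x|) P.hg.norm).integral_eq
  have hval : ∫ ω, (∑ i ∈ Finset.range m, |g (X (i + 1) ω)|
      + ∑ i ∈ Finset.range m, |g (X (n + i + 1) ω)|) ∂μ = 2 * m * ∫ ω, |g (X 1 ω)| ∂μ := by
    rw [integral_add (integrable_finsetSum _ fun i _ => iX _ (by omega))
      (integrable_finsetSum _ fun i _ => iX _ (by omega)),
      integral_finsetSum _ (fun i _ => iX _ (by omega)),
      integral_finsetSum _ (fun i _ => iX _ (by omega))]
    rw [Finset.sum_congr rfl (fun i _ => hid (i + 1) (by omega)),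
      Finset.sum_congr rfl (fun i _ => hid (n + i + 1) (by omega))]
    simp
    ring
  rw [← hval, ← integral_const_mul]
  refine integral_mono (b1.sub b2).norm (iS.const_mul _) fun ω => ?_
  refine (cexp_lip _ _).trans ?_
  have e : t * (((∑ k ∈ Finset.Icc 1 n, g (X k ω)) - n * V ω) / Real.sqrt n)
      - t / Real.sqrt n * ∑ k ∈ Finset.Ioc 0 n, (g (X (k + m) ω) - V ω)
      = t / Real.sqrt n * (∑ i ∈ Finset.range m, g (X (i + 1) ω)
        - ∑ i ∈ Finset.range m, g (X (n + i + 1) ω)) := by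
    rw [← shift_sum (fun k => g (X k ω)) n m]
    have : Finset.Ioc 0 n = Finset.Icc 1 n := rfl
    rw [this, Finset.sum_sub_distrib]
    simp only [Finset.sum_const, Nat.card_Icc, Nat.add_sub_cancel, nsmul_eq_mul]
    ring
  rw [e, abs_mul, abs_div, abs_of_nonneg (Real.sqrt_nonneg _)]
  refine mul_le_mul_of_nonneg_left ?_ (by positivity)
  refine (abs_sub _ _).trans (add_le_add (Finset.abs_sum_le_sum_abs _ _)
    (Finset.abs_sum_le_sum_abs _ _))

lemma PredLim.stable (P : PredLim μ X 𝒢 g V) (P2 : PredLim μ X 𝒢 (fun x => g x ^ 2) V2)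
    (hV : Measurable V) (hV2 : Measurable V2) (m : ℕ)
    (hc : IsCIDnat μ (fun n ω => g (X (n + m) ω) - V ω)) :
    StableGaussLimit μ
      (fun n ω => ((∑ k ∈ Finset.Icc 1 n, g (X k ω)) - n * V ω) / Real.sqrt n)
      (fun ω => V2 ω - (V ω) ^ 2) := by
  have hgX : ∀ k, Measurable fun ω => g (X k ω) := fun k => P.hg.comp (P.meas k)
  have hZ : ∀ n, Measurable ((fun n ω => g (X (n + m) ω) - V ω : ℕ → Ω → ℝ) n) :=
    fun n => (hgX _).sub hV
  have M := P.mds P2 m hZ rfl hc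
  have hLinf := P.linf P2 m hZ rfl
  refine stable_of_charFun (fun n =>
    ((Finset.measurable_fun_sum _ fun k _ => hgX k).sub (hV.const_mul _)).div_const _)
    (hV2.sub (hV.pow_const 2)) ?_ ?_
  · filter_upwards [P.sq_le P2] with ω h
    linarith
  · intro H hH t
    have hi : Integrable (H.indicator (fun _ => (1 : ℝ))) μ :=
      (integrable_const 1).indicator hH
    have hb : ∀ᵐ ω ∂μ, |H.indicator (fun _ => (1 : ℝ)) ω| ≤ 1 := by
      refine Eventually.of_forall fun ω => ?_
      by_cases h : ω ∈ H <;> simp [h]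
    have h1 := M.clt hLinf hi hb t
    have h2 : Tendsto (fun n : ℕ => |t| / Real.sqrt n * (2 * m * ∫ ω, |g (X 1 ω)| ∂μ)) atTop
        (nhds 0) := by
      have : Tendsto (fun n : ℕ => |t| / Real.sqrt n) atTop (nhds 0) :=
        tendsto_const_nhds.div_atTop
          (Real.tendsto_sqrt_atTop.comp tendsto_natCast_atTop_atTop)
      simpa using this.mul_const (2 * m * ∫ ω, |g (X 1 ω)| ∂μ)
    have h3 := squeeze_zero_norm (fun n => P.slutsky hV m hi hb t n) h2
    have h4 := h3.add h1
    rw [zero_add] at h4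
    refine h4.congr fun n => ?_
    exact sub_add_cancel _ _

end PredSec

/-- CLT for c.i.d. sequences (case I): if `(X n)` is c.i.d., `f (X 1)` and `f (X 1)²` are
integrable, and `(f (X (n+m)) − V_f)ₙ` is c.i.d. for some `m ≥ 0`, then
`W n = n^{-1/2} (f (X 1) + ⋯ + f (X n) − n V_f)` converges stably with representing
measure `N(0, V_{f²} − (V_f)²)`. -/
theorem stmt17 {Ω E : Type*} {mΩ : MeasurableSpace Ω} [MeasurableSpace E]
    (μ : Measure Ω) [IsProbabilityMeasure μ] (X : ℕ → Ω → E)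
    (hX : ∀ n, Measurable (X n))
    (hcid : IsCIDnat μ X)
    (𝒢 : Filtration ℕ mΩ)
    (h𝒢 : ∀ n, 𝒢 n = ⨆ i ∈ Set.Icc 1 n, MeasurableSpace.comap (X i) inferInstance)
    (f : E → ℝ) (hf : Measurable f)
    (hint1 : Integrable (fun ω => f (X 1 ω)) μ)
    (hint2 : Integrable (fun ω => (f (X 1 ω)) ^ 2) μ)
    (Vf Vf2 : Ω → ℝ)
    (hVf : ∀ᵐ ω ∂μ, Tendsto (fun n => (μ[(fun ω' => f (X (n + 1) ω')) | 𝒢 n]) ω)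
      atTop (nhds (Vf ω)))
    (hVf2 : ∀ᵐ ω ∂μ, Tendsto (fun n => (μ[(fun ω' => (f (X (n + 1) ω')) ^ 2) | 𝒢 n]) ω)
      atTop (nhds (Vf2 ω)))
    (hm : ∃ m : ℕ, IsCIDnat μ (fun n ω => f (X (n + m) ω) - Vf ω)) :
    StableGaussLimit μ
      (fun n ω => ((∑ k ∈ Finset.Icc 1 n, f (X k ω)) - n * Vf ω) / Real.sqrt n)
      (fun ω => Vf2 ω - (Vf ω) ^ 2) := by
  obtain ⟨m, hm⟩ := hm
  have P : PredLim μ X 𝒢 f Vf := ⟨hX, hcid, h𝒢, hf, hint1, hVf⟩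
  have P2 : PredLim μ X 𝒢 (fun x => f x ^ 2) Vf2 := ⟨hX, hcid, h𝒢, hf.pow_const 2, hint2, hVf2⟩
  obtain ⟨V, hV, hVe⟩ := P.aesm
  obtain ⟨V2, hV2, hV2e⟩ := P2.aesm
  have hc : IsCIDnat μ (fun n ω => f (X (n + m) ω) - V ω) := by
    intro n
    have h := hm n
    have e1 : (fun ω (i : Fin (n + 1)) => if (i : ℕ) < n then f (X ((i : ℕ) + 1 + m) ω) - V ω
        else f (X (n + 2 + m) ω) - V ω) =ᵐ[μ]
        (fun ω (i : Fin (n + 1)) => if (i : ℕ) < n then f (X ((i : ℕ) + 1 + m) ω) - Vf ω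
        else f (X (n + 2 + m) ω) - Vf ω) := by
      filter_upwards [hVe] with ω hω
      rw [hω]
    have e2 : (fun ω (i : Fin (n + 1)) => f (X ((i : ℕ) + 1 + m) ω) - V ω) =ᵐ[μ]
        (fun ω (i : Fin (n + 1)) => f (X ((i : ℕ) + 1 + m) ω) - Vf ω) := by
      filter_upwards [hVe] with ω hω
      rw [hω]
    exact (Measure.map_congr e1).trans (h.trans (Measure.map_congr e2).symm)
  refine ((P.congr hVe).stable (P2.congr hV2e) hV.measurable hV2.measurable m hc).congr ?_ ?_
  · intro n
    filter_upwards [hVe] with ω hω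
    rw [hω]
  · filter_upwards [hVe, hV2e] with ω h1 h2
    rw [h1, h2]
end

section
/- If (X_n) is G-c.i.d. and f, f² are integrable at X_1 (E|f(X_1)| < ∞ and E[f(X_1)²] < ∞), then B_n = n^{-1/2} Σ_{k=1}^n (f(X_k) − E[f(X_k)|G_{k-1}]) converges stably with representing measure N(0, V_{f²} − (V_f)²). -/
open MeasureTheory ProbabilityTheory Filter

/-- `(X n)` (indexed from 1) is conditionally identically distributed with respect to `𝒢`. -/
def IsCID {Ω E : Type*} {mΩ : MeasurableSpace Ω} [MeasurableSpace E]
    (μ : Measure Ω) (𝒢 : Filtration ℕ mΩ) (X : ℕ → Ω → E) : Prop :=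
  ∀ (f : E → ℝ), Measurable f → (∃ C, ∀ x, |f x| ≤ C) →
    ∀ n k : ℕ, n < k →
      μ[(fun ω => f (X k ω)) | 𝒢 n] =ᵐ[μ] μ[(fun ω => f (X (n + 1) ω)) | 𝒢 n]

lemma aux_taylor (x : ℝ) : ‖Complex.exp (Complex.I * x) - 1 - Complex.I * x + x ^ 2 / 2‖
    ≤ 4 * min (x ^ 2) (|x| ^ 3) := by
  have hn : ‖Complex.I * (x : ℂ)‖ = |x| := by simp
  have hx0 := abs_nonneg x
  rcases le_total |x| 1 with h | h
  · have := Complex.exp_bound (x := Complex.I * x) (by rw [hn]; exact h) (n := 3) (by norm_num)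
    rw [hn] at this
    simp only [Finset.sum_range_succ, Finset.range_zero, Finset.sum_empty] at this
    have e : Complex.exp (Complex.I * x) - 1 - Complex.I * x + x ^ 2 / 2 = Complex.exp (Complex.I * x) - (0 + (Complex.I * x) ^ 0 / (Nat.factorial 0 : ℂ) + (Complex.I * x) ^ 1 / (Nat.factorial 1 : ℂ) +
        (Complex.I * x) ^ 2 / (Nat.factorial 2 : ℂ)) := by
      simp [mul_pow, Nat.factorial]; ring
    rw [e]
    refine this.trans ?_
    have h3 : |x| ^ 3 ≤ x ^ 2 := by rw [← sq_abs]; exact pow_le_pow_of_le_one hx0 h (by norm_num)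
    rw [min_eq_right h3]
    have : 0 ≤ |x| ^ 3 := by positivity
    norm_num [Nat.factorial]
    nlinarith
  · have h3 : x ^ 2 ≤ |x| ^ 3 := by rw [← sq_abs]; exact pow_le_pow_right₀ h (by norm_num)
    rw [min_eq_left h3]
    have h1 := norm_add_le (Complex.exp (Complex.I * x) - 1 - Complex.I * x) ((x:ℂ) ^ 2 / 2)
    have h2 := norm_sub_le (Complex.exp (Complex.I * x) - 1) (Complex.I * x)
    have h4 := norm_sub_le (Complex.exp (Complex.I * x)) 1
    rw [Complex.norm_exp_I_mul_ofReal] at h4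
    rw [hn] at h2
    have : ‖(x:ℂ) ^ 2 / 2‖ = x ^ 2 / 2 := by simp
    rw [this] at h1
    simp only [norm_one] at h4
    have : |x| ^ 2 = x ^ 2 := sq_abs x
    nlinarith

lemma aux_exp (q : ℝ) (hq : 0 ≤ q) : ‖(1 : ℂ) - q - Complex.exp (-q)‖ ≤ q ^ 2 := by
  have e : (1 : ℂ) - q - Complex.exp (-q) = ((1 - q - Real.exp (-q) : ℝ) : ℂ) := by push_cast; rfl
  rw [e, Complex.norm_real, Real.norm_eq_abs, abs_sub_comm]
  have h1 := Real.add_one_le_exp (-q)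
  rw [abs_of_nonneg (by linarith)]
  rcases le_total q 1 with h | h
  · have := Real.norm_exp_sub_one_sub_id_le (x := -q) (by simpa [abs_of_nonneg hq] using h)
    have := (le_abs_self _).trans this
    simp only [norm_neg, Real.norm_eq_abs, sq_abs] at this
    linarith
  · have := Real.exp_le_one_iff.2 (neg_nonpos.2 hq)
    nlinarith

lemma aux_pull {Ω : Type*} {m mΩ : MeasurableSpace Ω} (hm : m ≤ mΩ) (μ : Measure Ω)
    [IsProbabilityMeasure μ] (B : Ω → ℂ) (hB : StronglyMeasurable[m] B) (K : ℝ)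
    (hK : ∀ᵐ ω ∂μ, ‖B ω‖ ≤ K)
    (g g' : Ω → ℝ) (hg : Integrable g μ) (hg' : μ[g | m] =ᵐ[μ] g') :
    Integrable (fun ω => B ω * (g ω : ℂ)) μ ∧
    ∫ ω, B ω * (g ω : ℂ) ∂μ = ∫ ω, B ω * (g' ω : ℂ) ∂μ := by
  have hi : Integrable (fun ω => B ω * (g ω : ℂ)) μ :=
    hg.ofReal.bdd_mul (hB.mono hm).aestronglyMeasurable hK
  refine ⟨hi, ?_⟩
  let L : ℂ →L[ℝ] ℝ →L[ℝ] ℂ := (ContinuousLinearMap.lsmul ℝ ℝ (E := ℂ)).flip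
  have hL : ∀ z r, L z r = z * (r : ℂ) := by
    intro z r; simp [L, mul_comm]
  have h := condExp_bilin_of_stronglyMeasurable_left (μ := μ) L hB (g := g) (by simpa [hL] using hi) hg
  simp only [hL] at h
  rw [← integral_condExp hm]
  refine integral_congr_ae ?_
  filter_upwards [h, hg'] with ω h1 h2
  rw [h1, h2]

lemma aux_step {Ω : Type*} {m mΩ : MeasurableSpace Ω} (hm : m ≤ mΩ) (μ : Measure Ω)
    [IsProbabilityMeasure μ] (B : Ω → ℂ) (hB : StronglyMeasurable[m] B) (K : ℝ)
    (hK : ∀ᵐ ω ∂μ, ‖B ω‖ ≤ K) (D s v : Ω → ℝ) (C R ε a : ℝ)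
    (hD : MemLp D 2 μ) (hD0 : μ[D | m] =ᵐ[μ] 0) (hD2 : μ[fun ω => D ω ^ 2 | m] =ᵐ[μ] s)
    (hsm : StronglyMeasurable[m] s)
    (hs0 : ∀ ω, 0 ≤ s ω) (hsC : ∀ ω, s ω ≤ C) (hR : 0 ≤ R)
    (hv : Integrable (fun ω => v ω ^ 2) μ) (hvε : ∫ ω, v ω ^ 2 ∂μ ≤ ε)
    (hDv : ∀ᵐ ω ∂μ, |D ω| ≤ R + |v ω|) :
    ‖∫ ω, B ω * (Complex.exp (Complex.I * (a * D ω : ℝ)) - Complex.exp (-(a ^ 2 * s ω / 2 : ℝ))) ∂μ‖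
      ≤ K * (4 * a ^ 2 * (4 * ε + 8 * |a| * R ^ 3) + a ^ 4 * C ^ 2 / 4) := by
  have hK0 : 0 ≤ K := by
    obtain ⟨ω, h⟩ := hK.exists
    exact (norm_nonneg _).trans h
  have hDi : Integrable D μ := hD.integrable (by norm_num)
  have hD2i : Integrable (fun ω => D ω ^ 2) μ := hD.integrable_sq
  obtain ⟨i1, e1⟩ := aux_pull hm μ B hB K hK D 0 hDi hD0
  obtain ⟨i2, e2⟩ := aux_pull hm μ B hB K hK _ s hD2i hD2
  have hBs : Integrable (fun ω => B ω * (s ω : ℂ)) μ := by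
    have : Integrable s μ := integrable_condExp.congr hD2
    exact this.ofReal.bdd_mul (hB.mono hm).aestronglyMeasurable hK
  -- the remainder
  let r : Ω → ℂ := fun ω => B ω * ((Complex.exp (Complex.I * (a * D ω : ℝ)) - 1 - Complex.I * (a * D ω : ℝ)
      + (a * D ω : ℝ) ^ 2 / 2) + (1 - (a ^ 2 * s ω / 2 : ℝ) - Complex.exp (-(a ^ 2 * s ω / 2 : ℝ))))
  have hdec : ∀ ω, B ω * (Complex.exp (Complex.I * (a * D ω : ℝ)) - Complex.exp (-(a ^ 2 * s ω / 2 : ℝ)))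
      = r ω + ((Complex.I * a) * (B ω * (D ω : ℂ)) - (a ^ 2 / 2 : ℂ) * (B ω * ((D ω ^ 2 : ℝ) : ℂ))
        + (a ^ 2 / 2 : ℂ) * (B ω * (s ω : ℂ))) := by
    intro ω; simp only [r]; push_cast; ring
  have hBm := (hB.mono hm).aestronglyMeasurable (μ := μ)
  have hDm := hD.aestronglyMeasurable
  have hsm' := (hsm.mono hm).aestronglyMeasurable (μ := μ)
  have hrb : ∀ᵐ ω ∂μ, ‖r ω‖ ≤ K * (4 * a ^ 2 * (4 * v ω ^ 2 + 8 * |a| * R ^ 3) + a ^ 4 * C ^ 2 / 4) := by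
    filter_upwards [hK, hDv] with ω hk hd
    simp only [r]
    rw [norm_mul]
    refine mul_le_mul hk ?_ (norm_nonneg _) hK0
    refine (norm_add_le _ _).trans (add_le_add ?_ ?_)
    · refine (aux_taylor _).trans ?_
      rw [mul_assoc 4]
      refine mul_le_mul_of_nonneg_left ?_ (by norm_num)
      have ha := abs_nonneg a
      have hd0 := abs_nonneg (D ω)
      rcases le_total R |v ω| with h | h
      · refine (min_le_left _ _).trans ?_
        have : D ω ^ 2 ≤ 4 * v ω ^ 2 := by
          rw [← sq_abs (D ω), ← sq_abs (v ω)]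
          nlinarith
        have h3 : 0 ≤ 8 * |a| * R ^ 3 := by positivity
        rw [mul_pow]
        exact mul_le_mul_of_nonneg_left (by linarith) (sq_nonneg a)
      · refine (min_le_right _ _).trans ?_
        have : |D ω| ^ 3 ≤ (2 * R) ^ 3 := pow_le_pow_left₀ hd0 (by linarith) 3
        rw [abs_mul, mul_pow]
        calc |a| ^ 3 * |D ω| ^ 3 ≤ |a| ^ 3 * (2 * R) ^ 3 := by gcongr
          _ = a ^ 2 * (8 * |a| * R ^ 3) := by rw [← sq_abs a]; ring
          _ ≤ _ := by
            refine mul_le_mul_of_nonneg_left ?_ (sq_nonneg a)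
            nlinarith [sq_nonneg (v ω)]
    · have hq : 0 ≤ a ^ 2 * s ω / 2 := by have := hs0 ω; positivity
      refine (aux_exp _ hq).trans ?_
      have : a ^ 2 * s ω / 2 ≤ a ^ 2 * C / 2 := by have := hsC ω; gcongr
      calc (a ^ 2 * s ω / 2) ^ 2 ≤ (a ^ 2 * C / 2) ^ 2 := by gcongr
        _ = _ := by ring
  have hbi : Integrable (fun ω => K * (4 * a ^ 2 * (4 * v ω ^ 2 + 8 * |a| * R ^ 3) + a ^ 4 * C ^ 2 / 4)) μ := by
    fun_prop
  have hrm : AEStronglyMeasurable r μ := by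
    have hD' := hDm.aemeasurable
    have hs' := hsm'.aemeasurable
    have hB' := hBm.aemeasurable
    apply AEMeasurable.aestronglyMeasurable
    fun_prop
  have hri : Integrable r μ := hbi.mono' hrm hrb
  simp_rw [hdec]
  rw [integral_add hri, integral_add, integral_sub, integral_const_mul, integral_const_mul,
    integral_const_mul, e1, e2]
  rotate_left
  · exact i1.const_mul _
  · exact i2.const_mul _
  · exact (i1.const_mul _).sub (i2.const_mul _)
  · exact hBs.const_mul _
  · exact ((i1.const_mul _).sub (i2.const_mul _)).add (hBs.const_mul _)
  simp only [Pi.zero_apply, Complex.ofReal_zero, mul_zero, integral_zero, zero_sub, neg_add_cancel,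
    add_zero]
  refine (norm_integral_le_of_norm_le hbi hrb).trans ?_
  rw [integral_const_mul, integral_add (by fun_prop) (by fun_prop), integral_const_mul,
    integral_add (by fun_prop) (by fun_prop), integral_const_mul]
  simp only [integral_const, probReal_univ, smul_eq_mul, one_mul]
  gcongr

structure MDSeq {Ω : Type*} {mΩ : MeasurableSpace Ω} (μ : Measure Ω) (𝒢 : Filtration ℕ mΩ)
    (D s : ℕ → Ω → ℝ) (C : ℝ) : Prop where
  memLp : ∀ k, MemLp (D k) 2 μ
  meas : ∀ k, StronglyMeasurable[𝒢 (k + 1)] (D k)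
  smeas : ∀ k, StronglyMeasurable[𝒢 k] (s k)
  s0 : ∀ k ω, 0 ≤ s k ω
  sC : ∀ k ω, s k ω ≤ C
  D0 : ∀ k, μ[D k | 𝒢 k] =ᵐ[μ] 0
  D2 : ∀ k, μ[fun ω => D k ω ^ 2 | 𝒢 k] =ᵐ[μ] s k
  ui : ∀ ε > 0, ∃ R, 0 ≤ R ∧ ∀ k, ∃ v : Ω → ℝ, Integrable (fun ω => v ω ^ 2) μ ∧
    ∫ ω, v ω ^ 2 ∂μ ≤ ε ∧ ∀ᵐ ω ∂μ, |D k ω| ≤ R + |v ω|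

noncomputable def Zf {Ω : Type*} (D s : ℕ → Ω → ℝ) (t : ℝ) (n k : ℕ) (ω : Ω) : ℂ :=
  Complex.exp (Complex.I * (t / √n * ∑ j ∈ Finset.range k, D j ω : ℝ)
    + ((t / √n) ^ 2 / 2 * ∑ j ∈ Finset.range k, s j ω : ℝ))

section core
variable {Ω : Type*} {mΩ : MeasurableSpace Ω} {μ : Measure Ω} [IsProbabilityMeasure μ]
  {𝒢 : Filtration ℕ mΩ} {D s : ℕ → Ω → ℝ} {C : ℝ}

lemma MDSeq.sum_meas (h : MDSeq μ 𝒢 D s C) (k : ℕ) :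
    StronglyMeasurable[𝒢 k] (fun ω => ∑ j ∈ Finset.range k, D j ω) := by
  refine Finset.stronglyMeasurable_fun_sum _ fun j hj => (h.meas j).mono (𝒢.mono ?_)
  have := Finset.mem_range.1 hj
  omega

lemma MDSeq.sum_smeas (h : MDSeq μ 𝒢 D s C) (k l : ℕ) (hkl : k ≤ l + 1) :
    StronglyMeasurable[𝒢 l] (fun ω => ∑ j ∈ Finset.range k, s j ω) := by
  refine Finset.stronglyMeasurable_fun_sum _ fun j hj => (h.smeas j).mono (𝒢.mono ?_)
  have := Finset.mem_range.1 hj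
  omega

lemma MDSeq.Z_meas (h : MDSeq μ 𝒢 D s C) (t : ℝ) (n k : ℕ) :
    StronglyMeasurable[𝒢 k] (Zf D s t n k) := by
  have h1 := (h.sum_meas k).measurable
  have h2 := (h.sum_smeas k k (by omega)).measurable
  apply Measurable.stronglyMeasurable
  unfold Zf
  fun_prop

lemma aux_t (t : ℝ) (n : ℕ) (hn : n ≠ 0) : n * (t / √n) ^ 2 = t ^ 2 := by
  have : (0:ℝ) < n := by positivity
  rw [div_pow, Real.sq_sqrt this.le]
  field_simp

lemma MDSeq.Z_bound (h : MDSeq μ 𝒢 D s C) (t : ℝ) (n k : ℕ) (hk : k ≤ n) (ω : Ω) :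
    Real.exp ((t / √n) ^ 2 / 2 * ∑ j ∈ Finset.range k, s j ω) ≤ Real.exp (t ^ 2 * C / 2) := by
  rw [Real.exp_le_exp]
  have hC : 0 ≤ C := (h.s0 0 ω).trans (h.sC 0 ω)
  have h1 : ∑ j ∈ Finset.range k, s j ω ≤ n * C := by
    calc ∑ j ∈ Finset.range k, s j ω ≤ ∑ j ∈ Finset.range k, C := Finset.sum_le_sum fun j _ => h.sC j ω
      _ = k * C := by simp
      _ ≤ n * C := by gcongr
  rcases eq_or_ne n 0 with rfl | hn
  · simp; positivity
  · calc (t / √n) ^ 2 / 2 * ∑ j ∈ Finset.range k, s j ω ≤ (t / √n) ^ 2 / 2 * (n * C) := by gcongr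
      _ = (n * (t / √n) ^ 2) * C / 2 := by ring
      _ = _ := by rw [aux_t t n hn]

lemma Zf_norm (t : ℝ) (n k : ℕ) (ω : Ω) :
    ‖Zf D s t n k ω‖ = Real.exp ((t / √n) ^ 2 / 2 * ∑ j ∈ Finset.range k, s j ω) := by
  unfold Zf
  rw [Complex.norm_exp]
  congr 1
  rw [Complex.add_re, Complex.ofReal_re, Complex.re_mul_ofReal]
  simp

lemma MDSeq.Zf_le (h : MDSeq μ 𝒢 D s C) (t : ℝ) (n k : ℕ) (hk : k ≤ n) (ω : Ω) :
    ‖Zf D s t n k ω‖ ≤ Real.exp (t ^ 2 * C / 2) := by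
  rw [Zf_norm]; exact h.Z_bound t n k hk ω

lemma MDSeq.Zf_aesm (h : MDSeq μ 𝒢 D s C) (t : ℝ) (n k : ℕ) :
    AEStronglyMeasurable (Zf D s t n k) μ :=
  ((h.Z_meas t n k).mono (𝒢.le k)).aestronglyMeasurable

lemma MDSeq.Z_step (h : MDSeq μ 𝒢 D s C) (t : ℝ) (n k m : ℕ) (hk : k < n) (hmk : m ≤ k)
    (ξ : Ω → ℝ) (hξm : StronglyMeasurable[𝒢 m] ξ) (hξ : ∀ᵐ ω ∂μ, |ξ ω| ≤ 1) (ε R : ℝ) (hR : 0 ≤ R)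
    (v : Ω → ℝ)
    (hv : Integrable (fun ω => v ω ^ 2) μ) (hvε : ∫ ω, v ω ^ 2 ∂μ ≤ ε)
    (hDv : ∀ᵐ ω ∂μ, |D k ω| ≤ R + |v ω|) :
    ‖∫ ω, (ξ ω : ℂ) * (Zf D s t n (k + 1) ω - Zf D s t n k ω) ∂μ‖ ≤
      Real.exp (t ^ 2 * C / 2) * (4 * (t / √n) ^ 2 * (4 * ε + 8 * |t / √n| * R ^ 3)
        + (t / √n) ^ 4 * C ^ 2 / 4) := by
  let B : Ω → ℂ := fun ω => ξ ω * Zf D s t n k ω * Complex.exp (((t / √n) ^ 2 * s k ω / 2 : ℝ))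
  have hBm : StronglyMeasurable[𝒢 k] B := by
    have h1 := (h.Z_meas t n k).measurable
    have h2 := (h.smeas k).measurable
    have h3 := (hξm.mono (𝒢.mono hmk)).measurable
    apply Measurable.stronglyMeasurable
    fun_prop
  have hBK : ∀ᵐ ω ∂μ, ‖B ω‖ ≤ Real.exp (t ^ 2 * C / 2) := by
    filter_upwards [hξ] with ω hω
    simp only [B, norm_mul, Zf_norm, Complex.norm_real, Real.norm_eq_abs, Complex.norm_exp_ofReal]
    have := h.Z_bound t n (k + 1) hk ω
    rw [Finset.sum_range_succ, mul_add, Real.exp_add] at this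
    rw [show (t / √n) ^ 2 * s k ω / 2 = (t / √n) ^ 2 / 2 * s k ω by ring, mul_assoc]
    exact (mul_le_of_le_one_left (by positivity) hω).trans this
  have := aux_step (𝒢.le k) μ B hBm _ hBK (D k) (s k) v C R ε (t / √n) (h.memLp k) (h.D0 k) (h.D2 k)
    (h.smeas k) (h.s0 k) (h.sC k) hR hv hvε hDv
  refine le_trans (le_of_eq ?_) this
  congr 2
  ext ω
  simp only [B]
  have e1 : Zf D s t n (k + 1) ω = Zf D s t n k ω * Complex.exp (((t / √n) ^ 2 * s k ω / 2 : ℝ))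
      * Complex.exp (Complex.I * (t / √n * D k ω : ℝ)) := by
    simp only [Zf, Finset.sum_range_succ, ← Complex.exp_add]
    congr 1
    push_cast
    ring
  rw [e1, Complex.exp_neg]
  field_simp [Complex.exp_ne_zero]

lemma MDSeq.Z_fixed (h : MDSeq μ 𝒢 D s C) (t : ℝ) (m : ℕ)
    (ξ : Ω → ℝ) (hξm : StronglyMeasurable[𝒢 m] ξ) (hξ : ∀ᵐ ω ∂μ, |ξ ω| ≤ 1) :
    Tendsto (fun n => ∫ ω, (ξ ω : ℂ) * Zf D s t n n ω ∂μ) atTop (nhds (∫ ω, (ξ ω : ℂ) ∂μ)) := by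
  have hξa : AEStronglyMeasurable (fun ω => (ξ ω : ℂ)) μ :=
    Complex.continuous_ofReal.comp_aestronglyMeasurable (hξm.mono (𝒢.le m)).aestronglyMeasurable
  have hsq : Tendsto (fun n : ℕ => t / √n) atTop (nhds 0) :=
    tendsto_const_nhds.div_atTop (Real.tendsto_sqrt_atTop.comp tendsto_natCast_atTop_atTop)
  have hint : ∀ n k, k ≤ n → Integrable (fun ω => (ξ ω : ℂ) * Zf D s t n k ω) μ := by
    intro n k hk
    refine Integrable.of_bound (hξa.mul (h.Zf_aesm t n k)) (1 * Real.exp (t ^ 2 * C / 2)) ?_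
    filter_upwards [hξ] with ω hω
    rw [norm_mul, Complex.norm_real]
    exact mul_le_mul hω (h.Zf_le t n k hk ω) (norm_nonneg _) zero_le_one
  have h1 : Tendsto (fun n => ∫ ω, (ξ ω : ℂ) * Zf D s t n m ω ∂μ) atTop (nhds (∫ ω, (ξ ω : ℂ) ∂μ)) := by
    refine tendsto_integral_filter_of_dominated_convergence (fun _ => 1 * Real.exp (t ^ 2 * C / 2))
      (Eventually.of_forall fun n => hξa.mul (h.Zf_aesm t n m)) ?_ (integrable_const _) ?_
    · filter_upwards [eventually_ge_atTop m] with n hn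
      filter_upwards [hξ] with ω hω
      rw [norm_mul, Complex.norm_real]
      exact mul_le_mul hω (h.Zf_le t n m hn ω) (norm_nonneg _) zero_le_one
    · refine Eventually.of_forall fun ω => ?_
      have : Continuous fun a : ℝ => (ξ ω : ℂ) * Complex.exp (Complex.I * (a * ∑ j ∈ Finset.range m, D j ω : ℝ)
        + (a ^ 2 / 2 * ∑ j ∈ Finset.range m, s j ω : ℝ)) := by fun_prop
      have := (this.tendsto 0).comp hsq
      simpa [Function.comp_def, Zf] using this
  have h2 : Tendsto (fun n => ∫ ω, (ξ ω : ℂ) * Zf D s t n n ω ∂μ - ∫ ω, (ξ ω : ℂ) * Zf D s t n m ω ∂μ)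
      atTop (nhds 0) := by
    rw [Metric.tendsto_atTop']
    intro δ hδ
    set M := Real.exp (t ^ 2 * C / 2) with hM
    have hMp : 0 < M := Real.exp_pos _
    obtain ⟨ε, hε, hε'⟩ : ∃ ε > 0, M * (16 * t ^ 2 * ε) < δ / 2 := by
      refine ⟨δ / 2 / (M * (16 * t ^ 2) + 1), by positivity, ?_⟩
      rw [← mul_assoc, mul_div_assoc', div_lt_iff₀ (by positivity)]
      nlinarith
    obtain ⟨R, hR, hv⟩ := h.ui ε hε
    have hl : Tendsto (fun n : ℕ => M * (4 * t ^ 2 * (4 * ε + 8 * |t / √n| * R ^ 3)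
        + t ^ 2 * (t / √n) ^ 2 * C ^ 2 / 4)) atTop (nhds (M * (4 * t ^ 2 * (4 * ε + 8 * |0| * R ^ 3)
        + t ^ 2 * 0 ^ 2 * C ^ 2 / 4))) := by
      have : Continuous fun a : ℝ => M * (4 * t ^ 2 * (4 * ε + 8 * |a| * R ^ 3)
        + t ^ 2 * a ^ 2 * C ^ 2 / 4) := by fun_prop
      exact (this.tendsto 0).comp hsq
    have hev := hl.eventually_lt_const (u := δ) (by
      simp only [abs_zero]
      nlinarith)
    obtain ⟨N, hN⟩ := eventually_atTop.1 hev
    refine ⟨max N (m + 1), fun n hn => ?_⟩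
    have hnN : N ≤ n := (le_max_left _ _).trans hn.le
    have hnm : m ≤ n := by have := (le_max_right N (m+1)).trans hn.le; omega
    have hn0 : n ≠ 0 := by have := (le_max_right N (m+1)).trans hn.le; omega
    rw [dist_zero_right]
    refine lt_of_le_of_lt ?_ (hN n hnN)
    have htel : ∫ ω, (ξ ω : ℂ) * Zf D s t n n ω ∂μ - ∫ ω, (ξ ω : ℂ) * Zf D s t n m ω ∂μ
        = ∑ k ∈ Finset.Ico m n, ∫ ω, (ξ ω : ℂ) * (Zf D s t n (k + 1) ω - Zf D s t n k ω) ∂μ := by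
      rw [← Finset.sum_Ico_sub (fun k => ∫ ω, (ξ ω : ℂ) * Zf D s t n k ω ∂μ) hnm]
      refine Finset.sum_congr rfl fun k hk => ?_
      have := Finset.mem_Ico.1 hk
      rw [← integral_sub (hint n _ (by omega)) (hint n _ (by omega))]
      simp only [mul_sub]
    rw [htel]
    refine (norm_sum_le _ _).trans ?_
    have hb : ∀ k ∈ Finset.Ico m n, ‖∫ ω, (ξ ω : ℂ) * (Zf D s t n (k + 1) ω - Zf D s t n k ω) ∂μ‖ ≤
      M * (4 * (t / √n) ^ 2 * (4 * ε + 8 * |t / √n| * R ^ 3)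
        + (t / √n) ^ 4 * C ^ 2 / 4) := by
      intro k hk
      have := Finset.mem_Ico.1 hk
      obtain ⟨v, hv1, hv2, hv3⟩ := hv k
      exact h.Z_step t n k m this.2 this.1 ξ hξm hξ ε R hR v hv1 hv2 hv3
    refine (Finset.sum_le_card_nsmul _ _ _ hb).trans ?_
    rw [nsmul_eq_mul, Nat.card_Ico]
    have hc : ((n - m : ℕ) : ℝ) ≤ n := by exact_mod_cast Nat.sub_le n m
    refine (mul_le_mul_of_nonneg_right hc (by positivity)).trans (le_of_eq ?_)
    have := aux_t t n hn0
    rw [← this]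
    ring
  have := h1.add h2
  simpa using this

lemma MDSeq.Z_all (h : MDSeq μ 𝒢 D s C) (t : ℝ)
    (ξ : Ω → ℝ) (hξi : Integrable ξ μ) (hξ : ∀ᵐ ω ∂μ, |ξ ω| ≤ 1) :
    Tendsto (fun n => ∫ ω, (ξ ω : ℂ) * Zf D s t n n ω ∂μ) atTop (nhds (∫ ω, (ξ ω : ℂ) ∂μ)) := by
  set M := Real.exp (t ^ 2 * C / 2) with hM
  have hMp : 0 < M := Real.exp_pos _
  have hT := tendsto_eLpNorm_condExp (μ := μ) (ℱ := 𝒢) ξ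
  have hE : ∀ n, ∫ ω, (ξ ω : ℂ) * Zf D s t n n ω ∂μ = ∫ ω, ((μ[ξ | 𝒢 n]) ω : ℂ) * Zf D s t n n ω ∂μ := by
    intro n
    have := (aux_pull (𝒢.le n) μ (Zf D s t n n) (h.Z_meas t n n) M
      (Eventually.of_forall (h.Zf_le t n n le_rfl)) ξ _ hξi (EventuallyEq.refl _ _)).2
    simpa [mul_comm] using this
  rw [Metric.tendsto_atTop']
  intro δ hδ
  set g := μ[ξ | ⨆ n, 𝒢 n] with hg
  have hgi : Integrable g μ := integrable_condExp
  have hd : Tendsto (fun n => ∫ ω, |(μ[ξ | 𝒢 n]) ω - g ω| ∂μ) atTop (nhds 0) := by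
    have := (ENNReal.tendsto_toReal ENNReal.zero_ne_top).comp hT
    simp only [ENNReal.toReal_zero] at this
    refine this.congr fun n => ?_
    simp only [Function.comp]
    rw [eLpNorm_one_eq_lintegral_enorm, ← integral_norm_eq_lintegral_enorm]
    · rfl
    · exact (integrable_condExp.sub hgi).aestronglyMeasurable
  obtain ⟨m, hm⟩ := eventually_atTop.1 (hd.eventually_lt_const (u := δ / 3 / M) (by positivity))
  have hξm : ∀ᵐ ω ∂μ, |(μ[ξ | 𝒢 m]) ω| ≤ 1 := by
    exact ae_bdd_abs_condExp_of_ae_bdd_abs hξ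
  have hF := h.Z_fixed t m (μ[ξ | 𝒢 m]) stronglyMeasurable_condExp hξm
  have hmean : ∫ ω, ((μ[ξ | 𝒢 m]) ω : ℂ) ∂μ = ∫ ω, (ξ ω : ℂ) ∂μ := by
    rw [integral_complex_ofReal, integral_complex_ofReal, integral_condExp (𝒢.le m)]
  rw [hmean, Metric.tendsto_atTop'] at hF
  obtain ⟨N, hN⟩ := hF (δ / 3) (by positivity)
  refine ⟨max N m, fun n hn => ?_⟩
  have h1 := hN n ((le_max_left _ _).trans_lt hn)
  have hmn : m ≤ n := (le_max_right _ _).trans hn.le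
  rw [hE]
  refine (dist_triangle _ _ _).trans_lt ((add_lt_add_right h1 _).trans_le ?_)
  have hint : ∀ k, Integrable (fun ω => ((μ[ξ | 𝒢 k]) ω : ℂ) * Zf D s t n n ω) μ := by
    intro k
    exact (integrable_condExp (m := 𝒢 k) (f := ξ)).ofReal.mul_bdd (c := M) (h.Zf_aesm t n n)
      (Eventually.of_forall (h.Zf_le t n n le_rfl))
  have : dist (∫ ω, ((μ[ξ | 𝒢 n]) ω : ℂ) * Zf D s t n n ω ∂μ) (∫ ω, ((μ[ξ | 𝒢 m]) ω : ℂ) * Zf D s t n n ω ∂μ)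
      ≤ δ / 3 + δ / 3 := by
    rw [dist_eq_norm, ← integral_sub (hint n) (hint m)]
    have i1 : ∀ k, Integrable (fun ω => |(μ[ξ | 𝒢 k]) ω - g ω|) μ := fun k =>
      (integrable_condExp.sub hgi).abs
    have hb : ∀ᵐ ω ∂μ, ‖((μ[ξ | 𝒢 n]) ω : ℂ) * Zf D s t n n ω - ((μ[ξ | 𝒢 m]) ω : ℂ) * Zf D s t n n ω‖ ≤
        (|(μ[ξ | 𝒢 n]) ω - g ω| + |(μ[ξ | 𝒢 m]) ω - g ω|) * M := by
      refine Eventually.of_forall fun ω => ?_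
      rw [← sub_mul, norm_mul, ← Complex.ofReal_sub, Complex.norm_real, Real.norm_eq_abs]
      refine mul_le_mul ?_ (h.Zf_le t n n le_rfl ω) (norm_nonneg _) (by positivity)
      have := abs_sub_le ((μ[ξ | 𝒢 n]) ω) (g ω) ((μ[ξ | 𝒢 m]) ω)
      rwa [abs_sub_comm (g ω)] at this
    refine (norm_integral_le_of_norm_le (((i1 n).add (i1 m)).mul_const M) hb).trans ?_
    rw [integral_mul_const]
    erw [integral_add (i1 n) (i1 m)]
    have a1 := hm n hmn
    have a2 := hm m le_rfl
    rw [lt_div_iff₀ hMp] at a1 a2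
    linarith
  linarith

lemma MDSeq.core (h : MDSeq μ 𝒢 D s C) (t : ℝ) (ξ L : Ω → ℝ)
    (hL : ∀ᵐ ω ∂μ, Tendsto (fun k => s k ω) atTop (nhds (L ω)))
    (hξi : AEStronglyMeasurable ξ μ) (hξ : ∀ᵐ ω ∂μ, |ξ ω| ≤ 1) :
    Tendsto (fun n : ℕ => ∫ ω, (ξ ω : ℂ) * Complex.exp (Complex.I *
        (t * ((∑ k ∈ Finset.range n, D k ω) / √n) : ℝ)) ∂μ) atTop
      (nhds (∫ ω, (ξ ω : ℂ) * Complex.exp ((-(t ^ 2 * L ω / 2) : ℝ)) ∂μ)) := by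
  have hLm : AEMeasurable L μ := aemeasurable_of_tendsto_metrizable_ae atTop
    (fun k => ((h.smeas k).mono (𝒢.le k)).aestronglyMeasurable.aemeasurable) hL
  have hL0 : ∀ᵐ ω ∂μ, 0 ≤ L ω := by
    filter_upwards [hL] with ω hω
    exact ge_of_tendsto' hω fun k => h.s0 k ω
  have hξm := hξi.aemeasurable
  set M := Real.exp (t ^ 2 * C / 2) with hM
  let ξ' : Ω → ℝ := fun ω => ξ ω * Real.exp (-(t ^ 2 * L ω / 2))
  have hξ'm : AEStronglyMeasurable ξ' μ := by
    apply AEMeasurable.aestronglyMeasurable; fun_prop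
  have hξ' : ∀ᵐ ω ∂μ, |ξ' ω| ≤ 1 := by
    filter_upwards [hξ, hL0] with ω h1 h2
    simp only [ξ', abs_mul, Real.abs_exp]
    refine mul_le_one₀ h1 (Real.exp_pos _).le (Real.exp_le_one_iff.2 ?_)
    have : 0 ≤ t ^ 2 * L ω / 2 := by positivity
    linarith
  have hA := h.Z_all t ξ' (Integrable.of_bound hξ'm 1 hξ') hξ'
  let F : ℕ → Ω → ℂ := fun n ω => (ξ ω : ℂ) * Zf D s t n n ω *
    ((Real.exp (-((t / √n) ^ 2 / 2 * ∑ j ∈ Finset.range n, s j ω)) - Real.exp (-(t ^ 2 * L ω / 2)) : ℝ) : ℂ)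
  have hFm : ∀ n, AEStronglyMeasurable (F n) μ := by
    intro n
    have a := (h.Zf_aesm t n n).aemeasurable
    have b := ((h.sum_smeas n n (by omega)).mono (𝒢.le n)).aestronglyMeasurable.aemeasurable (μ := μ)
    apply AEMeasurable.aestronglyMeasurable
    fun_prop
  have hFb : ∀ n, ∀ᵐ ω ∂μ, ‖F n ω‖ ≤ 1 * M * 1 := by
    intro n
    filter_upwards [hξ, hL0] with ω h1 h2
    simp only [F, norm_mul, Complex.norm_real, Real.norm_eq_abs]
    refine mul_le_mul (mul_le_mul h1 (h.Zf_le t n n le_rfl ω) (norm_nonneg _) zero_le_one) ?_ (abs_nonneg _) (by positivity)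
    have e1 : Real.exp (-(t ^ 2 * L ω / 2)) ≤ 1 := by
      rw [Real.exp_le_one_iff]
      have : 0 ≤ t ^ 2 * L ω / 2 := by positivity
      linarith
    have e2 : Real.exp (-((t / √n) ^ 2 / 2 * ∑ j ∈ Finset.range n, s j ω)) ≤ 1 := by
      rw [Real.exp_le_one_iff]
      have : 0 ≤ ∑ j ∈ Finset.range n, s j ω := Finset.sum_nonneg fun j _ => h.s0 j ω
      have : 0 ≤ (t / √n) ^ 2 / 2 * ∑ j ∈ Finset.range n, s j ω := by positivity
      linarith
    rw [abs_le]
    constructor <;> linarith [Real.exp_pos (-(t ^ 2 * L ω / 2)),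
      Real.exp_pos (-((t / √n) ^ 2 / 2 * ∑ j ∈ Finset.range n, s j ω))]
  have hF : Tendsto (fun n => ∫ ω, F n ω ∂μ) atTop (nhds (∫ ω, (0:ℂ) ∂μ)) := by
    refine tendsto_integral_of_dominated_convergence (fun _ => 1 * M * 1) hFm (integrable_const _) hFb ?_
    filter_upwards [hL, hξ] with ω h1 h2
    have hc := h1.cesaro
    have hd : Tendsto (fun n : ℕ => Real.exp (-((t / √n) ^ 2 / 2 * ∑ j ∈ Finset.range n, s j ω))
        - Real.exp (-(t ^ 2 * L ω / 2))) atTop (nhds 0) := by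
      rw [← sub_self (Real.exp (-(t ^ 2 * L ω / 2)))]
      refine Tendsto.sub_const ?_ _
      refine (Real.continuous_exp.tendsto _).comp (Tendsto.neg ?_)
      have := (hc.const_mul (t ^ 2 / 2))
      rw [show t ^ 2 / 2 * L ω = t ^ 2 * L ω / 2 by ring] at this
      refine this.congr fun n => ?_
      rw [div_pow, Real.sq_sqrt (Nat.cast_nonneg n)]
      ring
    rw [tendsto_zero_iff_norm_tendsto_zero]
    have hd' := (hd.abs).const_mul M
    simp only [abs_zero, mul_zero] at hd'
    refine squeeze_zero (fun _ => norm_nonneg _) (fun n => ?_) hd'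
    simp only [F, norm_mul, Complex.norm_real, Real.norm_eq_abs]
    refine mul_le_mul_of_nonneg_right ?_ (abs_nonneg _)
    calc _ ≤ 1 * M := mul_le_mul h2 (h.Zf_le t n n le_rfl ω) (norm_nonneg _) zero_le_one
      _ = M := one_mul _
  have hsum := hF.add hA
  simp only [integral_zero, zero_add] at hsum
  have hlim : ∫ ω, (ξ' ω : ℂ) ∂μ = ∫ ω, (ξ ω : ℂ) * Complex.exp ((-(t ^ 2 * L ω / 2) : ℝ)) ∂μ := by
    simp only [ξ', Complex.ofReal_mul, Complex.ofReal_exp]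
  rw [hlim] at hsum
  refine hsum.congr fun n => ?_
  rw [← integral_add (Integrable.of_bound (hFm n) _ (hFb n))]
  · congr 1
    ext ω
    simp only [F, ξ', Zf, Complex.ofReal_mul, Complex.ofReal_sub, Complex.ofReal_exp]
    have : Complex.exp (Complex.I * (t * ((∑ k ∈ Finset.range n, D k ω) / √n) : ℝ)) =
      Complex.exp (Complex.I * (t / √n * ∑ j ∈ Finset.range n, D j ω : ℝ)
    + ((t / √n) ^ 2 / 2 * ∑ j ∈ Finset.range n, s j ω : ℝ)) *
      Complex.exp ((-((t / √n) ^ 2 / 2 * ∑ j ∈ Finset.range n, s j ω) : ℝ)) := by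
      rw [← Complex.exp_add]
      congr 1
      push_cast
      ring
    push_cast at this ⊢
    rw [this]
    ring
  · refine Integrable.of_bound ((Complex.continuous_ofReal.comp_aestronglyMeasurable hξ'm).mul (h.Zf_aesm t n n)) (1 * M) ?_
    filter_upwards [hξ'] with ω hω
    rw [norm_mul, Complex.norm_real]
    exact mul_le_mul hω (h.Zf_le t n n le_rfl ω) (norm_nonneg _) zero_le_one

end core

section trunc
variable {Ω : Type*} {mΩ : MeasurableSpace Ω} {μ : Measure Ω} [IsProbabilityMeasure μ]
  {𝒢 : Filtration ℕ mΩ}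

noncomputable def hC (C x : ℝ) : ℝ := √(C / max C x)

lemma hC_nonneg (C x : ℝ) : 0 ≤ hC C x := Real.sqrt_nonneg _

lemma hC_le_one {C : ℝ} (hC0 : 0 < C) (x : ℝ) : hC C x ≤ 1 := by
  unfold hC
  refine Real.sqrt_le_one.2 ?_
  rw [div_le_one (by positivity)]
  exact le_max_left _ _

lemma hC_sq {C : ℝ} (hC0 : 0 < C) (x : ℝ) : hC C x ^ 2 * x = min x C := by
  unfold hC
  rw [Real.sq_sqrt (by positivity)]
  rcases le_total x C with h | h
  · rw [max_eq_left h, min_eq_left h]; field_simp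
  · have : x ≠ 0 := by linarith
    rw [max_eq_right h, min_eq_right h]; field_simp

lemma hC_one {C : ℝ} (hC0 : 0 < C) {x : ℝ} (h : x ≤ C) : hC C x = 1 := by
  unfold hC
  rw [max_eq_left h, div_self hC0.ne', Real.sqrt_one]

lemma hC_meas (C : ℝ) : Measurable (hC C) := by unfold hC; fun_prop

lemma trunc_mds {D : ℕ → Ω → ℝ} (C : ℝ) (hC0 : 0 < C)
    (memLp : ∀ k, MemLp (D k) 2 μ)
    (meas : ∀ k, StronglyMeasurable[𝒢 (k + 1)] (D k))
    (D0 : ∀ k, μ[D k | 𝒢 k] =ᵐ[μ] 0)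
    (ui : ∀ ε > 0, ∃ R, 0 ≤ R ∧ ∀ k, ∃ v : Ω → ℝ, Integrable (fun ω => v ω ^ 2) μ ∧
      ∫ ω, v ω ^ 2 ∂μ ≤ ε ∧ ∀ᵐ ω ∂μ, |D k ω| ≤ R + |v ω|) :
    MDSeq μ 𝒢 (fun k ω => hC C ((μ[fun ω => D k ω ^ 2 | 𝒢 k]) ω) * D k ω)
      (fun k ω => min (max ((μ[fun ω => D k ω ^ 2 | 𝒢 k]) ω) 0) C) C := by
  have hqm : ∀ k, StronglyMeasurable[𝒢 k] (μ[fun ω => D k ω ^ 2 | 𝒢 k]) := fun k => stronglyMeasurable_condExp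
  have hhm : ∀ k, StronglyMeasurable[𝒢 k] (fun ω => hC C ((μ[fun ω => D k ω ^ 2 | 𝒢 k]) ω)) := fun k =>
    ((hC_meas C).comp (hqm k).measurable).stronglyMeasurable
  have hle : ∀ k ω, |hC C ((μ[fun ω => D k ω ^ 2 | 𝒢 k]) ω) * D k ω| ≤ |D k ω| := by
    intro k ω
    rw [abs_mul, abs_of_nonneg (hC_nonneg _ _)]
    exact mul_le_of_le_one_left (abs_nonneg _) (hC_le_one hC0 _)
  have hM : ∀ k, MemLp (fun ω => hC C ((μ[fun ω => D k ω ^ 2 | 𝒢 k]) ω) * D k ω) 2 μ := fun k =>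
    (memLp k).mono (((hhm k).mono (𝒢.le k)).aestronglyMeasurable.mul (memLp k).aestronglyMeasurable)
      (Eventually.of_forall (hle k))
  refine ⟨hM, ?_, ?_, ?_, ?_, ?_, ?_, ?_⟩
  · intro k
    exact ((hhm k).mono (𝒢.mono (Nat.le_succ k))).mul (meas k)
  · intro k
    have := (hqm k).measurable
    exact Measurable.stronglyMeasurable (by fun_prop)
  · intro k ω
    exact le_min (le_max_right _ _) hC0.le
  · intro k ω
    exact min_le_right _ _
  · intro k
    have := condExp_mul_of_stronglyMeasurable_left (μ := μ) (hhm k) (g := D k) ((hM k).integrable (by norm_num))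
      ((memLp k).integrable (by norm_num))
    refine EventuallyEq.trans this ?_
    filter_upwards [D0 k] with ω hω
    simp [hω]
  · intro k
    have hi := (hM k).integrable_sq
    have he : (fun ω => (hC C ((μ[fun ω => D k ω ^ 2 | 𝒢 k]) ω) * D k ω) ^ 2) =
      (fun ω => hC C ((μ[fun ω => D k ω ^ 2 | 𝒢 k]) ω) ^ 2) * (fun ω => D k ω ^ 2) := by
      ext ω; simp [mul_pow]
    rw [he] at hi
    have := condExp_mul_of_stronglyMeasurable_left (μ := μ) ((hhm k).pow 2) (g := fun ω => D k ω ^ 2) hi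
      (memLp k).integrable_sq
    show μ[fun ω => (hC C ((μ[fun ω => D k ω ^ 2 | 𝒢 k]) ω) * D k ω) ^ 2 | 𝒢 k] =ᵐ[μ] _
    rw [he]
    refine EventuallyEq.trans this ?_
    have hpos : 0 ≤ᵐ[μ] μ[fun ω => D k ω ^ 2 | 𝒢 k] :=
      condExp_nonneg (Eventually.of_forall fun ω => sq_nonneg _)
    filter_upwards [hpos] with ω hω
    simp only [Pi.mul_apply, Pi.pow_apply]
    rw [hC_sq hC0, max_eq_left (show (0:ℝ) ≤ _ from hω)]
  · intro ε hε
    obtain ⟨R, hR, h⟩ := ui ε hε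
    refine ⟨R, hR, fun k => ?_⟩
    obtain ⟨v, h1, h2, h3⟩ := h k
    refine ⟨v, h1, h2, ?_⟩
    filter_upwards [h3] with ω hω
    exact (hle k ω).trans hω

lemma cexp_neg_norm_le {x : ℝ} (hx : 0 ≤ x) : ‖Complex.exp ((-x : ℝ) : ℂ)‖ ≤ 1 := by
  rw [Complex.norm_exp_ofReal, Real.exp_le_one_iff]; linarith

lemma trunc_core {D : ℕ → Ω → ℝ} (memLp : ∀ k, MemLp (D k) 2 μ)
    (meas : ∀ k, StronglyMeasurable[𝒢 (k + 1)] (D k))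
    (D0 : ∀ k, μ[D k | 𝒢 k] =ᵐ[μ] 0)
    (ui : ∀ ε > 0, ∃ R, 0 ≤ R ∧ ∀ k, ∃ v : Ω → ℝ, Integrable (fun ω => v ω ^ 2) μ ∧
      ∫ ω, v ω ^ 2 ∂μ ≤ ε ∧ ∀ᵐ ω ∂μ, |D k ω| ≤ R + |v ω|)
    (t : ℝ) (ξ L : Ω → ℝ)
    (hL : ∀ᵐ ω ∂μ, Tendsto (fun k => (μ[fun ω => D k ω ^ 2 | 𝒢 k]) ω) atTop (nhds (L ω)))
    (hLm : Measurable L) (hL0 : ∀ ω, 0 ≤ L ω)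
    (hξi : Measurable ξ) (hξ : ∀ ω, |ξ ω| ≤ 1) :
    Tendsto (fun n : ℕ => ∫ ω, (ξ ω : ℂ) * Complex.exp (Complex.I *
        (t * ((∑ k ∈ Finset.range n, D k ω) / √n) : ℝ)) ∂μ) atTop
      (nhds (∫ ω, (ξ ω : ℂ) * Complex.exp ((-(t ^ 2 * L ω / 2) : ℝ)) ∂μ)) := by
  have hDm : ∀ k, Measurable (D k) := fun k => ((meas k).mono (𝒢.le _)).measurable
  let A : ℕ → Ω → ℂ := fun n ω => (ξ ω : ℂ) * Complex.exp (Complex.I *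
        (t * ((∑ k ∈ Finset.range n, D k ω) / √n) : ℝ)) - (ξ ω : ℂ) * Complex.exp ((-(t ^ 2 * L ω / 2) : ℝ))
  have iexp : ∀ f : Ω → ℝ, Measurable f → Integrable (fun ω => (ξ ω : ℂ) * Complex.exp (Complex.I * (f ω : ℝ))) μ := by
    intro f hf
    refine Integrable.of_bound (Measurable.aestronglyMeasurable (by fun_prop)) 1 (Eventually.of_forall fun ω => ?_)
    rw [norm_mul, Complex.norm_real, Complex.norm_exp_I_mul_ofReal, mul_one]
    exact hξ ω
  have iexp' : ∀ f : Ω → ℝ, Measurable f → (∀ ω, 0 ≤ f ω) →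
      Integrable (fun ω => (ξ ω : ℂ) * Complex.exp ((-(f ω) : ℝ))) μ := by
    intro f hf hf0
    refine Integrable.of_bound (Measurable.aestronglyMeasurable (by fun_prop)) 1 (Eventually.of_forall fun ω => ?_)
    rw [norm_mul, Complex.norm_real]
    exact mul_le_one₀ (hξ ω) (norm_nonneg _) (cexp_neg_norm_le (hf0 ω))
  have hAi : ∀ n, Integrable (A n) μ := fun n => by
    refine (iexp _ ?_).sub (iexp' _ ?_ ?_)
    · fun_prop
    · fun_prop
    · intro ω; have := hL0 ω; positivity
  -- choose the truncation level
  have hP : Tendsto (fun N : ℕ => μ.real {ω | (N : ℝ) ≤ L ω}) atTop (nhds 0) := by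
    have h1 := tendsto_measure_iInter_atTop (μ := μ) (s := fun N : ℕ => {ω | (N : ℝ) ≤ L ω})
      (fun N => (measurableSet_le measurable_const hLm).nullMeasurableSet)
      (fun a b hab ω hω => le_trans (Nat.cast_le (α := ℝ).2 hab) (show (b:ℝ) ≤ L ω from hω)) ⟨0, measure_ne_top _ _⟩
    have h2 : ⋂ N : ℕ, {ω | (N : ℝ) ≤ L ω} = ∅ := by
      ext ω
      simp only [Set.mem_iInter, Set.mem_setOf_eq, Set.mem_empty_iff_false, iff_false, not_forall, not_le]
      exact exists_nat_gt _
    rw [h2, measure_empty] at h1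
    have := (ENNReal.tendsto_toReal ENNReal.zero_ne_top).comp h1
    simpa [Function.comp_def, Measure.real] using this
  suffices hA : Tendsto (fun n => ∫ ω, A n ω ∂μ) atTop (nhds 0) by
    rw [tendsto_iff_norm_sub_tendsto_zero]
    rw [tendsto_zero_iff_norm_tendsto_zero] at hA
    refine hA.congr fun n => ?_
    simp only [A]
    rw [integral_sub]
    · exact iexp _ (by fun_prop)
    · exact iexp' (fun ω => t ^ 2 * L ω / 2) (by fun_prop) (fun ω => by have := hL0 ω; positivity)
  rw [Metric.tendsto_atTop']
  intro δ hδ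
  obtain ⟨N, hN⟩ := eventually_atTop.1 (hP.eventually_lt_const (u := δ / 16) (by positivity))
  have hN1 := hN (N + 1) (by omega)
  set C : ℝ := ((N + 1 : ℕ) : ℝ) with hCdef
  have hC0 : 0 < C := by positivity
  set D' : ℕ → Ω → ℝ := (fun k ω => hC C ((μ[fun ω => D k ω ^ 2 | 𝒢 k]) ω) * D k ω) with hD'
  have hmds := trunc_mds C hC0 memLp meas D0 ui
  rw [← hD'] at hmds
  have hD'm : ∀ k, Measurable (D' k) := fun k => ((hmds.meas k).mono (𝒢.le _)).measurable
  have hcore := hmds.core t ξ (fun ω => min (L ω) C) (by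
    filter_upwards [hL] with ω hω
    have := (hω.max (tendsto_const_nhds (x := (0:ℝ)))).min (tendsto_const_nhds (x := C))
    rwa [max_eq_left (hL0 ω)] at this) hξi.aestronglyMeasurable (Eventually.of_forall hξ)
  let A' : ℕ → Ω → ℂ := fun n ω => (ξ ω : ℂ) * Complex.exp (Complex.I *
        (t * ((∑ k ∈ Finset.range n, D' k ω) / √n) : ℝ)) -
        (ξ ω : ℂ) * Complex.exp ((-(t ^ 2 * min (L ω) C / 2) : ℝ))
  have hmin0 : ∀ ω, 0 ≤ min (L ω) C := fun ω => le_min (hL0 ω) hC0.le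
  have hA'i : ∀ n, Integrable (A' n) μ := fun n => by
    refine (iexp _ ?_).sub (iexp' _ ?_ ?_)
    · fun_prop
    · fun_prop
    · intro ω; have := hmin0 ω; positivity
  have hA' : Tendsto (fun n => ∫ ω, A' n ω ∂μ) atTop (nhds 0) := by
    have := hcore.sub_const (∫ ω, (ξ ω : ℂ) * Complex.exp ((-(t ^ 2 * min (L ω) C / 2) : ℝ)) ∂μ)
    rw [sub_self] at this
    refine this.congr fun n => ?_
    simp only [A']
    rw [integral_sub]
    · exact iexp _ (by fun_prop)
    · exact iexp' (fun ω => t ^ 2 * min (L ω) C / 2) (by fun_prop) (fun ω => by have := hmin0 ω; positivity)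
  let S : Set Ω := {ω | C ≤ L ω}
  have hS : MeasurableSet S := measurableSet_le measurable_const hLm
  have hbd : ∀ n ω, ‖A n ω - A' n ω‖ ≤ 4 := by
    intro n ω
    have hxi : ‖(ξ ω : ℂ)‖ ≤ 1 := by rw [Complex.norm_real]; exact hξ ω
    have b1 : ∀ r : ℝ, ‖(ξ ω : ℂ) * Complex.exp (Complex.I * (r : ℝ))‖ ≤ 1 := fun r => by
      rw [norm_mul, Complex.norm_exp_I_mul_ofReal, mul_one]; exact hxi
    have b2 : ∀ r : ℝ, 0 ≤ r → ‖(ξ ω : ℂ) * Complex.exp ((-r : ℝ))‖ ≤ 1 := fun r hr => by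
      rw [norm_mul]; exact mul_le_one₀ hxi (norm_nonneg _) (cexp_neg_norm_le hr)
    have c1 := norm_sub_le (A n ω) (A' n ω)
    have c2 := norm_sub_le ((ξ ω : ℂ) * Complex.exp (Complex.I *
        (t * ((∑ k ∈ Finset.range n, D k ω) / √n) : ℝ))) ((ξ ω : ℂ) * Complex.exp ((-(t ^ 2 * L ω / 2) : ℝ)))
    have c3 := norm_sub_le ((ξ ω : ℂ) * Complex.exp (Complex.I *
        (t * ((∑ k ∈ Finset.range n, D' k ω) / √n) : ℝ)))
        ((ξ ω : ℂ) * Complex.exp ((-(t ^ 2 * min (L ω) C / 2) : ℝ)))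
    have d1 := b1 (t * ((∑ k ∈ Finset.range n, D k ω) / √n))
    have d2 := b1 (t * ((∑ k ∈ Finset.range n, D' k ω) / √n))
    have d3 := b2 (t ^ 2 * L ω / 2) (by have := hL0 ω; positivity)
    have d4 := b2 (t ^ 2 * min (L ω) C / 2) (by have := hmin0 ω; positivity)
    simp only [A, A'] at c1 ⊢
    linarith
  have hind : Tendsto (fun n => ∫ ω, Sᶜ.indicator (fun ω => ‖A n ω - A' n ω‖) ω ∂μ) atTop (nhds (∫ ω, (0:ℝ) ∂μ)) := by
    refine tendsto_integral_of_dominated_convergence (fun _ => 4)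
      (fun n => (((hAi n).sub (hA'i n)).norm.indicator hS.compl).aestronglyMeasurable) (integrable_const _)
      (fun n => Eventually.of_forall fun ω => ?_) ?_
    · rw [norm_indicator_eq_indicator_norm]
      refine Set.indicator_apply_le' (fun _ => ?_) (fun _ => by norm_num)
      simpa using hbd n ω
    · filter_upwards [hL] with ω hω
      by_cases hs : ω ∈ S
      · simp [hs]
      · have hlt : L ω < C := not_le.1 hs
        have hsc : ω ∈ Sᶜ := hs
        simp only [Set.indicator_of_mem hsc]
        obtain ⟨K, hK⟩ := eventually_atTop.1 (hω.eventually_lt_const hlt)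
        have hDD : ∀ k, K ≤ k → D' k ω = D k ω := fun k hk => by
          simp only [hD']
          rw [hC_one hC0 (hK k hk).le, one_mul]
        -- difference of sums is eventually constant
        have hdiff : ∀ n, K ≤ n → ∑ k ∈ Finset.range n, D k ω =
            ∑ k ∈ Finset.range n, D' k ω + ∑ k ∈ Finset.range K, (D k ω - D' k ω) := by
          intro n hn
          rw [← sub_eq_iff_eq_add', ← Finset.sum_sub_distrib]
          rw [← Finset.sum_range_add_sum_Ico _ hn]
          rw [add_eq_left]
          refine Finset.sum_eq_zero fun k hk => ?_
          rw [hDD k (Finset.mem_Ico.1 hk).1, sub_self]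
        set c := ∑ k ∈ Finset.range K, (D k ω - D' k ω) with hc
        have hlim : Tendsto (fun n : ℕ => |t * (c / √n)|) atTop (nhds 0) := by
          have : Tendsto (fun n : ℕ => c / √n) atTop (nhds 0) :=
            tendsto_const_nhds.div_atTop (Real.tendsto_sqrt_atTop.comp tendsto_natCast_atTop_atTop)
          simpa using (this.const_mul t).abs
        refine squeeze_zero' (Eventually.of_forall fun _ => norm_nonneg _) ?_ hlim
        filter_upwards [eventually_ge_atTop K] with n hn
        simp only [A, A', min_eq_left hlt.le]
        rw [sub_sub_sub_cancel_right, hdiff n hn, ← mul_sub, norm_mul]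
        have e : Complex.exp (Complex.I * (t * ((∑ k ∈ Finset.range n, D' k ω + c) / √n) : ℝ)) -
           Complex.exp (Complex.I * (t * ((∑ k ∈ Finset.range n, D' k ω) / √n) : ℝ)) =
           Complex.exp (Complex.I * (t * ((∑ k ∈ Finset.range n, D' k ω) / √n) : ℝ)) *
            (Complex.exp (Complex.I * (t * (c / √n) : ℝ)) - 1) := by
          rw [mul_sub, mul_one, ← Complex.exp_add]
          congr 2
          push_cast
          ring
        rw [e, norm_mul, Complex.norm_exp_I_mul_ofReal, one_mul, Complex.norm_real]
        refine (mul_le_of_le_one_left (norm_nonneg _) (hξ ω)).trans ?_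
        exact Real.norm_exp_I_mul_ofReal_sub_one_le
  rw [integral_zero] at hind
  rw [Metric.tendsto_atTop'] at hA' hind
  obtain ⟨N1, hN1'⟩ := hA' (δ / 4) (by positivity)
  obtain ⟨N2, hN2'⟩ := hind (δ / 4) (by positivity)
  refine ⟨max N1 N2, fun n hn => ?_⟩
  have a1 := hN1' n ((le_max_left _ _).trans_lt hn)
  have a2 := hN2' n ((le_max_right _ _).trans_lt hn)
  rw [dist_zero_right] at a1 a2 ⊢
  have a2' := (le_abs_self _).trans_lt a2
  have hkey : ‖∫ ω, A n ω ∂μ - ∫ ω, A' n ω ∂μ‖ ≤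
      ∫ ω, Sᶜ.indicator (fun ω => ‖A n ω - A' n ω‖) ω ∂μ + 4 * μ.real S := by
    rw [← integral_sub (hAi n) (hA'i n)]
    have hi1 := ((hAi n).sub (hA'i n)).norm.indicator hS.compl
    have hi2 : Integrable (S.indicator fun _ => (4:ℝ)) μ := (integrable_const (4:ℝ)).indicator hS
    have hle : ∀ᵐ ω ∂μ, ‖A n ω - A' n ω‖ ≤ Sᶜ.indicator (fun ω => ‖A n ω - A' n ω‖) ω + S.indicator (fun _ => (4:ℝ)) ω := by
      refine Eventually.of_forall fun ω => ?_
      by_cases hs : ω ∈ S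
      · simpa [hs] using hbd n ω
      · simp [hs]
    refine (norm_integral_le_of_norm_le (hi1.add hi2) hle).trans (le_of_eq ?_)
    have hadd := integral_add hi1 hi2
    simp only [Pi.add_apply, Pi.sub_apply] at hadd ⊢
    rw [hadd, integral_indicator hS, setIntegral_const, smul_eq_mul, mul_comm 4]
  have hSN : μ.real S < δ / 16 := hN1
  have := norm_sub_norm_le (∫ ω, A n ω ∂μ) (∫ ω, A' n ω ∂μ)
  linarith

end trunc

section weak
variable {Ω : Type*} {mΩ : MeasurableSpace Ω}

lemma mix_integral {F : Type*} [NormedAddCommGroup F] [NormedSpace ℝ F] [CompleteSpace F]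
    [MeasurableSpace F] [BorelSpace F] [SecondCountableTopology F]
    (ν : Measure Ω) [IsProbabilityMeasure ν] (L : Ω → ℝ) (hL : Measurable L) (hL0 : ∀ ω, 0 ≤ L ω)
    (g : ℝ → F) (hg : Continuous g) (K : ℝ) (hK : ∀ x, ‖g x‖ ≤ K) :
    ∫ x, g x ∂((ν.prod (gaussianReal 0 1)).map (fun p : Ω × ℝ => √(L p.1) * p.2)) =
      ∫ ω, ∫ x, g x ∂(gaussianReal 0 (L ω).toNNReal) ∂ν := by
  have hm : Measurable (fun p : Ω × ℝ => √(L p.1) * p.2) := by fun_prop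
  rw [integral_map hm.aemeasurable hg.aestronglyMeasurable, integral_prod]
  · refine integral_congr_ae (Eventually.of_forall fun ω => ?_)
    have h := gaussianReal_map_const_mul (μ := 0) (v := 1) (√(L ω))
    have e : gaussianReal (√(L ω) * 0) (.mk (√(L ω) ^ 2) (sq_nonneg _) * 1) =
        gaussianReal 0 (L ω).toNNReal := by
      congr 1
      · simp
      · ext
        simp [Real.sq_sqrt (hL0 ω), hL0 ω]
    rw [e] at h
    simp only
    rw [← h, integral_map (by fun_prop) hg.aestronglyMeasurable]
  · refine Integrable.of_bound ?_ K (Eventually.of_forall fun p => hK _)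
    exact (hg.measurable.comp hm).aestronglyMeasurable

lemma integral_cond_eq_s18 {F : Type*} [NormedAddCommGroup F] [NormedSpace ℝ F]
    (μ : Measure Ω) [IsProbabilityMeasure μ] (H : Set Ω) (g : Ω → F) :
    ∫ ω, g ω ∂μ[|H] = (μ H)⁻¹.toReal • ∫ ω in H, g ω ∂μ := by
  rw [ProbabilityTheory.cond, integral_smul_measure]

lemma stable_of_char (μ : Measure Ω) [IsProbabilityMeasure μ] (W : ℕ → Ω → ℝ)
    (hW : ∀ n, Measurable (W n)) (L : Ω → ℝ) (hL : Measurable L) (hL0 : ∀ ω, 0 ≤ L ω)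
    (hchar : ∀ (t : ℝ) (ξ : Ω → ℝ), Measurable ξ → (∀ ω, |ξ ω| ≤ 1) →
      Tendsto (fun n : ℕ => ∫ ω, (ξ ω : ℂ) * Complex.exp (Complex.I * (t * W n ω : ℝ)) ∂μ) atTop
      (nhds (∫ ω, (ξ ω : ℂ) * Complex.exp ((-(t ^ 2 * L ω / 2) : ℝ)) ∂μ))) :
    StableGaussLimit μ W L := by
  intro H hH hH0 g
  have : IsProbabilityMeasure μ[|H] := cond_isProbabilityMeasure hH0
  set ν := μ[|H] with hν
  have hm : Measurable (fun p : Ω × ℝ => √(L p.1) * p.2) := by fun_prop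
  let P : ℕ → ProbabilityMeasure ℝ := fun n =>
    ⟨ν.map (W n), Measure.isProbabilityMeasure_map (hW n).aemeasurable⟩
  let P0 : ProbabilityMeasure ℝ :=
    ⟨(ν.prod (gaussianReal 0 1)).map (fun p : Ω × ℝ => √(L p.1) * p.2),
      Measure.isProbabilityMeasure_map hm.aemeasurable⟩
  have hlim : Tendsto P atTop (nhds P0) := by
    refine ProbabilityMeasure.tendsto_of_tendsto_charFun fun t => ?_
    have h1 := hchar t (H.indicator 1) (measurable_one.indicator hH) (fun ω => by
      by_cases h : ω ∈ H <;> simp [h])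
    have hi : ∀ F : Ω → ℂ, ∫ ω, ((H.indicator (1 : Ω → ℝ) ω : ℝ) : ℂ) * F ω ∂μ = ∫ ω in H, F ω ∂μ := by
      intro F
      rw [← integral_indicator hH]
      congr 1
      ext ω
      by_cases h : ω ∈ H <;> simp [h]
    simp only [hi] at h1
    have h2 := h1.const_smul ((μ H)⁻¹.toReal)
    simp only [← integral_cond_eq_s18, ← hν] at h2
    have e0 : charFun (P0 : Measure ℝ) t = ∫ ω, Complex.exp ((-(t ^ 2 * L ω / 2) : ℝ)) ∂ν := by
      rw [charFun_apply_real]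
      simp only [P0, ProbabilityMeasure.coe_mk]
      rw [mix_integral ν L hL hL0 (fun x => Complex.exp (t * x * Complex.I)) (by fun_prop) 1]
      · refine integral_congr_ae (Eventually.of_forall fun ω => ?_)
        simp only
        rw [← charFun_apply_real, charFun_gaussianReal]
        congr 1
        simp [hL0 ω]
        ring
      · intro x
        rw [← Complex.ofReal_mul, Complex.norm_exp_ofReal_mul_I]
    rw [e0]
    refine h2.congr fun n => ?_
    rw [charFun_apply_real]
    simp only [P, ProbabilityMeasure.coe_mk]
    rw [integral_map (hW n).aemeasurable (by fun_prop)]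
    congr 1
    ext ω
    congr 1
    push_cast
    ring
  have h3 := (ProbabilityMeasure.tendsto_iff_forall_integral_tendsto.1 hlim) g
  simp only [P, P0, ProbabilityMeasure.coe_mk] at h3
  rw [mix_integral ν L hL hL0 g g.continuous ‖g‖ g.norm_coe_le_norm] at h3
  refine h3.congr fun n => ?_
  rw [integral_map (hW n).aemeasurable (by fun_prop)]

end weak

section cid
variable {Ω E : Type*} {mΩ : MeasurableSpace Ω} [MeasurableSpace E]
    {μ : Measure Ω} [IsProbabilityMeasure μ] {𝒢 : Filtration ℕ mΩ} {X : ℕ → Ω → E}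

lemma cid_map_s18 (hX : ∀ n, 1 ≤ n → Measurable (X n)) (hcid : IsCID μ 𝒢 X) (k : ℕ) (hk : 1 ≤ k) :
    μ.map (X k) = μ.map (X 1) := by
  ext A hA
  have h := hcid (A.indicator 1) (measurable_one.indicator hA) ⟨1, fun x => by
    by_cases h : x ∈ A <;> simp [h]⟩ 0 k hk
  have h2 : ∫ ω, A.indicator (1 : E → ℝ) (X k ω) ∂μ = ∫ ω, A.indicator (1 : E → ℝ) (X (0 + 1) ω) ∂μ := by
    rw [← integral_condExp (𝒢.le 0), integral_congr_ae h, integral_condExp (𝒢.le 0)]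
  have h3 : ∀ j, 1 ≤ j → ∫ ω, A.indicator (1 : E → ℝ) (X j ω) ∂μ = μ.real (X j ⁻¹' A) := by
    intro j hj
    rw [← integral_indicator_one ((hX j hj) hA)]
    rfl
  rw [h3 k hk, h3 _ le_rfl] at h2
  rw [Measure.map_apply (hX k hk) hA, Measure.map_apply (hX 1 le_rfl) hA]
  exact (measureReal_eq_measureReal_iff).1 h2

lemma condExp_sq_le {m : MeasurableSpace Ω} (b : Ω → ℝ) (hb : MemLp b 2 μ) :
    ∫ ω, (μ[b | m]) ω ^ 2 ∂μ ≤ ∫ ω, b ω ^ 2 ∂μ := by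
  have h := eLpNorm_condExp_le_eLpNorm (μ := μ) (m := m) b (p := 2) one_le_two
  have hc : MemLp (μ[b | m]) 2 μ := hb.condExp one_le_two
  rw [hc.eLpNorm_eq_integral_rpow_norm (by norm_num) (by norm_num),
    hb.eLpNorm_eq_integral_rpow_norm (by norm_num) (by norm_num)] at h
  rw [ENNReal.ofReal_le_ofReal_iff (by positivity)] at h
  rw [Real.rpow_le_rpow_iff (by positivity) (by positivity) (by norm_num)] at h
  simpa using h

lemma cid_ui (hX : ∀ n, 1 ≤ n → Measurable (X n)) (hcid : IsCID μ 𝒢 X)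
    (f : E → ℝ) (hf : Measurable f) (hint2 : Integrable (fun ω => (f (X 1 ω)) ^ 2) μ) :
    ∀ ε > 0, ∃ R, 0 ≤ R ∧ ∀ k, ∃ v : Ω → ℝ, Integrable (fun ω => v ω ^ 2) μ ∧
      ∫ ω, v ω ^ 2 ∂μ ≤ ε ∧ ∀ᵐ ω ∂μ,
        |f (X (k + 1) ω) - (μ[fun ω' => f (X (k + 1) ω') | 𝒢 k]) ω| ≤ R + |v ω| := by
  intro ε hε
  -- tail function
  let b : ℕ → E → ℝ := fun N x => if |f x| ≤ N then 0 else f x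
  have hbm : ∀ N, Measurable (b N) := fun N =>
    Measurable.ite (measurableSet_le (by fun_prop) measurable_const) measurable_const hf
  have hble : ∀ N x, |b N x| ≤ |f x| := by
    intro N x; simp only [b]; split_ifs <;> simp
  have hb2 : ∀ N x, b N x ^ 2 ≤ f x ^ 2 := fun N x => sq_le_sq.2 (hble N x)
  have ht : Tendsto (fun N => ∫ ω, b N (X 1 ω) ^ 2 ∂μ) atTop (nhds (∫ ω, (0:ℝ) ∂μ)) := by
    have hX1 := hX 1 le_rfl
    refine tendsto_integral_of_dominated_convergence (fun ω => f (X 1 ω) ^ 2)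
      (fun N => (((hbm N).comp hX1).pow_const 2).aestronglyMeasurable) hint2
      (fun N => Eventually.of_forall fun ω => ?_) (Eventually.of_forall fun ω => ?_)
    · rw [Real.norm_eq_abs, abs_of_nonneg (sq_nonneg _)]; exact hb2 N _
    · obtain ⟨N, hN⟩ := exists_nat_ge |f (X 1 ω)|
      refine tendsto_const_nhds.congr' ?_
      filter_upwards [eventually_ge_atTop N] with n hn
      have : |f (X 1 ω)| ≤ n := hN.trans (Nat.cast_le.2 hn)
      simp [b, this]
  rw [integral_zero] at ht
  obtain ⟨N, hN⟩ := eventually_atTop.1 (ht.eventually_lt_const (u := ε / 4) (by positivity))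
  have hN := hN N le_rfl
  refine ⟨2 * N, by positivity, fun k => ?_⟩
  have hXk := hX (k + 1) (by omega)
  have hmap := cid_map_s18 hX hcid (k + 1) (by omega)
  have hX1 := hX 1 le_rfl
  have hfi : Integrable (fun ω => f (X (k + 1) ω) ^ 2) μ := by
    have h1 : Integrable (fun x => f x ^ 2) (μ.map (X 1)) :=
      (integrable_map_measure (by fun_prop) hX1.aemeasurable).2 hint2
    rw [← hmap] at h1
    exact (integrable_map_measure (by fun_prop) hXk.aemeasurable).1 h1
  have hbk : ∫ ω, b N (X (k + 1) ω) ^ 2 ∂μ = ∫ ω, b N (X 1 ω) ^ 2 ∂μ := by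
    have hbs := hbm N
    have e1 := integral_map (μ := μ) hXk.aemeasurable (f := fun x => b N x ^ 2) (by fun_prop)
    have e2 := integral_map (μ := μ) hX1.aemeasurable (f := fun x => b N x ^ 2) (by fun_prop)
    rw [← e1, ← e2, hmap]
  set Y : Ω → ℝ := fun ω => f (X (k + 1) ω) with hY
  set bb : Ω → ℝ := fun ω => b N (X (k + 1) ω) with hbb
  have hYm : Measurable Y := hf.comp hXk
  have hbbm : Measurable bb := (hbm N).comp hXk
  have hY2 : MemLp Y 2 μ := (memLp_two_iff_integrable_sq hYm.aestronglyMeasurable).2 hfi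
  have hbb2 : MemLp bb 2 μ := hY2.mono hbbm.aestronglyMeasurable (Eventually.of_forall fun ω => hble N _)
  have hYi : Integrable Y μ := hY2.integrable (by norm_num)
  have hbbi : Integrable bb μ := hbb2.integrable (by norm_num)
  have hc2 : MemLp (μ[bb | 𝒢 k]) 2 μ := hbb2.condExp one_le_two
  have hYb : ∀ ω, |(Y - bb) ω| ≤ (N : ℝ) := by
    intro ω
    simp only [Pi.sub_apply, hY, hbb, b]
    split_ifs with h
    · simpa using h
    · simp
  have hcYb : ∀ᵐ ω ∂μ, |(μ[Y - bb | 𝒢 k]) ω| ≤ (N : ℝ) :=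
    ae_bdd_abs_condExp_of_ae_bdd_abs (Eventually.of_forall hYb)
  have hvi : MemLp (fun ω => |bb ω| + |(μ[bb | 𝒢 k]) ω|) 2 μ := hbb2.abs.add hc2.abs
  refine ⟨fun ω => |bb ω| + |(μ[bb | 𝒢 k]) ω|, hvi.integrable_sq, ?_, ?_⟩
  · have hle : ∫ ω, (|bb ω| + |(μ[bb | 𝒢 k]) ω|) ^ 2 ∂μ ≤ ∫ ω, (2 * bb ω ^ 2 + 2 * (μ[bb | 𝒢 k]) ω ^ 2) ∂μ := by
      refine integral_mono hvi.integrable_sq ((hbb2.integrable_sq.const_mul 2).add (hc2.integrable_sq.const_mul 2)) fun ω => ?_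
      simp only
      rw [← sq_abs (bb ω), ← sq_abs ((μ[bb | 𝒢 k]) ω)]
      nlinarith [sq_nonneg (|bb ω| - |(μ[bb | 𝒢 k]) ω|)]
    refine hle.trans ?_
    rw [integral_add (hbb2.integrable_sq.const_mul 2) (hc2.integrable_sq.const_mul 2), integral_const_mul,
      integral_const_mul]
    have := condExp_sq_le (m := 𝒢 k) bb hbb2
    have e : ∫ ω, bb ω ^ 2 ∂μ < ε / 4 := by rw [hbb]; simp only; rw [hbk]; exact hN
    linarith
  · filter_upwards [hcYb, condExp_sub hYi hbbi (𝒢 k)] with ω h1 h2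
    have h3 := hYb ω
    rw [h2] at h1
    simp only [Pi.sub_apply] at h1 h3
    rw [abs_of_nonneg (a := |bb ω| + |(μ[bb | 𝒢 k]) ω|) (by positivity)]
    have e : Y ω - (μ[Y | 𝒢 k]) ω = (Y ω - bb ω) - ((μ[Y | 𝒢 k]) ω - (μ[bb | 𝒢 k]) ω) + (bb ω - (μ[bb | 𝒢 k]) ω) := by ring
    rw [e]
    have a1 := abs_add_le ((Y ω - bb ω) - ((μ[Y | 𝒢 k]) ω - (μ[bb | 𝒢 k]) ω)) (bb ω - (μ[bb | 𝒢 k]) ω)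
    have a2 := abs_sub (Y ω - bb ω) ((μ[Y | 𝒢 k]) ω - (μ[bb | 𝒢 k]) ω)
    have a3 := abs_sub (bb ω) ((μ[bb | 𝒢 k]) ω)
    linarith

end cid

/-- CLT (case II): if `(X n)` is `𝒢`-c.i.d. and `f (X 1)`, `f (X 1)²` are integrable, then
`B n = n^{-1/2} ∑_{k=1}^n (f (X k) − E[f (X k) | 𝒢 (k-1)])` converges stably with
representing measure `N(0, V_{f²} − (V_f)²)`. -/
theorem stmt18 {Ω E : Type*} {mΩ : MeasurableSpace Ω} [MeasurableSpace E]
    (μ : Measure Ω) [IsProbabilityMeasure μ] (𝒢 : Filtration ℕ mΩ) (X : ℕ → Ω → E)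
    (hadp : ∀ n, 1 ≤ n → Measurable[𝒢 n] (X n))
    (hcid : IsCID μ 𝒢 X)
    (f : E → ℝ) (hf : Measurable f)
    (hint1 : Integrable (fun ω => f (X 1 ω)) μ)
    (hint2 : Integrable (fun ω => (f (X 1 ω)) ^ 2) μ)
    (Vf Vf2 : Ω → ℝ)
    (hVf : ∀ᵐ ω ∂μ, Tendsto (fun n => (μ[(fun ω' => f (X (n + 1) ω')) | 𝒢 n]) ω)
      atTop (nhds (Vf ω)))
    (hVf2 : ∀ᵐ ω ∂μ, Tendsto (fun n => (μ[(fun ω' => (f (X (n + 1) ω')) ^ 2) | 𝒢 n]) ω)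
      atTop (nhds (Vf2 ω))) :
    StableGaussLimit μ
      (fun n ω => (∑ k ∈ Finset.Icc 1 n,
        (f (X k ω) - (μ[(fun ω' => f (X k ω')) | 𝒢 (k - 1)]) ω)) / Real.sqrt n)
      (fun ω => Vf2 ω - (Vf ω) ^ 2) := by
  have hX : ∀ n, 1 ≤ n → Measurable (X n) := fun n hn => (hadp n hn).mono (𝒢.le n) le_rfl
  let D : ℕ → Ω → ℝ := fun k ω => f (X (k + 1) ω) - (μ[(fun ω' => f (X (k + 1) ω')) | 𝒢 k]) ω
  have hsum : ∀ n ω, ∑ k ∈ Finset.Icc 1 n,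
        (f (X k ω) - (μ[(fun ω' => f (X k ω')) | 𝒢 (k - 1)]) ω) = ∑ k ∈ Finset.range n, D k ω := by
    intro n ω
    induction n with
    | zero => simp
    | succ n ih =>
      rw [Finset.sum_Icc_succ_top (by omega), ih, Finset.sum_range_succ]
      rfl
  simp only [hsum]
  have hY2 : ∀ k, MemLp (fun ω => f (X (k + 1) ω)) 2 μ := by
    intro k
    have hXk := hX (k + 1) (by omega)
    have hmap := cid_map_s18 hX hcid (k + 1) (by omega)
    have h1 : Integrable (fun x => f x ^ 2) (μ.map (X 1)) :=
      (integrable_map_measure (by fun_prop) (hX 1 le_rfl).aemeasurable).2 hint2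
    rw [← hmap] at h1
    exact (memLp_two_iff_integrable_sq (hf.comp hXk).aestronglyMeasurable).2
      ((integrable_map_measure (by fun_prop) hXk.aemeasurable).1 h1)
  have memLp : ∀ k, MemLp (D k) 2 μ := fun k => (hY2 k).sub ((hY2 k).condExp one_le_two)
  have meas : ∀ k, StronglyMeasurable[𝒢 (k + 1)] (D k) := fun k =>
    (hf.comp (hadp (k + 1) (by omega))).stronglyMeasurable.sub
      (stronglyMeasurable_condExp.mono (𝒢.mono (Nat.le_succ k)))
  have D0 : ∀ k, μ[D k | 𝒢 k] =ᵐ[μ] 0 := by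
    intro k
    have h1 := condExp_sub (μ := μ) ((hY2 k).integrable (by norm_num))
      (integrable_condExp (m := 𝒢 k) (f := fun ω' => f (X (k + 1) ω'))) (𝒢 k)
    have h2 := condExp_of_stronglyMeasurable (μ := μ) (𝒢.le k)
      (stronglyMeasurable_condExp (m := 𝒢 k) (μ := μ) (f := fun ω' => f (X (k + 1) ω'))) integrable_condExp
    rw [h2, sub_self] at h1
    exact h1
  have hL : ∀ᵐ ω ∂μ, Tendsto (fun k => (μ[fun ω => D k ω ^ 2 | 𝒢 k]) ω) atTop
      (nhds (Vf2 ω - (Vf ω) ^ 2)) := by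
    have hv : ∀ᵐ ω ∂μ, ∀ k, (μ[fun ω => D k ω ^ 2 | 𝒢 k]) ω =
        (μ[(fun ω' => (f (X (k + 1) ω')) ^ 2) | 𝒢 k]) ω - (μ[(fun ω' => f (X (k + 1) ω')) | 𝒢 k]) ω ^ 2 := by
      rw [ae_all_iff]
      intro k
      exact condVar_ae_eq_condExp_sq_sub_sq_condExp (𝒢.le k) (hY2 k)
    filter_upwards [hv, hVf, hVf2] with ω h1 h2 h3
    simp only [h1]
    exact h3.sub (h2.pow 2)
  have hpos : ∀ᵐ ω ∂μ, 0 ≤ Vf2 ω - (Vf ω) ^ 2 := by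
    have : ∀ᵐ ω ∂μ, ∀ k, 0 ≤ (μ[fun ω => D k ω ^ 2 | 𝒢 k]) ω := by
      rw [ae_all_iff]
      intro k
      exact condExp_nonneg (Eventually.of_forall fun ω => sq_nonneg _)
    filter_upwards [hL, this] with ω h1 h2
    exact ge_of_tendsto' h1 h2
  have hLm : AEMeasurable (fun ω => Vf2 ω - (Vf ω) ^ 2) μ := aemeasurable_of_tendsto_metrizable_ae atTop
    (fun k => (stronglyMeasurable_condExp.mono (𝒢.le k)).aestronglyMeasurable.aemeasurable) hL
  let L : Ω → ℝ := fun ω => max (hLm.mk _ ω) 0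
  have hLL : ∀ᵐ ω ∂μ, Vf2 ω - (Vf ω) ^ 2 = L ω := by
    filter_upwards [hLm.ae_eq_mk, hpos] with ω h1 h2
    simp only [L]
    rw [← h1, max_eq_left h2]
  have hLmeas : Measurable L := hLm.measurable_mk.max measurable_const
  have hL' : ∀ᵐ ω ∂μ, Tendsto (fun k => (μ[fun ω => D k ω ^ 2 | 𝒢 k]) ω) atTop (nhds (L ω)) := by
    filter_upwards [hL, hLL] with ω h1 h2
    rwa [← h2]
  have hDm : ∀ k, Measurable (D k) := fun k => ((meas k).mono (𝒢.le _)).measurable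
  have hst : StableGaussLimit μ (fun n ω => (∑ k ∈ Finset.range n, D k ω) / Real.sqrt n) L := by
    refine stable_of_char μ _ (fun n => by fun_prop) L hLmeas (fun ω => le_max_right _ _) ?_
    intro t ξ hξm hξ
    exact trunc_core memLp meas D0 (cid_ui hX hcid f hf hint2) t ξ L hL' hLmeas
      (fun ω => le_max_right _ _) hξm hξ
  intro H hH hH0 g
  have h1 := hst H hH hH0 g
  have h2 : ∫ ω, ∫ x, g x ∂(gaussianReal 0 (L ω).toNNReal) ∂μ[|H] =
      ∫ ω, ∫ x, g x ∂(gaussianReal 0 (Vf2 ω - (Vf ω) ^ 2).toNNReal) ∂μ[|H] := by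
    refine integral_congr_ae ?_
    filter_upwards [cond_absolutelyContinuous.ae_le hLL] with ω hω
    rw [hω]
  rw [h2] at h1
  exact h1
end
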